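/- arXiv:2404.15448 — 2 statements merged into one kernel-verified Lean document; each statement's English description precedes it below -/
import Mathlib

section
/- Let A = {a_n}_{n∈ℤ} ⊂ ℝ∖{0} with a_n = n/D + φ(n) for some D > 0 and bounded φ : ℤ → ℝ, and suppose μ_A = Σ_n δ_{a_n} is a temperate measure whose Fourier transform is a pure point measure μ̂_A = Σ_{γ∈Γ} b_γ δ_γ satisfying |μ̂_A|((0,s)) ≤ C e^{2πKs} for all s > 0 and some constants C, K. Let f(z) = (1 − z/a_0) ∏_{n=1}^∞ (1 − z/a_n)(1 − z/a_{−n}) be the associated canonical product. Then for every z with Im z > K the series below converge and f'(z)/f(z) = 1/(z − a_0) + Σ_{n∈ℕ} [1/(z − a_n) + 1/(z − a_{−n})] = −2πi Σ_{γ∈Γ, γ>0} b_γ e^{2πiγz} − πi b_0, the last series converging absolutely. -/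
open MeasureTheory Metric Filter Topology Complex SchwartzMap Bornology
open scoped ENNReal

noncomputable section

/-- A continuous function `g` is *Bohr almost periodic* if for every `ε > 0` its set of
`ε`-almost periods is relatively dense. -/
def IsBohrAP {V : Type*} [SeminormedAddCommGroup V] (g : V → ℂ) : Prop :=
  Continuous g ∧ ∀ ε : ℝ, 0 < ε → ∃ L : ℝ, 0 < L ∧ ∀ x : V, ∃ τ : V,
    dist τ x < L ∧ ∀ y : V, ‖g (y + τ) - g y‖ < ε

/-- A pure point complex measure on `V`, described by its (countably supported) mass function. -/
structure PPM (V : Type*) where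
  mass : V → ℂ
  countable : (Function.support mass).Countable

namespace PPM

variable {V : Type*}

/-- The total variation of a pure point measure, evaluated on a set. -/
def var (μ : PPM V) (A : Set V) : ℝ≥0∞ := ∑' x : A, (‖μ.mass x‖₊ : ℝ≥0∞)

/-- Pairing of a pure point measure with a test function: `∫ φ dμ = Σ_x μ{x}·φ(x)`. -/
def pair (μ : PPM V) (φ : V → ℂ) : ℂ := ∑' x, μ.mass x * φ x

/-- Convolution `(μ ⋆ ψ)(t) = ∫ ψ(t - x) dμ(x)`. -/
def conv [SubtractionMonoid V] (μ : PPM V) (ψ : V → ℂ) (t : V) : ℂ :=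
  ∑' x, μ.mass x * ψ (t - x)

end PPM

/-- Local finiteness of a pure point measure on `ℝ`. -/
def PPM.locFinite (μ : PPM ℝ) : Prop := ∀ r : ℝ, μ.var (ball 0 r) < ⊤

/-- The measure is a temperate distribution: it pairs (absolutely) with every Schwartz
function. -/
def PPM.temperate (μ : PPM ℝ) : Prop :=
  ∀ φ : SchwartzMap ℝ ℂ, Summable fun x => μ.mass x * φ x

/-- `ν` is the distributional Fourier transform of `μ`: `μ(φ̂) = ν(φ)` on test functions. -/
def IsFT (μ ν : PPM ℝ) : Prop :=
  ∀ φ : SchwartzMap ℝ ℂ, HasCompactSupport φ →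
    μ.pair ⇑(FourierTransform.fourierCLE ℂ (SchwartzMap ℝ ℂ) φ) = ν.pair ⇑φ

/-- The measure is integer-valued: `μ = Σ_n δ_{a_n}` for a multiset `A = {a_n}`, the mass of
each point being its multiplicity. -/
def PPM.natValued (μ : PPM ℝ) : Prop := ∀ x : ℝ, ∃ k : ℕ, μ.mass x = k

/-- The value at `z ∈ ℂ` of (the entire extension of) the Dirichlet series
`Σ_ω q_ω e^{2πi z ω}`. -/
def dserC (q : ℕ → ℂ) (ω : ℕ → ℝ) (z : ℂ) : ℂ :=
  ∑' i : ℕ, q i * Complex.exp (2 * Real.pi * Complex.I * z * (ω i : ℂ))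

/-- `μ` is the counting measure of the zero multiset of the entire function `Q`: the mass of
`μ` at each real point `x` is the multiplicity of `x` as a zero of `Q`. -/
def IsZeroCounting (Q : ℂ → ℂ) (μ : PPM ℝ) : Prop :=
  ∀ x : ℝ, ∃ (k : ℕ) (g : ℂ → ℂ), μ.mass x = k ∧ (∀ z, AnalyticAt ℂ g z) ∧ g x ≠ 0 ∧
    ∀ z : ℂ, Q z = (z - (x : ℂ)) ^ k * g z



namespace S17

def hh (x : ℝ) : ℝ := Real.smoothTransition ((x + 1) / 2)

lemma hh_contDiff {n : ℕ∞} : ContDiff ℝ n hh :=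
  Real.smoothTransition.contDiff.comp (by fun_prop)

lemma hh_nonneg (x : ℝ) : 0 ≤ hh x := Real.smoothTransition.nonneg _
lemma hh_le_one (x : ℝ) : hh x ≤ 1 := Real.smoothTransition.le_one _
lemma hh_zero {x : ℝ} (h : x ≤ -1) : hh x = 0 :=
  Real.smoothTransition.zero_of_nonpos (by linarith)
lemma hh_one {x : ℝ} (h : 1 ≤ x) : hh x = 1 :=
  Real.smoothTransition.one_of_one_le (by linarith)
lemma hh_neg (x : ℝ) : hh (-x) = 1 - hh x := by
  unfold hh Real.smoothTransition
  have e1 : 1 - (-x + 1) / 2 = (x + 1) / 2 := by ring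
  have e2 : 1 - (x + 1) / 2 = (-x + 1) / 2 := by ring
  have h := Real.smoothTransition.pos_denom ((x + 1) / 2)
  rw [e2] at h
  rw [e1, e2]
  have h' := h
  rw [add_comm] at h'
  rw [eq_sub_iff_add_eq, add_comm (expNegInvGlue ((-x + 1) / 2)), ← add_div, div_eq_one_iff_eq h.ne']
  ring
lemma hh_half : hh 0 = 1 / 2 := by
  have := hh_neg 0
  rw [neg_zero] at this
  linarith

def rho : ℝ → ℝ := deriv hh

lemma hh_hasDerivAt (x : ℝ) : HasDerivAt hh (rho x) x :=
  (((hh_contDiff (n := 1)).differentiable (by simp)) x).hasDerivAt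

lemma rho_contDiff : ContDiff ℝ 1 rho := by
  have h := hh_contDiff (n := 2)
  have : ContDiff ℝ (1 + 1) hh := by
    convert h using 1
    norm_num
  exact ((contDiff_succ_iff_deriv (n := 1)).1 this).2.2

lemma rho_continuous : Continuous rho := rho_contDiff.continuous

lemma rho_neg (x : ℝ) : rho (-x) = rho x := by
  have h1 : HasDerivAt (fun x => hh (-x)) (rho (-x) * (-1)) x :=
    (hh_hasDerivAt (-x)).comp x (hasDerivAt_neg x)
  have h2 : HasDerivAt (fun x => 1 - hh x) (-(rho x)) x := (hh_hasDerivAt x).const_sub 1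
  have h3 : (fun x => hh (-x)) = fun x => 1 - hh x := funext hh_neg
  rw [h3] at h1
  have := h1.unique h2
  linarith

lemma rho_zero_left {x : ℝ} (h : x ≤ -1) : rho x = 0 := by
  apply IsLocalMin.deriv_eq_zero
  refine Filter.Eventually.of_forall fun y => ?_
  rw [hh_zero h]; exact hh_nonneg y

lemma rho_zero_right {x : ℝ} (h : 1 ≤ x) : rho x = 0 := by
  apply IsLocalMax.deriv_eq_zero
  refine Filter.Eventually.of_forall fun y => ?_
  rw [hh_one h]; exact hh_le_one y

lemma rho_integral : ∫ x in (-1:ℝ)..1, rho x = 1 := by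
  rw [intervalIntegral.integral_eq_sub_of_hasDerivAt (fun x _ => hh_hasDerivAt x)
    (rho_continuous.intervalIntegrable _ _), hh_one le_rfl, hh_zero le_rfl]
  norm_num

/-- The exponential kernel. -/
def ek (s : ℂ) (x : ℝ) : ℂ := Complex.exp (2 * Real.pi * Complex.I * s * x)

lemma ek_norm (s : ℂ) (x : ℝ) : ‖ek s x‖ = Real.exp (-(2 * Real.pi * s.im * x)) := by
  unfold ek
  rw [Complex.norm_exp]
  congr 1
  simp

lemma ek_hasDerivAt (s : ℂ) (x : ℝ) :
    HasDerivAt (ek s) (2 * Real.pi * Complex.I * s * ek s x) x := by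
  unfold ek
  have h : HasDerivAt (fun x : ℝ => (2 * Real.pi * Complex.I * s * x : ℂ))
      (2 * Real.pi * Complex.I * s) x := by
    simpa using (Complex.ofRealCLM.hasDerivAt (x := x)).const_mul (2 * Real.pi * Complex.I * s)
  have := h.cexp
  rwa [mul_comm (Complex.exp _)] at this

lemma ek_contDiff (s : ℂ) {n : ℕ∞} : ContDiff ℝ n (ek s) := by
  unfold ek
  have : ContDiff ℝ n (fun x : ℝ => (x : ℂ)) := Complex.ofRealCLM.contDiff
  fun_prop

lemma ek_continuous (s : ℂ) : Continuous (ek s) := (ek_contDiff s (n := 0)).continuous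

lemma ek_zero_left (x : ℝ) : ek 0 x = 1 := by simp [ek]
lemma ek_zero_right (s : ℂ) : ek s 0 = 1 := by simp [ek]
lemma ek_add (s : ℂ) (x y : ℝ) : ek s (x + y) = ek s x * ek s y := by
  unfold ek; rw [← Complex.exp_add]; congr 1; push_cast; ring
lemma ek_add_left (s t : ℂ) (x : ℝ) : ek (s + t) x = ek s x * ek t x := by
  unfold ek; rw [← Complex.exp_add]; congr 1; ring

lemma ek_lip {Y : ℝ} (hY : 0 ≤ Y) {s t : ℂ} (hs : |s.im| ≤ Y) (ht : |t.im| ≤ Y) {x : ℝ}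
    (hx : |x| ≤ 1) :
    ‖ek s x - ek t x‖ ≤ 2 * Real.pi * Real.exp (2 * Real.pi * Y) * ‖s - t‖ := by
  have hconv : Convex ℝ {w : ℂ | w.re ≤ 2 * Real.pi * Y} := convex_halfSpace_re_le _
  have key : ∀ r : ℂ, |r.im| ≤ Y → (2 * Real.pi * Complex.I * r * x : ℂ) ∈
      {w : ℂ | w.re ≤ 2 * Real.pi * Y} := by
    intro r hr
    have h1 : (2 * Real.pi * Complex.I * r * x : ℂ).re = 2 * Real.pi * (-(r.im * x)) := by
      simp; ring
    rw [Set.mem_ofPred_eq, h1]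
    have h2 : -(r.im * x) ≤ Y := by
      calc -(r.im * x) ≤ |r.im * x| := neg_le_abs _
        _ = |r.im| * |x| := abs_mul _ _
        _ ≤ Y * 1 := mul_le_mul hr hx (abs_nonneg _) hY
        _ = Y := mul_one _
    have := Real.pi_pos
    gcongr
  have h := hconv.norm_image_sub_le_of_norm_hasDerivWithin_le (𝕜 := ℂ) (f := Complex.exp)
    (f' := Complex.exp) (C := Real.exp (2 * Real.pi * Y))
    (fun w _ => (Complex.hasDerivAt_exp w).hasDerivWithinAt)
    (fun w hw => by rw [Complex.norm_exp]; exact Real.exp_le_exp.2 hw) (key t ht) (key s hs)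
  refine h.trans ?_
  have e : (2 * Real.pi * Complex.I * s * x - 2 * Real.pi * Complex.I * t * x : ℂ)
    = 2 * Real.pi * Complex.I * (s - t) * x := by ring
  rw [e]
  have e2 : ‖(2 * Real.pi * Complex.I * (s - t) * x : ℂ)‖ = 2 * Real.pi * ‖s - t‖ * |x| := by
    simp [abs_of_pos Real.pi_pos]
  rw [e2]
  have : 2 * Real.pi * ‖s - t‖ * |x| ≤ 2 * Real.pi * ‖s - t‖ * 1 := by
    have := Real.pi_pos
    gcongr
  calc _ ≤ Real.exp (2 * Real.pi * Y) * (2 * Real.pi * ‖s - t‖ * 1) := by gcongr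
    _ = _ := by ring

/-- Local Fourier-Laplace transform. -/
def LT (g : ℝ → ℝ) (s : ℂ) : ℂ := ∫ x in (-1:ℝ)..1, (g x : ℂ) * ek s x

lemma LT_bound {g : ℝ → ℝ} (hg : Continuous g) {Y : ℝ} (hY : 0 ≤ Y) :
    ∃ C : ℝ, 0 ≤ C ∧ (∀ s : ℂ, |s.im| ≤ Y → ‖LT g s‖ ≤ C) ∧
      ∀ s t : ℂ, |s.im| ≤ Y → |t.im| ≤ Y → ‖LT g s - LT g t‖ ≤ C * ‖s - t‖ := by
  obtain ⟨B, hB⟩ := (isCompact_Icc (a := (-1:ℝ)) (b := 1)).exists_bound_of_continuousOn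
    hg.continuousOn
  have hB0 : 0 ≤ B := (norm_nonneg _).trans (hB 0 (by simp))
  have hpi := Real.pi_pos
  have hmem : ∀ x ∈ Set.uIoc (-1:ℝ) 1, ‖g x‖ ≤ B ∧ |x| ≤ 1 := by
    intro x hx
    rw [Set.uIoc_of_le (by norm_num)] at hx
    exact ⟨hB x ⟨hx.1.le, hx.2⟩, abs_le.2 ⟨hx.1.le, hx.2⟩⟩
  have hint : ∀ s, IntervalIntegrable (fun x => (g x : ℂ) * ek s x) volume (-1) 1 := fun s =>
    ((Complex.continuous_ofReal.comp hg).mul (ek_continuous s)).intervalIntegrable _ _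
  have hE := Real.exp_pos (2 * Real.pi * Y)
  refine ⟨2 * B * Real.exp (2 * Real.pi * Y) + 2 * B * (2 * Real.pi * Real.exp (2 * Real.pi * Y)),
    by positivity, ?_, ?_⟩
  · intro s hs
    have := intervalIntegral.norm_integral_le_of_norm_le_const (a := (-1:ℝ)) (b := 1)
      (f := fun x => (g x : ℂ) * ek s x) (C := B * Real.exp (2 * Real.pi * Y)) ?_
    · refine this.trans ?_
      have h2 : |(1:ℝ) - -1| = 2 := by norm_num
      rw [h2]
      have : 0 ≤ 2 * B * (2 * Real.pi * Real.exp (2 * Real.pi * Y)) := by positivity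
      linarith
    · intro x hx
      obtain ⟨h1, h2⟩ := hmem x hx
      rw [norm_mul, Complex.norm_real, ek_norm]
      refine mul_le_mul h1 (Real.exp_le_exp.2 ?_) (Real.exp_pos _).le hB0
      have h2 : -(s.im * x) ≤ Y := by
        calc -(s.im * x) ≤ |s.im * x| := neg_le_abs _
          _ = |s.im| * |x| := abs_mul _ _
          _ ≤ Y * 1 := mul_le_mul hs h2 (abs_nonneg _) hY
          _ = Y := mul_one _
      calc _ = 2 * Real.pi * (-(s.im * x)) := by ring
        _ ≤ _ := by gcongr
  · intro s t hs ht
    unfold LT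
    rw [← intervalIntegral.integral_sub (hint s) (hint t)]
    have := intervalIntegral.norm_integral_le_of_norm_le_const (a := (-1:ℝ)) (b := 1)
      (f := fun x => (g x : ℂ) * ek s x - (g x : ℂ) * ek t x)
      (C := B * (2 * Real.pi * Real.exp (2 * Real.pi * Y) * ‖s - t‖)) ?_
    · refine this.trans ?_
      have h2 : |(1:ℝ) - -1| = 2 := by norm_num
      rw [h2]
      have : 0 ≤ 2 * B * Real.exp (2 * Real.pi * Y) * ‖s - t‖ := by positivity
      nlinarith
    · intro x hx
      obtain ⟨h1, h2⟩ := hmem x hx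
      rw [← mul_sub, norm_mul, Complex.norm_real]
      exact mul_le_mul h1 (ek_lip hY hs ht h2) (norm_nonneg _) hB0

lemma LT_rho_zero : LT rho 0 = 1 := by
  unfold LT
  simp only [ek_zero_left, mul_one]
  rw [intervalIntegral.integral_ofReal, rho_integral]
  simp

lemma LT_rho_neg (s : ℂ) : LT rho (-s) = LT rho s := by
  unfold LT
  have := intervalIntegral.integral_comp_neg (a := (-1:ℝ)) (b := 1)
    (fun x => (rho x : ℂ) * ek s x)
  rw [neg_neg] at this
  rw [← this]
  congr 1
  ext x
  rw [rho_neg]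
  congr 1
  unfold ek
  congr 1
  push_cast
  ring

lemma LT_parts (s : ℂ) : 2 * Real.pi * Complex.I * s * LT rho s = - LT (deriv rho) s := by
  have hd : ∀ x, HasDerivAt rho (deriv rho x) x := fun x =>
    ((rho_contDiff.differentiable (by simp)) x).hasDerivAt
  have hc : Continuous (deriv rho) := rho_contDiff.continuous_deriv le_rfl
  have := intervalIntegral.integral_mul_deriv_eq_deriv_mul (a := (-1:ℝ)) (b := 1)
    (u := fun x => (rho x : ℂ)) (u' := fun x => ((deriv rho x : ℝ) : ℂ)) (v := ek s)
    (v' := fun x => 2 * Real.pi * Complex.I * s * ek s x)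
    (fun x _ => (hd x).ofReal_comp) (fun x _ => ek_hasDerivAt s x)
    ((Complex.continuous_ofReal.comp hc).intervalIntegrable _ _)
    ((continuous_const.mul (ek_continuous s)).intervalIntegrable _ _)
  rw [rho_zero_right le_rfl, rho_zero_left le_rfl] at this
  unfold LT
  rw [← intervalIntegral.integral_const_mul]
  simp only [Complex.ofReal_zero, zero_mul, sub_zero, zero_sub] at this
  rw [← this]
  congr 1
  ext x
  ring

lemma LT_rho_bounds {Y : ℝ} (hY : 0 ≤ Y) :
    ∃ C : ℝ, 0 ≤ C ∧ (∀ s : ℂ, |s.im| ≤ Y → ‖LT rho s‖ ≤ C ∧ ‖s‖ * ‖LT rho s‖ ≤ C) ∧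
      (∀ s t : ℂ, |s.im| ≤ Y → |t.im| ≤ Y → ‖s‖ * ‖LT rho s - LT rho t‖ ≤ C * ‖s - t‖ ∧
        ‖LT rho s - LT rho t‖ ≤ C * ‖s - t‖) := by
  obtain ⟨C1, h10, h11, h12⟩ := LT_bound rho_continuous hY
  obtain ⟨C2, h20, h21, h22⟩ := LT_bound (rho_contDiff.continuous_deriv le_rfl) hY
  have hpi := Real.pi_gt_three
  have hs : ∀ s, s * LT rho s = (-1 / (2 * Real.pi * Complex.I)) * LT (deriv rho) s := by
    intro s
    have h := LT_parts s
    have : (2 * Real.pi * Complex.I : ℂ) ≠ 0 := by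
      simp [Real.pi_ne_zero]
    field_simp
    rw [← neg_eq_iff_eq_neg] at h
    rw [← h]; ring
  have hn : ‖(-1 / (2 * Real.pi * Complex.I) : ℂ)‖ ≤ 1 := by
    simp only [norm_div, norm_neg, norm_one, norm_mul, Complex.norm_I, Complex.norm_real]
    rw [div_le_one (by simp [Real.pi_ne_zero])]
    simp [abs_of_pos Real.pi_pos]
    linarith
  refine ⟨C1 + C2, by positivity, ?_, ?_⟩
  · intro s h
    refine ⟨(h11 s h).trans (by linarith), ?_⟩
    rw [← norm_mul, hs, norm_mul]
    have := h21 s h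
    nlinarith [norm_nonneg (LT (deriv rho) s)]
  · intro s t h h'
    constructor
    · have e : s * (LT rho s - LT rho t) = (-1 / (2 * Real.pi * Complex.I)) *
          (LT (deriv rho) s - LT (deriv rho) t) - (s - t) * LT rho t := by
        rw [mul_sub, mul_sub, hs, ← hs t]; ring
      rw [← norm_mul, e]
      refine (norm_sub_le _ _).trans ?_
      rw [norm_mul, norm_mul]
      have a1 := h22 s t h h'
      have a2 := h11 t h'
      have a3 : ‖(-1 / (2 * Real.pi * Complex.I) : ℂ)‖ * ‖LT (deriv rho) s - LT (deriv rho) t‖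
        ≤ 1 * (C2 * ‖s - t‖) := mul_le_mul hn a1 (norm_nonneg _) zero_le_one
      have a4 : ‖s - t‖ * ‖LT rho t‖ ≤ ‖s - t‖ * C1 := by gcongr
      linarith
    · refine (h12 s t h h').trans ?_
      have := norm_nonneg (s - t)
      nlinarith

/-- The cutoff. -/
def ww (T : ℝ) (x : ℝ) : ℝ := hh (T * x) - hh (T * (x - T))

/-- The test function. -/
def psi (T : ℝ) (z : ℂ) (x : ℝ) : ℂ := (ww T x : ℂ) * ek z x

lemma ww_left {T : ℝ} (hT : 1 ≤ T) {x : ℝ} (hx : x ≤ -1) : ww T x = 0 := by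
  unfold ww
  rw [hh_zero, hh_zero, sub_zero] <;> nlinarith

lemma ww_right {T : ℝ} (hT : 1 ≤ T) {x : ℝ} (hx : T + 1 ≤ x) : ww T x = 0 := by
  unfold ww
  rw [hh_one, hh_one, sub_self] <;> nlinarith

lemma ww_abs (T x : ℝ) : |ww T x| ≤ 1 := by
  unfold ww
  have := hh_nonneg (T * x)
  have := hh_nonneg (T * (x - T))
  have := hh_le_one (T * x)
  have := hh_le_one (T * (x - T))
  rw [abs_le]; constructor <;> linarith

lemma ww_contDiff (T : ℝ) {n : ℕ∞} : ContDiff ℝ n (ww T) := by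
  unfold ww
  exact (hh_contDiff.comp (by fun_prop)).sub (hh_contDiff.comp (by fun_prop))

lemma ww_support {T : ℝ} (hT : 1 ≤ T) {x : ℝ} (hx : x ∉ Set.Icc (-1) (T + 1)) : ww T x = 0 := by
  rw [Set.mem_Icc, not_and_or, not_le, not_le] at hx
  rcases hx with h | h
  · exact ww_left hT h.le
  · exact ww_right hT h.le

lemma psi_contDiff (T : ℝ) (z : ℂ) {n : ℕ∞} : ContDiff ℝ n (psi T z) :=
  (Complex.ofRealCLM.contDiff.comp (ww_contDiff T)).mul (ek_contDiff z)

lemma psi_compact {T : ℝ} (hT : 1 ≤ T) (z : ℂ) : HasCompactSupport (psi T z) :=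
  HasCompactSupport.intro (isCompact_Icc (a := (-1:ℝ)) (b := T + 1)) fun x hx => by
    simp [psi, ww_support hT hx]

lemma rho_compact : HasCompactSupport rho :=
  HasCompactSupport.intro (isCompact_Icc (a := (-1:ℝ)) (b := 1)) fun x hx => by
    rw [Set.mem_Icc, not_and_or, not_le, not_le] at hx
    rcases hx with h | h
    · exact rho_zero_left h.le
    · exact rho_zero_right h.le

lemma LT_rho_eq (s : ℂ) : LT rho s = ∫ x : ℝ, (rho x : ℂ) * ek s x := by
  unfold LT
  rw [intervalIntegral.integral_of_le (by norm_num)]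
  apply setIntegral_eq_integral_of_forall_compl_eq_zero
  intro x hx
  rw [Set.mem_Ioc, not_and_or, not_lt, not_le] at hx
  rcases hx with h | h
  · simp [rho_zero_left h]
  · simp [rho_zero_right h.le]

lemma rho_scaled {T : ℝ} (hT : 0 < T) (u : ℂ) :
    ∫ x : ℝ, (T : ℂ) * (rho (T * x) : ℂ) * ek u x = LT rho (u / T) := by
  have hT' : (T : ℂ) ≠ 0 := by exact_mod_cast hT.ne'
  have h := Measure.integral_comp_mul_left (fun x : ℝ => (rho x : ℂ) * ek (u / T) x) T
  have e : ∀ x : ℝ, ek (u / T) (T * x) = ek u x := by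
    intro x; unfold ek; congr 1; push_cast; field_simp
  simp only [e] at h
  simp only [mul_assoc]
  rw [integral_const_mul, h, LT_rho_eq, abs_of_pos (inv_pos.2 hT), Complex.real_smul]
  push_cast
  field_simp

lemma rho_shifted {T : ℝ} (hT : 0 < T) (u : ℂ) :
    ∫ x : ℝ, (T : ℂ) * (rho (T * (x - T)) : ℂ) * ek u x = ek u T * LT rho (u / T) := by
  rw [← rho_scaled hT, ← integral_const_mul,
    ← integral_sub_right_eq_self (fun x : ℝ => ek u T * ((T : ℂ) * (rho (T * x) : ℂ) * ek u x)) T]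
  congr 1
  ext x
  have : ek u x = ek u (x - T) * ek u T := by rw [← ek_add]; congr 1; ring
  rw [this]; ring

lemma ww_hasDerivAt (T x : ℝ) :
    HasDerivAt (ww T) (T * rho (T * x) - T * rho (T * (x - T))) x := by
  unfold ww
  have h1 : HasDerivAt (fun x => hh (T * x)) (rho (T * x) * (T * 1)) x :=
    (hh_hasDerivAt _).comp x ((hasDerivAt_id x).const_mul T)
  have h2 : HasDerivAt (fun x => hh (T * (x - T))) (rho (T * (x - T)) * (T * 1)) x :=
    (hh_hasDerivAt _).comp x (((hasDerivAt_id x).sub_const T).const_mul T)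
  exact (h1.sub h2).congr_deriv (by ring)

lemma psi_fourier {T : ℝ} (hT : 1 ≤ T) (z : ℂ) (a : ℝ) (hu : z - a ≠ 0) :
    (FourierTransform.fourier (psi T z)) a =
      (-1 / (2 * Real.pi * Complex.I)) * (LT rho ((z - a) / T) * (1 - ek (z - a) T) / (z - a)) := by
  have hT0 : 0 < T := by linarith
  set u := z - (a : ℂ) with hudef
  have h1 : (FourierTransform.fourier (psi T z)) a = ∫ x : ℝ, (ww T x : ℂ) * ek u x := by
    rw [Real.fourier_real_eq_integral_exp_smul]
    congr 1
    ext x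
    unfold psi
    rw [smul_eq_mul, mul_left_comm]
    congr 1
    unfold ek
    rw [← Complex.exp_add, hudef]
    congr 1
    push_cast
    ring
  have hwc : Continuous (ww T) := (ww_contDiff T (n := 0)).continuous
  have hwcs : HasCompactSupport (ww T) :=
    HasCompactSupport.intro (isCompact_Icc (a := (-1:ℝ)) (b := T + 1)) fun x hx => ww_support hT hx
  have hwcs' : HasCompactSupport (fun x => (ww T x : ℂ)) := hwcs.comp_left (g := fun x : ℝ => (x:ℂ)) (by simp)
  have hwc' : Continuous (fun x => (ww T x : ℂ)) := Complex.continuous_ofReal.comp hwc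
  have hd : ∀ x, HasDerivAt (fun x => (ww T x : ℂ))
      ((T : ℂ) * rho (T * x) - (T : ℂ) * rho (T * (x - T))) x := by
    intro x
    have := (ww_hasDerivAt T x).ofReal_comp
    push_cast at this
    exact this
  have hrc := rho_continuous
  have hi1 : Integrable (fun x : ℝ => (T : ℂ) * (rho (T * x) : ℂ) * ek u x) := by
    apply Continuous.integrable_of_hasCompactSupport
    · have := ek_continuous u
      fun_prop
    · have : HasCompactSupport (fun x : ℝ => rho (T * x)) := by
        simpa [smul_eq_mul] using rho_compact.comp_smul hT0.ne'
      have h2 : HasCompactSupport (fun x : ℝ => (rho (T * x) : ℂ)) :=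
        this.comp_left (g := fun x : ℝ => (x:ℂ)) (by simp)
      exact (h2.mul_left).mul_right
  have hi2 : Integrable (fun x : ℝ => (T : ℂ) * (rho (T * (x - T)) : ℂ) * ek u x) := by
    have := (hi1.comp_sub_right T).const_mul (ek u T)
    refine this.congr (Filter.Eventually.of_forall fun x => ?_)
    have : ek u x = ek u (x - T) * ek u T := by rw [← ek_add]; congr 1; ring
    simp only
    rw [this]; ring
  have hpi : (2 * Real.pi * Complex.I : ℂ) ≠ 0 := by simp [Real.pi_ne_zero]
  have hwi : Integrable (fun x => (ww T x : ℂ) * ek u x) :=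
    (hwc'.mul (ek_continuous u)).integrable_of_hasCompactSupport hwcs'.mul_right
  have h2 := integral_mul_deriv_eq_deriv_mul_of_integrable
    (u := fun x => (ww T x : ℂ)) (u' := fun x => (T : ℂ) * rho (T * x) - (T : ℂ) * rho (T * (x - T)))
    (v := ek u) (v' := fun x => 2 * Real.pi * Complex.I * u * ek u x)
    (fun x _ => hd x) (fun x _ => ek_hasDerivAt u x)
    ((hwi.const_mul (2 * Real.pi * Complex.I * u)).congr
      (Filter.Eventually.of_forall fun x => by simp only [Pi.mul_apply]; ring))
    ((hi1.sub hi2).congr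
      (Filter.Eventually.of_forall fun x => by simp only [Pi.mul_apply, Pi.sub_apply]; ring)) hwi
  have h3 : ∫ x : ℝ, (ww T x : ℂ) * (2 * Real.pi * Complex.I * u * ek u x)
      = 2 * Real.pi * Complex.I * u * ∫ x : ℝ, (ww T x : ℂ) * ek u x := by
    rw [← integral_const_mul]; congr 1; ext x; ring
  have h4 : ∫ x : ℝ, ((T : ℂ) * rho (T * x) - (T : ℂ) * rho (T * (x - T))) * ek u x
      = LT rho (u / T) - ek u T * LT rho (u / T) := by
    rw [← rho_shifted hT0, ← rho_scaled hT0, ← integral_sub hi1 hi2]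
    congr 1; ext x; ring
  rw [h3, h4, ← h1] at h2
  field_simp
  linear_combination h2

lemma kk_norm : ‖(-1 / (2 * Real.pi * Complex.I) : ℂ)‖ ≤ 1 := by
  have hpi := Real.pi_gt_three
  simp only [norm_div, norm_neg, norm_one, norm_mul, Complex.norm_I, Complex.norm_real]
  rw [div_le_one (by simp [Real.pi_ne_zero])]
  simp [abs_of_pos Real.pi_pos]
  linarith

lemma texp {y T : ℝ} (hy : 0 < y) (hT : 0 < T) :
    T * Real.exp (-(2 * Real.pi * y * T)) ≤ 1 / y := by
  have hpi := Real.pi_gt_three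
  rw [Real.exp_neg, ← div_eq_mul_inv, div_le_div_iff₀ (Real.exp_pos _) hy]
  have := Real.add_one_le_exp (2 * Real.pi * y * T)
  have : 0 < y * T := by positivity
  nlinarith

lemma pair_bound (z : ℂ) (hy : 0 < z.im) (L : ℝ) (hL : 0 ≤ L) :
    ∃ C : ℝ, 0 ≤ C ∧ ∀ T : ℝ, 1 ≤ T → ∀ a a' : ℝ, ‖2 * z - a - a'‖ ≤ L →
      ‖(FourierTransform.fourier (psi T z)) a + (FourierTransform.fourier (psi T z)) a'‖
        ≤ C / (‖z - a‖ * ‖z - a'‖) := by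
  obtain ⟨C, hC0, hC1, hC2⟩ := LT_rho_bounds hy.le
  refine ⟨C * (4 * L + 2 / z.im), by positivity, ?_⟩
  intro T hT a a' hL'
  have hT0 : 0 < T := by linarith
  have hne : ∀ b : ℝ, z - b ≠ 0 := by
    intro b h
    have := congrArg Complex.im h
    simp at this
    linarith
  rw [psi_fourier hT z a (hne a), psi_fourier hT z a' (hne a')]
  have hu := hne a
  have hu' := hne a'
  have him : ∀ b : ℝ, (z - b).im = z.im := by intro b; simp
  have hsum : ‖(z - a) + (z - a')‖ ≤ L := by convert hL' using 2; ring
  have i1 := him a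
  have i2 := him a'
  generalize z - (a : ℂ) = u at *
  generalize z - (a' : ℂ) = v at *
  set y := z.im
  have hdivT : ∀ w : ℂ, ‖w‖ = T * ‖w / (T : ℂ)‖ := by
    intro w; rw [norm_div, Complex.norm_real, Real.norm_of_nonneg hT0.le]; field_simp
  have himT : ∀ w : ℂ, w.im = y → |(w / (T : ℂ)).im| ≤ y := by
    intro w hw
    rw [Complex.div_ofReal_im, hw, abs_of_pos (by positivity)]
    exact div_le_self hy.le hT
  have hek : ∀ w : ℂ, w.im = y → ‖ek w T‖ = Real.exp (-(2 * Real.pi * y * T)) := by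
    intro w hw; rw [ek_norm, hw]
  have hek1 : Real.exp (-(2 * Real.pi * y * T)) ≤ 1 := by
    rw [Real.exp_le_one_iff]
    have := Real.pi_pos
    have : 0 < 2 * Real.pi * y * T := by positivity
    linarith
  have hte := texp hy hT0
  set E := Real.exp (-(2 * Real.pi * y * T)) with hE
  have hE0 : 0 < E := Real.exp_pos _
  set qu := LT rho (u / T) with hqu
  set qv := LT rho (v / T) with hqv
  have bqu : ‖qu‖ ≤ C := (hC1 _ (himT u i1)).1
  have bqu' : ‖u‖ * ‖qu‖ ≤ T * C := by
    rw [hdivT u, mul_assoc]; have := (hC1 _ (himT u i1)).2; gcongr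
  have bqv : ‖qv‖ ≤ C := (hC1 _ (himT v i2)).1
  have bqv' : ‖v‖ * ‖qv‖ ≤ T * C := by
    rw [hdivT v, mul_assoc]; have := (hC1 _ (himT v i2)).2; gcongr
  have bd : ‖u‖ * ‖qu - qv‖ ≤ C * L := by
    have e : qv = LT rho (-(v / T)) := by rw [LT_rho_neg]
    have h := (hC2 (u / T) (-(v / T)) (himT u i1) (by rw [Complex.neg_im, abs_neg]; exact himT v i2)).1
    rw [← e] at h
    have e2 : u / (T : ℂ) - -(v / T) = (u + v) / T := by ring
    rw [e2] at h
    calc ‖u‖ * ‖qu - qv‖ = T * (‖u / (T:ℂ)‖ * ‖qu - qv‖) := by rw [hdivT u]; ring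
      _ ≤ T * (C * ‖(u + v) / (T:ℂ)‖) := by gcongr
      _ = C * ‖u + v‖ := by rw [hdivT (u + v)]; ring
      _ ≤ C * L := by gcongr
  have e : (-1 / (2 * Real.pi * Complex.I)) * (qu * (1 - ek u T) / u) +
      (-1 / (2 * Real.pi * Complex.I)) * (qv * (1 - ek v T) / v) =
      (-1 / (2 * Real.pi * Complex.I)) * ((qu * (1 - ek u T) * (u + v) +
        (-(u * (qu - qv)) + u * qu * ek u T - (u + v) * qv * ek v T + v * qv * ek v T)) / (u * v)) := by
    rw [← mul_add]
    congr 1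
    field_simp
    ring
  rw [e, norm_mul, norm_div (_ + _), norm_mul u v]
  have hnn : ‖qu * (1 - ek u T) * (u + v) +
        (-(u * (qu - qv)) + u * qu * ek u T - (u + v) * qv * ek v T + v * qv * ek v T)‖
        ≤ C * (4 * L + 2 / y) := by
    have n1 : ‖qu * (1 - ek u T) * (u + v)‖ ≤ C * 2 * L := by
      rw [norm_mul, norm_mul]
      have : ‖1 - ek u T‖ ≤ 2 := by
        refine (norm_sub_le _ _).trans ?_
        rw [hek u i1, norm_one]; linarith
      gcongr
    have n2 : ‖-(u * (qu - qv))‖ ≤ C * L := by rw [norm_neg, norm_mul]; exact bd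
    have n3 : ‖u * qu * ek u T‖ ≤ C * (1 / y) := by
      rw [norm_mul, norm_mul, hek u i1]
      calc _ ≤ T * C * E := by gcongr
        _ = C * (T * E) := by ring
        _ ≤ _ := by gcongr
    have n4 : ‖(u + v) * qv * ek v T‖ ≤ C * L := by
      rw [norm_mul, norm_mul, hek v i2]
      calc _ ≤ L * C * 1 := by gcongr
        _ = _ := by ring
    have n5 : ‖v * qv * ek v T‖ ≤ C * (1 / y) := by
      rw [norm_mul, norm_mul, hek v i2]
      calc _ ≤ T * C * E := by gcongr
        _ = C * (T * E) := by ring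
        _ ≤ _ := by gcongr
    refine (norm_add_le _ _).trans ?_
    have m1 := norm_add_le (-(u * (qu - qv)) + u * qu * ek u T - (u + v) * qv * ek v T) (v * qv * ek v T)
    have m2 := norm_sub_le (-(u * (qu - qv)) + u * qu * ek u T) ((u + v) * qv * ek v T)
    have m3 := norm_add_le (-(u * (qu - qv))) (u * qu * ek u T)
    have : C * (4 * L + 2 / y) = C * 2 * L + C * L + C * (1 / y) + C * L + C * (1 / y) := by ring
    linarith
  calc _ ≤ 1 * (C * (4 * L + 2 / y) / (‖u‖ * ‖v‖)) := by
        apply mul_le_mul kk_norm _ (by positivity) zero_le_one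
        gcongr
    _ = _ := one_mul _

lemma psi_fourier_tendsto (z : ℂ) (hy : 0 < z.im) (a : ℝ) :
    Tendsto (fun N : ℕ => (FourierTransform.fourier (psi ((N : ℝ) + 1) z)) a) atTop
      (𝓝 ((-1 / (2 * Real.pi * Complex.I)) * (1 / (z - a)))) := by
  obtain ⟨C, hC0, hC1, hC2⟩ := LT_rho_bounds hy.le
  have hu : z - a ≠ 0 := by
    intro h
    have := congrArg Complex.im h
    simp at this
    linarith
  have hN : ∀ N : ℕ, (1:ℝ) ≤ (N : ℝ) + 1 := fun N => by
    have : (0:ℝ) ≤ N := Nat.cast_nonneg N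
    linarith
  have him : (z - a).im = z.im := by simp
  simp only [fun N : ℕ => psi_fourier (hN N) z a hu]
  generalize z - (a : ℂ) = u at *
  have hT : Tendsto (fun N : ℕ => (N : ℝ) + 1) atTop atTop :=
    tendsto_natCast_atTop_atTop.atTop_add tendsto_const_nhds
  have h1 : Tendsto (fun N : ℕ => LT rho (u / (((N : ℝ) + 1 : ℝ) : ℂ))) atTop (𝓝 1) := by
    rw [tendsto_iff_norm_sub_tendsto_zero]
    have hlim : Tendsto (fun N : ℕ => C * ‖u‖ / ((N : ℝ) + 1)) atTop (𝓝 0) :=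
      tendsto_const_nhds.div_atTop hT
    refine squeeze_zero (fun _ => norm_nonneg _) (fun N => ?_) hlim
    have hT0 : (0:ℝ) < (N : ℝ) + 1 := by linarith [hN N]
    have := (hC2 (u / (((N : ℝ) + 1 : ℝ) : ℂ)) 0 (by
      rw [Complex.div_ofReal_im, him, abs_of_pos (by positivity)]
      exact div_le_self hy.le (hN N)) (by simpa using hy.le)).2
    rw [LT_rho_zero, sub_zero, norm_div, Complex.norm_real, Real.norm_of_nonneg hT0.le,
      ← mul_div_assoc] at this
    exact this
  have h2 : Tendsto (fun N : ℕ => ek u ((N : ℝ) + 1)) atTop (𝓝 0) := by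
    rw [tendsto_zero_iff_norm_tendsto_zero]
    simp only [ek_norm, him]
    refine Real.tendsto_exp_neg_atTop_nhds_zero.comp ?_
    have := Real.pi_pos
    exact hT.const_mul_atTop (by positivity)
  have := ((h1.mul (h2.const_sub 1)).div_const u).const_mul (-1 / (2 * Real.pi * Complex.I))
  simpa using this

lemma nu_summable (ν : PPM ℝ) (C K : ℝ)
    (hgrow : ∀ s : ℝ, 0 < s →
      ν.var (Set.Ioo (0:ℝ) s) ≤ ENNReal.ofReal (C * Real.exp (2 * Real.pi * K * s)))
    (y : ℝ) (hy : K < y) (hy0 : 0 < y) :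
    Summable (fun γ : ℝ => (Set.Ioi (0:ℝ)).indicator
      (fun γ => ‖ν.mass γ‖ * Real.exp (-(2 * Real.pi * y * γ))) γ) := by
  have hpi := Real.pi_pos
  set m : ℝ → ℝ≥0∞ := fun γ => (‖ν.mass γ‖₊ : ℝ≥0∞) with hm
  have hnn : ∀ γ : ℝ, 0 ≤ (Set.Ioi (0:ℝ)).indicator
      (fun γ => ‖ν.mass γ‖ * Real.exp (-(2 * Real.pi * y * γ))) γ := fun γ =>
    Set.indicator_nonneg (fun γ _ => by positivity) γ
  have hle : ∀ γ : ℝ, ENNReal.ofReal ((Set.Ioi (0:ℝ)).indicator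
      (fun γ => ‖ν.mass γ‖ * Real.exp (-(2 * Real.pi * y * γ))) γ) ≤
      ∑' k : ℕ, (Set.Ioo (0:ℝ) ((k:ℝ) + 2)).indicator m γ *
        ENNReal.ofReal (Real.exp (-(2 * Real.pi * y * k))) := by
    intro γ
    by_cases hγ : 0 < γ
    · rw [Set.indicator_of_mem (show γ ∈ Set.Ioi (0:ℝ) from hγ)]
      refine le_trans ?_ (ENNReal.le_tsum ⌊γ⌋₊)
      have h1 := Nat.floor_le hγ.le
      have h2 := Nat.lt_floor_add_one γ
      rw [Set.indicator_of_mem (show γ ∈ Set.Ioo (0:ℝ) ((⌊γ⌋₊:ℝ) + 2) from ⟨hγ, by linarith⟩),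
        ENNReal.ofReal_mul (norm_nonneg _)]
      refine mul_le_mul' ?_ (ENNReal.ofReal_le_ofReal (Real.exp_le_exp.2 ?_))
      · rw [ofReal_norm]; rfl
      · have : 0 < 2 * Real.pi * y := by positivity
        nlinarith
    · rw [Set.indicator_of_notMem (by simpa using hγ)]
      simp
  have hfin : ∑' γ : ℝ, ENNReal.ofReal ((Set.Ioi (0:ℝ)).indicator
      (fun γ => ‖ν.mass γ‖ * Real.exp (-(2 * Real.pi * y * γ))) γ) ≠ ⊤ := by
    refine ne_top_of_le_ne_top ?_ (ENNReal.tsum_le_tsum hle)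
    rw [ENNReal.tsum_comm]
    have hk : ∀ k : ℕ, ∑' γ : ℝ, (Set.Ioo (0:ℝ) ((k:ℝ) + 2)).indicator m γ *
        ENNReal.ofReal (Real.exp (-(2 * Real.pi * y * k))) ≤
        ENNReal.ofReal (|C| * Real.exp (4 * Real.pi * K) * (Real.exp (-(2 * Real.pi * (y - K)))) ^ k) := by
      intro k
      rw [ENNReal.tsum_mul_right, ← tsum_subtype]
      have h := hgrow ((k:ℝ) + 2) (by positivity)
      unfold PPM.var at h
      refine (mul_le_mul' h le_rfl).trans ?_
      rw [← ENNReal.ofReal_mul' (Real.exp_pos _).le]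
      apply ENNReal.ofReal_le_ofReal
      rw [mul_assoc C, mul_assoc |C|, ← Real.exp_add, ← Real.exp_nat_mul, ← Real.exp_add]
      have e : 2 * Real.pi * K * ((k:ℝ) + 2) + -(2 * Real.pi * y * k) =
        4 * Real.pi * K + k * -(2 * Real.pi * (y - K)) := by ring
      rw [e]
      gcongr
      exact le_abs_self C
    refine ne_top_of_le_ne_top ?_ (ENNReal.tsum_le_tsum hk)
    apply Summable.tsum_ofReal_ne_top
    apply Summable.mul_left
    apply summable_geometric_of_lt_one (Real.exp_pos _).le
    rw [Real.exp_lt_one_iff]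
    have : 0 < 2 * Real.pi * (y - K) := mul_pos (by positivity) (by linarith)
    linarith
  have := ENNReal.summable_toReal hfin
  refine this.congr fun γ => ?_
  rw [ENNReal.toReal_ofReal (hnn γ)]

lemma nu_loc_summable (ν : PPM ℝ) (hνlf : ν.locFinite) (r : ℝ) :
    Summable (fun γ : ℝ => (ball (0:ℝ) r).indicator (fun γ => ‖ν.mass γ‖) γ) := by
  have h := (hνlf r).ne
  unfold PPM.var at h
  have e := tsum_subtype (ball (0:ℝ) r) (fun γ => (‖ν.mass γ‖₊ : ℝ≥0∞))
  rw [e] at h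
  have := ENNReal.summable_toReal h
  refine this.congr fun γ => ?_
  by_cases hγ : γ ∈ ball (0:ℝ) r
  · simp [Set.indicator_of_mem hγ]
  · simp [Set.indicator_of_notMem hγ]

lemma ww_tendsto (γ : ℝ) : Tendsto (fun N : ℕ => ww ((N:ℝ) + 1) γ) atTop
    (𝓝 (if γ < 0 then 0 else if γ = 0 then 1 / 2 else 1)) := by
  have hT : Tendsto (fun N : ℕ => (N : ℝ) + 1) atTop atTop :=
    tendsto_natCast_atTop_atTop.atTop_add tendsto_const_nhds
  apply tendsto_const_nhds.congr'
  split_ifs with h1 h2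
  · filter_upwards [hT.eventually_ge_atTop (1 / (-γ)), hT.eventually_ge_atTop 1] with N hN hN1
    set T := (N : ℝ) + 1
    rw [div_le_iff₀ (by linarith)] at hN
    unfold ww
    rw [hh_zero (by linarith), hh_zero (by nlinarith), sub_zero]
  · filter_upwards [hT.eventually_ge_atTop 1] with N hN1
    set T := (N : ℝ) + 1
    unfold ww
    rw [h2, mul_zero, hh_half, hh_zero (by nlinarith), sub_zero]
  · have h3 : 0 < γ := lt_of_le_of_ne (not_lt.1 h1) (Ne.symm h2)
    filter_upwards [hT.eventually_ge_atTop (1 / γ), hT.eventually_ge_atTop (γ + 1)] with N hN hN1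
    set T := (N : ℝ) + 1
    rw [div_le_iff₀ h3] at hN
    unfold ww
    rw [hh_one hN, hh_zero (by nlinarith), sub_zero]

lemma nu_tendsto (ν : PPM ℝ) (hνlf : ν.locFinite) (C K : ℝ)
    (hgrow : ∀ s : ℝ, 0 < s →
      ν.var (Set.Ioo (0:ℝ) s) ≤ ENNReal.ofReal (C * Real.exp (2 * Real.pi * K * s)))
    (z : ℂ) (hy : K < z.im) (hy0 : 0 < z.im) :
    Tendsto (fun N : ℕ => ν.pair (psi ((N:ℝ) + 1) z)) atTop
      (𝓝 (ν.mass 0 / 2 + ∑' γ : Set.Ioi (0:ℝ), ν.mass γ * ek z γ)) := by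
  have hpi := Real.pi_pos
  have hs1 := nu_summable ν C K hgrow z.im hy hy0
  have hs2 := (nu_loc_summable ν hνlf 2).mul_left (Real.exp (2 * Real.pi * z.im))
  have hs3 : Summable (fun γ : ℝ => (Set.Ioi (0:ℝ)).indicator (fun γ => ν.mass γ * ek z γ) γ) := by
    apply Summable.of_norm
    refine hs1.congr fun γ => ?_
    rw [norm_indicator_eq_indicator_norm]
    congr 1
    ext γ
    rw [norm_mul, ek_norm]
  have key : ν.mass 0 / 2 + ∑' γ : Set.Ioi (0:ℝ), ν.mass γ * ek z γ =
      ∑' γ : ℝ, ν.mass γ * (((if γ < 0 then 0 else if γ = 0 then 1 / 2 else 1 : ℝ) : ℂ) * ek z γ) := by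
    have hs4 : HasSum (fun γ : ℝ => if γ = 0 then ν.mass 0 / 2 else 0) (ν.mass 0 / 2) :=
      hasSum_ite_eq 0 _
    have e := tsum_subtype (Set.Ioi (0:ℝ)) (fun γ => ν.mass γ * ek z γ)
    rw [e, ← hs4.tsum_eq, ← hs4.summable.tsum_add hs3]
    congr 1
    ext γ
    rcases lt_trichotomy γ 0 with h | h | h
    · rw [Set.indicator_of_notMem (by simpa using h.le)]
      simp [h, h.ne]
    · subst h
      rw [Set.indicator_of_notMem (by simp)]
      simp [ek_zero_right]
      ring
    · rw [Set.indicator_of_mem (show γ ∈ Set.Ioi (0:ℝ) from h)]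
      simp [h.not_gt, h.ne']
  rw [key]
  unfold PPM.pair psi
  refine tendsto_tsum_of_dominated_convergence (hs1.add hs2) ?_ (Filter.Eventually.of_forall ?_)
  · intro γ
    exact (((Complex.continuous_ofReal.tendsto _).comp (ww_tendsto γ)).mul_const _).const_mul _
  · intro N γ
    have hN : (1:ℝ) ≤ (N : ℝ) + 1 := by
      have : (0:ℝ) ≤ N := Nat.cast_nonneg N
      linarith
    have hn1 : 0 ≤ (Set.Ioi (0:ℝ)).indicator
      (fun γ => ‖ν.mass γ‖ * Real.exp (-(2 * Real.pi * z.im * γ))) γ :=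
      Set.indicator_nonneg (fun γ _ => by positivity) γ
    have hn2 : 0 ≤ Real.exp (2 * Real.pi * z.im) * (ball (0:ℝ) 2).indicator (fun γ => ‖ν.mass γ‖) γ :=
      mul_nonneg (Real.exp_pos _).le (Set.indicator_nonneg (fun γ _ => by positivity) γ)
    rw [norm_mul, norm_mul, Complex.norm_real, Real.norm_eq_abs, ek_norm]
    rcases le_or_gt γ (-1) with h | h
    · rw [ww_left hN h]
      simp only [abs_zero, zero_mul, mul_zero]
      linarith
    have hww := ww_abs ((N:ℝ) + 1) γ
    rcases le_or_gt γ 0 with h' | h'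
    · have hb : γ ∈ ball (0:ℝ) 2 := by
        rw [mem_ball_zero_iff, Real.norm_eq_abs, abs_lt]; constructor <;> linarith
      rw [Set.indicator_of_mem hb] at *
      refine le_trans ?_ (le_add_of_nonneg_left hn1)
      rw [mul_comm (Real.exp (2 * Real.pi * z.im))]
      refine mul_le_mul_of_nonneg_left ?_ (norm_nonneg _)
      calc _ ≤ 1 * Real.exp (2 * Real.pi * z.im) := by
            gcongr
            have : 0 < 2 * Real.pi * z.im := by positivity
            nlinarith
        _ = _ := one_mul _
    · rw [Set.indicator_of_mem (show γ ∈ Set.Ioi (0:ℝ) from h')] at *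
      refine le_trans ?_ (le_add_of_nonneg_right hn2)
      refine mul_le_mul_of_nonneg_left ?_ (norm_nonneg _)
      calc _ ≤ 1 * Real.exp (-(2 * Real.pi * z.im * γ)) := by gcongr
        _ = _ := one_mul _

lemma lower (D : ℝ) (hD : 0 < D) (φ : ℤ → ℝ) (M : ℝ) (hM : ∀ n : ℤ, |φ n| ≤ M)
    (a : ℤ → ℝ) (ha : ∀ n : ℤ, a n = (n : ℝ) / D + φ n) (z : ℂ) (hy : 0 < z.im) :
    ∃ c : ℝ, 0 < c ∧ ∀ n : ℤ, c * |(n : ℝ)| ≤ ‖z - (a n : ℂ)‖ := by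
  have hM0 : 0 ≤ M := (abs_nonneg _).trans (hM 0)
  set Δ := M + |z.re| with hΔ
  have hΔ0 : 0 ≤ Δ := by positivity
  refine ⟨1 / (D * (1 + Δ / z.im)), by positivity, fun n => ?_⟩
  have h1 : z.im ≤ ‖z - (a n : ℂ)‖ := by
    have := Complex.abs_im_le_norm (z - (a n : ℂ))
    simp at this
    exact (le_abs_self _).trans this
  have h2 : |z.re - a n| ≤ ‖z - (a n : ℂ)‖ := by
    have := Complex.abs_re_le_norm (z - (a n : ℂ))
    simpa using this
  have h3 : |(n:ℝ)| / D ≤ |z.re - a n| + Δ := by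
    have e : (n:ℝ) / D = z.re - φ n - (z.re - a n) := by rw [ha n]; ring
    have e2 : |(n:ℝ)| / D = |(n:ℝ) / D| := by rw [abs_div, abs_of_pos hD]
    rw [e2, e]
    have := abs_sub (z.re - φ n) (z.re - a n)
    have := abs_sub z.re (φ n)
    have := hM n
    linarith
  have h4 : Δ ≤ Δ / z.im * ‖z - (a n : ℂ)‖ := by
    rw [div_mul_eq_mul_div, le_div_iff₀ hy]
    gcongr
  rw [div_mul_eq_mul_div, one_mul, div_le_iff₀ (by positivity)]
  rw [div_le_iff₀ hD] at h3
  have : |z.re - a n| + Δ ≤ ‖z - (a n : ℂ)‖ * (1 + Δ / z.im) := by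
    have : ‖z - (a n : ℂ)‖ * (1 + Δ / z.im) = ‖z - (a n : ℂ)‖ + Δ / z.im * ‖z - (a n : ℂ)‖ := by ring
    linarith
  calc _ ≤ (|z.re - a n| + Δ) * D := h3
    _ ≤ ‖z - (a n : ℂ)‖ * (1 + Δ / z.im) * D := by gcongr
    _ = _ := by ring

lemma inv_sq_summable : Summable (fun n : ℕ => 1 / ((n : ℝ) + 1) ^ 2) := by
  have := (summable_nat_add_iff 1).2 (Real.summable_one_div_nat_pow.2 (one_lt_two))
  simpa using this

lemma cast_abs1 (n : ℕ) : |(((n : ℤ) + 1 : ℤ) : ℝ)| = (n : ℝ) + 1 := by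
  push_cast
  exact abs_of_nonneg (by positivity)

lemma cast_abs2 (n : ℕ) : |((-((n : ℤ) + 1) : ℤ) : ℝ)| = (n : ℝ) + 1 := by
  push_cast
  rw [abs_neg]
  exact abs_of_nonneg (by positivity)

lemma sum_norm (D : ℝ) (φ : ℤ → ℝ) (M : ℝ) (hM : ∀ n : ℤ, |φ n| ≤ M)
    (a : ℤ → ℝ) (ha : ∀ n : ℤ, a n = (n : ℝ) / D + φ n) (n : ℤ) : |a n + a (-n)| ≤ 2 * M := by
  have e : a n + a (-n) = φ n + φ (-n) := by rw [ha, ha]; push_cast; ring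
  rw [e]
  have := abs_add_le (φ n) (φ (-n))
  have := hM n
  have := hM (-n)
  linarith

lemma z_ne {z : ℂ} (hy : 0 < z.im) (b : ℝ) : z - b ≠ 0 := by
  intro h
  have := congrArg Complex.im h
  simp at this
  linarith

lemma f_ne (D : ℝ) (hD : 0 < D) (φ : ℤ → ℝ) (M : ℝ) (hM : ∀ n : ℤ, |φ n| ≤ M)
    (a : ℤ → ℝ) (ha : ∀ n : ℤ, a n = (n : ℝ) / D + φ n) (hne : ∀ n : ℤ, a n ≠ 0)
    (z : ℂ) (hy : 0 < z.im) (w : ℂ)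
    (hf : Tendsto
      (fun N : ℕ => (1 - z / (a 0 : ℂ)) *
        ∏ n ∈ Finset.range N,
          ((1 - z / (a ((n : ℤ) + 1) : ℂ)) * (1 - z / (a (-((n : ℤ) + 1)) : ℂ)))) atTop (𝓝 w)) :
    w ≠ 0 := by
  have hM0 : 0 ≤ M := (abs_nonneg _).trans (hM 0)
  have hfac : ∀ n : ℤ, 1 - z / (a n : ℂ) ≠ 0 := by
    intro n h
    have hn : (a n : ℂ) ≠ 0 := by exact_mod_cast hne n
    rw [sub_eq_zero, eq_comm, div_eq_one_iff_eq hn] at h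
    exact z_ne hy (a n) (sub_eq_zero.2 h)
  set g : ℕ → ℂ := fun n => (1 - z / (a ((n : ℤ) + 1) : ℂ)) * (1 - z / (a (-((n : ℤ) + 1)) : ℂ)) - 1
    with hg
  have hg1 : ∀ n : ℕ, (1 - z / (a ((n : ℤ) + 1) : ℂ)) * (1 - z / (a (-((n : ℤ) + 1)) : ℂ)) = 1 + g n := by
    intro n; rw [hg]; ring
  have hgs : Summable (fun n => ‖g n‖) := by
    have hb := inv_sq_summable.mul_left ((‖z‖ * (2 * M) + ‖z‖ ^ 2) * (4 * D ^ 2))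
    refine Summable.of_norm_bounded_eventually_nat hb ?_
    filter_upwards [tendsto_natCast_atTop_atTop.eventually_ge_atTop (2 * D * M)] with n hn
    rw [norm_norm]
    have hlow : ∀ m : ℤ, |(m : ℝ)| = (n : ℝ) + 1 → ((n : ℝ) + 1) / (2 * D) ≤ ‖(a m : ℂ)‖ := by
      intro m hm
      rw [Complex.norm_real, Real.norm_eq_abs]
      have e : |(m:ℝ) / D| ≤ |a m| + |φ m| := by
        have : (m:ℝ) / D = a m - φ m := by rw [ha m]; ring
        rw [this]; exact abs_sub _ _
      rw [abs_div, hm, abs_of_pos hD, div_le_iff₀ hD] at e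
      rw [div_le_iff₀ (by positivity)]
      have := hM m
      nlinarith
    have l1 := hlow _ (cast_abs1 n)
    have l2 := hlow _ (cast_abs2 n)
    have hs := sum_norm D φ M hM a ha ((n : ℤ) + 1)
    have n1 : (a ((n : ℤ) + 1) : ℂ) ≠ 0 := by exact_mod_cast hne _
    have n2 : (a (-((n : ℤ) + 1)) : ℂ) ≠ 0 := by exact_mod_cast hne _
    have e : g n = (-(z * ((a ((n : ℤ) + 1) + a (-((n : ℤ) + 1)) : ℝ) : ℂ)) + z ^ 2) /
        ((a ((n : ℤ) + 1) : ℂ) * (a (-((n : ℤ) + 1)) : ℂ)) := by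
      rw [hg]
      push_cast
      field_simp
      ring
    rw [e, norm_div, norm_mul]
    have hnum : ‖-(z * ((a ((n : ℤ) + 1) + a (-((n : ℤ) + 1)) : ℝ) : ℂ)) + z ^ 2‖ ≤
        ‖z‖ * (2 * M) + ‖z‖ ^ 2 := by
      refine (norm_add_le _ _).trans ?_
      rw [norm_neg, norm_mul, Complex.norm_real, Real.norm_eq_abs, norm_pow]
      gcongr
    have hpos : 0 < ((n : ℝ) + 1) / (2 * D) := by positivity
    calc _ ≤ (‖z‖ * (2 * M) + ‖z‖ ^ 2) / ((((n : ℝ) + 1) / (2 * D)) * (((n : ℝ) + 1) / (2 * D))) := by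
          gcongr
      _ = _ := by field_simp; ring
  have hp := (multipliable_one_add_of_summable hgs).hasProd.tendsto_prod_nat
  have hnz := tprod_one_add_ne_zero_of_summable (f := g) (fun n => by
    rw [← hg1]; exact mul_ne_zero (hfac _) (hfac _)) hgs
  simp only [hg1] at hf
  rw [tendsto_nhds_unique hf (hp.const_mul _)]
  exact mul_ne_zero (hfac 0) hnz

lemma logDeriv_lin (b : ℝ) (hb : b ≠ 0) {z : ℂ} (hy : 0 < z.im) :
    logDeriv (fun z : ℂ => 1 - z / (b : ℂ)) z = 1 / (z - b) := by
  have hb' : (b : ℂ) ≠ 0 := by exact_mod_cast hb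
  have hz := z_ne hy b
  have hd : HasDerivAt (fun z : ℂ => 1 - z / (b : ℂ)) (-(1 / (b : ℂ))) z :=
    ((hasDerivAt_id z).div_const _).const_sub 1
  rw [logDeriv_apply, hd.deriv]
  have : (1 - z / (b : ℂ)) = -(z - b) / b := by field_simp; ring
  rw [this]
  field_simp

lemma f_logDeriv (D : ℝ) (hD : 0 < D) (φ : ℤ → ℝ) (M : ℝ) (hM : ∀ n : ℤ, |φ n| ≤ M)
    (a : ℤ → ℝ) (ha : ∀ n : ℤ, a n = (n : ℝ) / D + φ n) (hne : ∀ n : ℤ, a n ≠ 0)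
    (f : ℂ → ℂ)
    (hf : TendstoLocallyUniformly
      (fun N : ℕ => fun z : ℂ => (1 - z / (a 0 : ℂ)) *
        ∏ n ∈ Finset.range N,
          ((1 - z / (a ((n : ℤ) + 1) : ℂ)) * (1 - z / (a (-((n : ℤ) + 1)) : ℂ))))
      f atTop) (z : ℂ) (hy : 0 < z.im)
    (hs : Summable (fun n : ℕ =>
        1 / (z - (a ((n : ℤ) + 1) : ℂ)) + 1 / (z - (a (-((n : ℤ) + 1)) : ℂ)))) :
    deriv f z / f z = 1 / (z - (a 0 : ℂ)) +
        ∑' n : ℕ, (1 / (z - (a ((n : ℤ) + 1) : ℂ)) + 1 / (z - (a (-((n : ℤ) + 1)) : ℂ))) := by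
  have hU := tendstoLocallyUniformlyOn_univ.2 hf
  have hfz : f z ≠ 0 := f_ne D hD φ M hM a ha hne z hy (f z) (hU.tendsto_at (Set.mem_univ z))
  have hfac : ∀ n : ℤ, 1 - z / (a n : ℂ) ≠ 0 := by
    intro n h
    have hn : (a n : ℂ) ≠ 0 := by exact_mod_cast hne n
    rw [sub_eq_zero, eq_comm, div_eq_one_iff_eq hn] at h
    exact z_ne hy (a n) (sub_eq_zero.2 h)
  have hlim := logDeriv_tendsto isOpen_univ (Set.mem_univ z) hU
    (Filter.Eventually.of_forall fun N => by fun_prop) hfz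
  have hlim2 := (hs.hasSum.tendsto_sum_nat).const_add (1 / (z - (a 0 : ℂ)))
  rw [← logDeriv_apply]
  refine tendsto_nhds_unique hlim (hlim2.congr fun N => ?_)
  have hdl : ∀ b : ℝ, DifferentiableAt ℂ (fun z : ℂ => 1 - z / (b : ℂ)) z := fun b => by fun_prop
  rw [logDeriv_mul (f := fun z : ℂ => 1 - z / (a 0 : ℂ)) (g := fun z : ℂ => ∏ n ∈ Finset.range N,
          ((1 - z / (a ((n : ℤ) + 1) : ℂ)) * (1 - z / (a (-((n : ℤ) + 1)) : ℂ)))) z (hfac 0)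
      (Finset.prod_ne_zero_iff.2 fun n _ => mul_ne_zero (hfac _) (hfac _)) (by fun_prop) (by fun_prop),
    logDeriv_lin _ (hne 0) hy]
  congr 1
  have := logDeriv_prod (s := Finset.range N) (x := z) (f := fun (n : ℕ) (z : ℂ) =>
    ((1 - z / (a ((n : ℤ) + 1) : ℂ)) * (1 - z / (a (-((n : ℤ) + 1)) : ℂ))))
    (fun n _ => mul_ne_zero (hfac _) (hfac _)) (fun n _ => by fun_prop)
  rw [this]
  refine Finset.sum_congr rfl fun n _ => ?_
  rw [logDeriv_mul (f := fun z : ℂ => 1 - z / (a ((n : ℤ) + 1) : ℂ))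
    (g := fun z : ℂ => 1 - z / (a (-((n : ℤ) + 1)) : ℂ)) z (hfac _) (hfac _) (hdl _) (hdl _),
    logDeriv_lin _ (hne _) hy, logDeriv_lin _ (hne _) hy]

lemma final_alg (p q X b : ℂ)
    (h : (-1 / (2 * Real.pi * Complex.I)) * p + (-1 / (2 * Real.pi * Complex.I)) * q = b / 2 + X) :
    p + q = -(2 * Real.pi * Complex.I) * X - Real.pi * Complex.I * b := by
  have hpi : (2 * Real.pi * Complex.I : ℂ) ≠ 0 := by simp [Real.pi_ne_zero]
  have e1 : -(2 * Real.pi * Complex.I) * (-1 / (2 * Real.pi * Complex.I)) = (1 : ℂ) := by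
    field_simp
  linear_combination (-(2 * Real.pi * Complex.I)) * h - (p + q) * e1

end S17

set_option maxHeartbeats 800000 in
/-- Let `a_n = n/D + φ(n)` (`D > 0`, `φ` bounded, `a_n ≠ 0`) and suppose
`μ_A = Σ_{n∈ℤ} δ_{a_n}` is temperate with pure point Fourier transform
`μ̂_A = Σ_γ b_γ δ_γ` satisfying `|μ̂_A|((0,s)) ≤ C e^{2πKs}`. Let `f` be the canonical
product `(1 - z/a_0) ∏_{n≥1} (1 - z/a_n)(1 - z/a_{-n})`. Then for `Im z > K` the series
below converge and
`f'(z)/f(z) = 1/(z-a_0) + Σ_{n≥1} [1/(z-a_n) + 1/(z-a_{-n})]`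
`= -2πi Σ_{γ>0} b_γ e^{2πiγz} - πi b_0`, the last series converging absolutely. -/
theorem statement17 (D : ℝ) (hD : 0 < D) (φ : ℤ → ℝ)
    (hφ : ∃ M : ℝ, ∀ n : ℤ, |φ n| ≤ M)
    (a : ℤ → ℝ) (ha : ∀ n : ℤ, a n = (n : ℝ) / D + φ n)
    (hne : ∀ n : ℤ, a n ≠ 0)
    (htemp : ∀ ψ : SchwartzMap ℝ ℂ, Summable fun n : ℤ => ψ (a n))
    (ν : PPM ℝ) (hνlf : ν.locFinite)
    (hF : ∀ ψ : SchwartzMap ℝ ℂ, HasCompactSupport ψ →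
      ∑' n : ℤ, (FourierTransform.fourierCLE ℂ (SchwartzMap ℝ ℂ) ψ) (a n) = ν.pair ⇑ψ)
    (C K : ℝ) (hK : 0 ≤ K)
    (hgrow : ∀ s : ℝ, 0 < s →
      ν.var (Set.Ioo (0:ℝ) s) ≤ ENNReal.ofReal (C * Real.exp (2 * Real.pi * K * s)))
    (f : ℂ → ℂ)
    (hf : TendstoLocallyUniformly
      (fun N : ℕ => fun z : ℂ => (1 - z / (a 0 : ℂ)) *
        ∏ n ∈ Finset.range N,
          ((1 - z / (a ((n : ℤ) + 1) : ℂ)) * (1 - z / (a (-((n : ℤ) + 1)) : ℂ))))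
      f atTop) :
    ∀ z : ℂ, K < z.im →
      Summable (fun n : ℕ =>
        1 / (z - (a ((n : ℤ) + 1) : ℂ)) + 1 / (z - (a (-((n : ℤ) + 1)) : ℂ))) ∧
      Summable (fun γ : {γ : ℝ // 0 < γ} =>
        ‖ν.mass γ * Complex.exp (2 * Real.pi * Complex.I * ((γ : ℝ) : ℂ) * z)‖) ∧
      deriv f z / f z = 1 / (z - (a 0 : ℂ)) +
        ∑' n : ℕ, (1 / (z - (a ((n : ℤ) + 1) : ℂ)) + 1 / (z - (a (-((n : ℤ) + 1)) : ℂ))) ∧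
      deriv f z / f z =
        -(2 * Real.pi * Complex.I) *
            (∑' γ : {γ : ℝ // 0 < γ},
              ν.mass γ * Complex.exp (2 * Real.pi * Complex.I * ((γ : ℝ) : ℂ) * z)) -
          Real.pi * Complex.I * ν.mass 0 := by
  intro z hz
  have hy : 0 < z.im := lt_of_le_of_lt hK hz
  obtain ⟨M, hM⟩ := hφ
  have hM0 : 0 ≤ M := (abs_nonneg _).trans (hM 0)
  obtain ⟨c, hc0, hc⟩ := S17.lower D hD φ M hM a ha z hy
  have hl1 : ∀ n : ℕ, c * ((n : ℝ) + 1) ≤ ‖z - (a ((n : ℤ) + 1) : ℂ)‖ := fun n => by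
    have := hc ((n : ℤ) + 1)
    rwa [S17.cast_abs1] at this
  have hl2 : ∀ n : ℕ, c * ((n : ℝ) + 1) ≤ ‖z - (a (-((n : ℤ) + 1)) : ℂ)‖ := fun n => by
    have := hc (-((n : ℤ) + 1))
    rwa [S17.cast_abs2] at this
  set L := 2 * ‖z‖ + 2 * M with hL
  have hL0 : 0 ≤ L := by positivity
  have hLb : ∀ n : ℕ, ‖2 * z - (a ((n : ℤ) + 1) : ℂ) - (a (-((n : ℤ) + 1)) : ℂ)‖ ≤ L := fun n => by
    have h := S17.sum_norm D φ M hM a ha ((n : ℤ) + 1)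
    have e : 2 * z - (a ((n : ℤ) + 1) : ℂ) - (a (-((n : ℤ) + 1)) : ℂ) =
      2 * z - ((a ((n : ℤ) + 1) + a (-((n : ℤ) + 1)) : ℝ) : ℂ) := by push_cast; ring
    rw [e]
    refine (norm_sub_le _ _).trans ?_
    rw [Complex.norm_real, Real.norm_eq_abs, norm_mul, Complex.norm_ofNat]
    linarith
  have hbd : ∀ (C' : ℝ), 0 ≤ C' → ∀ n : ℕ,
      C' / (‖z - (a ((n : ℤ) + 1) : ℂ)‖ * ‖z - (a (-((n : ℤ) + 1)) : ℂ)‖) ≤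
        C' / c ^ 2 * (1 / ((n : ℝ) + 1) ^ 2) := fun C' hC' n => by
    have h1 := hl1 n
    have h2 := hl2 n
    have hp : 0 < c * ((n : ℝ) + 1) := by positivity
    calc _ ≤ C' / ((c * ((n : ℝ) + 1)) * (c * ((n : ℝ) + 1))) := by gcongr
      _ = _ := by field_simp
  have hS : Summable (fun n : ℕ =>
        1 / (z - (a ((n : ℤ) + 1) : ℂ)) + 1 / (z - (a (-((n : ℤ) + 1)) : ℂ))) := by
    refine Summable.of_norm_bounded (S17.inv_sq_summable.mul_left (L / c ^ 2)) fun n => ?_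
    refine le_trans ?_ (hbd L hL0 n)
    have n1 := S17.z_ne hy (a ((n : ℤ) + 1))
    have n2 := S17.z_ne hy (a (-((n : ℤ) + 1)))
    have e : 1 / (z - (a ((n : ℤ) + 1) : ℂ)) + 1 / (z - (a (-((n : ℤ) + 1)) : ℂ)) =
      (2 * z - (a ((n : ℤ) + 1) : ℂ) - (a (-((n : ℤ) + 1)) : ℂ)) /
        ((z - (a ((n : ℤ) + 1) : ℂ)) * (z - (a (-((n : ℤ) + 1)) : ℂ))) := by
      field_simp
      ring
    rw [e, norm_div, norm_mul]
    have := hLb n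
    gcongr
  have hlog := S17.f_logDeriv D hD φ M hM a ha hne f hf z hy hS
  have hek : ∀ γ : ℝ, Complex.exp (2 * Real.pi * Complex.I * (γ : ℂ) * z) = S17.ek z γ := by
    intro γ; unfold S17.ek; congr 1; ring
  refine ⟨hS, ?_, hlog, ?_⟩
  · have h := S17.nu_summable ν C K hgrow z.im hz hy
    have h2 := (summable_subtype_iff_indicator (s := Set.Ioi (0:ℝ))).2 h
    refine Summable.congr h2 fun γ => ?_
    simp only [Function.comp]
    rw [hek, norm_mul, S17.ek_norm]
  · rw [hlog]
    have hN : ∀ N : ℕ, (1:ℝ) ≤ (N : ℝ) + 1 := fun N => by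
      have : (0:ℝ) ≤ N := Nat.cast_nonneg N
      linarith
    have hnu := S17.nu_tendsto ν hνlf C K hgrow z hz hy
    have hpair : ∀ N : ℕ, ν.pair (S17.psi ((N:ℝ) + 1) z) =
        (FourierTransform.fourier (S17.psi ((N:ℝ) + 1) z)) (a 0) +
        ∑' n : ℕ, ((FourierTransform.fourier (S17.psi ((N:ℝ) + 1) z)) (a ((n : ℤ) + 1)) +
          (FourierTransform.fourier (S17.psi ((N:ℝ) + 1) z)) (a (-((n : ℤ) + 1)))) := by
      intro N
      set Ψ : SchwartzMap ℝ ℂ := (S17.psi_compact (hN N) z).toSchwartzMap (S17.psi_contDiff _ z)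
        with hΨ
      have h1 := hF Ψ (S17.psi_compact (hN N) z)
      have h2 := htemp (FourierTransform.fourierCLE ℂ (SchwartzMap ℝ ℂ) Ψ)
      have e : ⇑(FourierTransform.fourierCLE ℂ (SchwartzMap ℝ ℂ) Ψ) =
        FourierTransform.fourier (S17.psi ((N:ℝ) + 1) z) := rfl
      rw [e] at h1 h2
      have e' : ⇑Ψ = S17.psi ((N:ℝ) + 1) z := rfl
      rw [e'] at h1
      rw [← h1]
      have s1 : Summable (fun n : ℕ =>
          (FourierTransform.fourier (S17.psi ((N:ℝ) + 1) z)) (a ((n : ℤ) + 1))) :=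
        h2.comp_injective (i := fun n : ℕ => (n : ℤ) + 1) (fun m n h => by simpa using h)
      have s2 : Summable (fun n : ℕ =>
          (FourierTransform.fourier (S17.psi ((N:ℝ) + 1) z)) (a (-((n : ℤ) + 1)))) :=
        h2.comp_injective (i := fun n : ℕ => -((n : ℤ) + 1)) (fun m n h => by simpa using h)
      rw [tsum_of_add_one_of_neg_add_one (f := fun n : ℤ =>
        (FourierTransform.fourier (S17.psi ((N:ℝ) + 1) z)) (a n)) s1 s2, s1.tsum_add s2]
      ring
    obtain ⟨C', hC'0, hC'⟩ := S17.pair_bound z hy L hL0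
    have hmu : Tendsto (fun N : ℕ => ν.pair (S17.psi ((N:ℝ) + 1) z)) atTop
        (𝓝 ((-1 / (2 * Real.pi * Complex.I)) * (1 / (z - (a 0 : ℂ))) +
          ∑' n : ℕ, ((-1 / (2 * Real.pi * Complex.I)) * (1 / (z - (a ((n : ℤ) + 1) : ℂ))) +
            (-1 / (2 * Real.pi * Complex.I)) * (1 / (z - (a (-((n : ℤ) + 1)) : ℂ)))))) := by
      simp only [hpair]
      refine (S17.psi_fourier_tendsto z hy (a 0)).add ?_
      refine tendsto_tsum_of_dominated_convergence
        (S17.inv_sq_summable.mul_left (C' / c ^ 2)) ?_ (Filter.Eventually.of_forall ?_)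
      · intro n
        exact (S17.psi_fourier_tendsto z hy _).add (S17.psi_fourier_tendsto z hy _)
      · intro N n
        exact (hC' _ (hN N) _ _ (hLb n)).trans (hbd C' hC'0 n)
    have hfin := tendsto_nhds_unique hmu hnu
    have hts : (∑' n : ℕ, ((-1 / (2 * Real.pi * Complex.I)) * (1 / (z - (a ((n : ℤ) + 1) : ℂ))) +
        (-1 / (2 * Real.pi * Complex.I)) * (1 / (z - (a (-((n : ℤ) + 1)) : ℂ))))) =
        (-1 / (2 * Real.pi * Complex.I)) *
        ∑' n : ℕ, (1 / (z - (a ((n : ℤ) + 1) : ℂ)) + 1 / (z - (a (-((n : ℤ) + 1)) : ℂ))) := by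
      rw [← tsum_mul_left]
      exact tsum_congr fun n => (mul_add _ _ _).symm
    rw [hts] at hfin
    have hexp : (∑' γ : {γ : ℝ // 0 < γ},
        ν.mass γ * Complex.exp (2 * Real.pi * Complex.I * ((γ : ℝ) : ℂ) * z)) =
      ∑' γ : Set.Ioi (0:ℝ), ν.mass γ * S17.ek z γ :=
      tsum_congr fun γ => by rw [hek]
    rw [hexp]
    exact S17.final_alg _ _ _ _ hfin

end
end

section
/- Let Q(x) = Σ_{ω∈Ω} q_ω e^{2πi x ω} with q_ω ∈ ℂ, Σ_{ω∈Ω} |q_ω| < ∞, Ω a bounded countable subset of ℝ, whose entire extension Q(z) is not identically zero and has only real zeros, and let A be the multiset of zeros of Q counted with multiplicity. Then the Fourier transform μ̂_A of μ_A = Σ_{a∈A} δ_a is a pure point measure, and for every s > 0 there exists a constant C(s) such that |μ̂_A|((−r, r)) ≤ C(s) e^{2πsr} for all r > 0. -/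
open MeasureTheory Metric Filter Topology Complex SchwartzMap Bornology
open scoped ENNReal

noncomputable section

/-- the exponential `e^{2πi w x}` -/
def ew (w x : ℝ) : ℂ := Complex.exp (2 * Real.pi * Complex.I * ((w * x : ℝ) : ℂ))

lemma norm_ew (w x : ℝ) : ‖ew w x‖ = 1 := by
  unfold ew
  rw [show (2 * Real.pi * Complex.I * ((w * x : ℝ) : ℂ) : ℂ) = ((2 * Real.pi * (w * x) : ℝ) : ℂ) * I by
    push_cast; ring]
  exact Complex.norm_exp_ofReal_mul_I _

lemma ew_add (a b x : ℝ) : ew (a + b) x = ew a x * ew b x := by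
  unfold ew
  rw [← Complex.exp_add]
  congr 1
  push_cast
  ring

lemma ew_add_right (a x y : ℝ) : ew a (x + y) = ew a x * ew a y := by
  unfold ew
  rw [← Complex.exp_add]
  congr 1
  push_cast
  ring

lemma ew_zero (x : ℝ) : ew 0 x = 1 := by
  simp [ew]

lemma ew_neg (a x : ℝ) : ew (-a) x = (starRingEnd ℂ) (ew a x) := by
  unfold ew
  rw [← Complex.exp_conj]
  congr 1
  simp [Complex.conj_ofNat]

lemma ew_nsmul (n : ℕ) (a x : ℝ) : ew (n * a) x = ew a x ^ n := by
  unfold ew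
  rw [← Complex.exp_nat_mul]
  congr 1
  push_cast
  ring

lemma ew_sum {ι : Type*} (s : Finset ι) (f : ι → ℝ) (x : ℝ) :
    ew (∑ i ∈ s, f i) x = ∏ i ∈ s, ew (f i) x := by
  classical
  induction s using Finset.induction_on with
  | empty => simp [ew_zero]
  | insert a s ha ih => rw [Finset.sum_insert ha, Finset.prod_insert ha, ew_add, ih]

lemma continuous_ew (w : ℝ) : Continuous (ew w) := by
  unfold ew
  fun_prop

/-- `F` is an absolutely convergent generalized trigonometric series, norm at most `N`. -/
def TRep (F : ℝ → ℂ) (N : ℝ) : Prop :=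
  ∃ (ι : Type) (_ : Countable ι) (c : ι → ℂ) (w : ι → ℝ), (Summable fun i => ‖c i‖) ∧
    ∑' i, ‖c i‖ ≤ N ∧ ∀ x, HasSum (fun i => c i * ew (w i) x) (F x)

namespace TRep

lemma summ {ι : Type*} {c : ι → ℂ} {w : ι → ℝ} (h : Summable fun i => ‖c i‖) (x : ℝ) :
    Summable fun i => ‖c i * ew (w i) x‖ := by
  simpa [norm_ew] using h

lemma mono {F : ℝ → ℂ} {N M : ℝ} (h : TRep F N) (hNM : N ≤ M) : TRep F M := by
  obtain ⟨ι, i, c, w, h1, h2, h3⟩ := h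
  exact ⟨ι, i, c, w, h1, h2.trans hNM, h3⟩

lemma nonneg {F : ℝ → ℂ} {N : ℝ} (h : TRep F N) : 0 ≤ N := by
  obtain ⟨ι, i, c, w, h1, h2, h3⟩ := h
  exact (tsum_nonneg fun i => norm_nonneg _).trans h2

lemma bound {F : ℝ → ℂ} {N : ℝ} (h : TRep F N) (x : ℝ) : ‖F x‖ ≤ N := by
  obtain ⟨ι, i, c, w, h1, h2, h3⟩ := h
  rw [← (h3 x).tsum_eq]
  refine (norm_tsum_le_tsum_norm (summ h1 x)).trans ?_
  simpa [norm_ew] using h2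

lemma add {F G : ℝ → ℂ} {N M : ℝ} (hF : TRep F N) (hG : TRep G M) :
    TRep (fun x => F x + G x) (N + M) := by
  obtain ⟨ι, i, c, w, h1, h2, h3⟩ := hF
  obtain ⟨κ, j, d, v, k1, k2, k3⟩ := hG
  have hs : HasSum (fun i : ι ⊕ κ => ‖Sum.elim c d i‖) (∑' i, ‖c i‖ + ∑' i, ‖d i‖) :=
    HasSum.sum (by simpa [Function.comp_def] using h1.hasSum)
      (by simpa [Function.comp_def] using k1.hasSum)
  refine ⟨ι ⊕ κ, inferInstance, Sum.elim c d, Sum.elim w v, hs.summable, ?_, fun x => ?_⟩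
  · rw [hs.tsum_eq]; linarith
  · exact HasSum.sum (by simpa [Function.comp_def] using h3 x)
      (by simpa [Function.comp_def] using k3 x)

lemma mul {F G : ℝ → ℂ} {N M : ℝ} (hF : TRep F N) (hG : TRep G M) :
    TRep (fun x => F x * G x) (N * M) := by
  have hN := hF.nonneg
  obtain ⟨ι, i, c, w, h1, h2, h3⟩ := hF
  obtain ⟨κ, j, d, v, k1, k2, k3⟩ := hG
  have hs : Summable fun z : ι × κ => ‖c z.1‖ * ‖d z.2‖ :=
    h1.mul_of_nonneg k1 (fun _ => norm_nonneg _) (fun _ => norm_nonneg _)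
  refine ⟨ι × κ, inferInstance, fun z => c z.1 * d z.2, fun z => w z.1 + v z.2, ?_, ?_, fun x => ?_⟩
  · simpa using hs
  · simp only [norm_mul]
    rw [← h1.tsum_mul_tsum k1 hs]
    exact mul_le_mul h2 k2 (tsum_nonneg fun i => norm_nonneg _) hN
  · have := (h3 x).mul (k3 x) (summable_mul_of_summable_norm
      (f := fun i => c i * ew (w i) x) (g := fun i => d i * ew (v i) x) (summ h1 x) (summ k1 x))
    have he : (fun z : ι × κ => c z.1 * d z.2 * ew (w z.1 + v z.2) x) =
        fun z : ι × κ => c z.1 * ew (w z.1) x * (d z.2 * ew (v z.2) x) := by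
      funext z
      rw [ew_add]; ring
    rw [he]
    exact this

lemma const (a : ℂ) : TRep (fun _ => a) ‖a‖ := by
  refine ⟨Unit, inferInstance, fun _ => a, fun _ => 0, Summable.of_finite, by simp, fun x => ?_⟩
  simp [ew_zero]

lemma conj {F : ℝ → ℂ} {N : ℝ} (h : TRep F N) : TRep (fun x => (starRingEnd ℂ) (F x)) N := by
  obtain ⟨ι, i, c, w, h1, h2, h3⟩ := h
  refine ⟨ι, i, fun i => (starRingEnd ℂ) (c i), fun i => - w i, by simpa using h1,
    by simpa using h2, fun x => ?_⟩
  have := Complex.hasSum_conj'.2 (h3 x)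
  simpa [ew_neg] using this

lemma pow {F : ℝ → ℂ} {N : ℝ} (h : TRep F N) (n : ℕ) : TRep (fun x => F x ^ n) (N ^ n) := by
  induction n with
  | zero => simpa using const 1
  | succ n ih => simpa [pow_succ] using ih.mul h

lemma sum {ι : Type*} (s : Finset ι) {F : ι → ℝ → ℂ} {N : ι → ℝ} (h : ∀ i ∈ s, TRep (F i) (N i)) :
    TRep (fun x => ∑ i ∈ s, F i x) (∑ i ∈ s, N i) := by
  classical
  induction s using Finset.induction_on with
  | empty => simpa using const 0
  | insert a s ha ih =>
    simp only [Finset.sum_insert ha]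
    exact (h a (by simp)).add (ih fun i hi => h i (by simp [hi]))

lemma tsum {F : ℕ → ℝ → ℂ} {N : ℕ → ℝ} (h : ∀ i, TRep (F i) (N i)) (hN : Summable N)
    {G : ℝ → ℂ} (hG : ∀ x, HasSum (fun n => F n x) (G x)) : TRep G (∑' n, N n) := by
  choose ι i c w h1 h2 h3 using h
  have hi : ∀ n, Countable (ι n) := i
  have hs1 : Summable fun n => ∑' i, ‖c n i‖ :=
    Summable.of_nonneg_of_le (fun n => tsum_nonneg fun i => norm_nonneg _) h2 hN
  have hs : Summable fun z : (Σ n, ι n) => ‖c z.1 z.2‖ :=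
    (summable_sigma_of_nonneg (fun _ => norm_nonneg _)).2 ⟨h1, hs1⟩
  refine ⟨Σ n, ι n, inferInstance, fun z => c z.1 z.2, fun z => w z.1 z.2, hs, ?_, fun x => ?_⟩
  · rw [hs.tsum_sigma]
    exact hs1.tsum_le_tsum h2 hN
  · have hs2 : Summable fun z : (Σ n, ι n) => c z.1 z.2 * ew (w z.1 z.2) x :=
      (summ hs x).of_norm
    have h4 := hs2.hasSum.sigma (fun n => h3 n x)
    have h5 := h4.unique (hG x)
    rw [← h5]
    exact hs2.hasSum

end TRep

lemma mean_ew (a : ℝ) :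
    Tendsto (fun T : ℝ => ((T : ℂ))⁻¹ * ∫ x in (0:ℝ)..T, ew a x) atTop
      (𝓝 (if a = 0 then 1 else 0)) := by
  by_cases ha : a = 0
  · subst ha
    simp only [if_true, ew_zero]
    refine tendsto_const_nhds.congr' ?_
    filter_upwards [eventually_gt_atTop 0] with T hT
    have : (T : ℂ) ≠ 0 := by exact_mod_cast hT.ne'
    simp [this]
  · simp only [ha, if_false]
    have hc : (2 * Real.pi * I * a : ℂ) ≠ 0 := by
      simp [ha, Real.pi_ne_zero]
    rw [tendsto_zero_iff_norm_tendsto_zero]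
    have hlim : Tendsto (fun T : ℝ => T⁻¹ * (2 / ‖(2 * Real.pi * I * a : ℂ)‖)) atTop (𝓝 0) := by
      simpa using tendsto_inv_atTop_zero.mul_const (2 / ‖(2 * Real.pi * I * a : ℂ)‖)
    refine squeeze_zero' (Eventually.of_forall fun _ => norm_nonneg _) ?_ hlim
    filter_upwards [eventually_gt_atTop 0] with T hT
    rw [norm_mul, norm_inv, Complex.norm_real, Real.norm_of_nonneg hT.le]
    gcongr
    have h1 : ∀ x : ℝ, ew a x = Complex.exp ((2 * Real.pi * I * a) * x) := by
      intro x; unfold ew; congr 1; push_cast; ring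
    simp only [h1]
    rw [integral_exp_mul_complex hc, norm_div]
    gcongr
    rw [← h1, ← h1]
    refine (norm_sub_le _ _).trans ?_
    rw [norm_ew, norm_ew]; norm_num

lemma coef_le (Γ : Finset ℝ) (b : ℝ → ℂ) (M : ℝ)
    (hM : ∀ x, ‖∑ γ ∈ Γ, b γ * ew γ x‖ ≤ M) (γ₀ : ℝ) (h₀ : γ₀ ∈ Γ) : ‖b γ₀‖ ≤ M := by
  have hlim : Tendsto (fun T : ℝ => ((T : ℂ))⁻¹ * ∫ x in (0:ℝ)..T,
      (∑ γ ∈ Γ, b γ * ew γ x) * ew (-γ₀) x) atTop (𝓝 (b γ₀)) := by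
    have h1 : ∀ T : ℝ, ((T : ℂ))⁻¹ * ∫ x in (0:ℝ)..T, (∑ γ ∈ Γ, b γ * ew γ x) * ew (-γ₀) x
        = ∑ γ ∈ Γ, b γ * (((T : ℂ))⁻¹ * ∫ x in (0:ℝ)..T, ew (γ - γ₀) x) := by
      intro T
      have : ∀ x, (∑ γ ∈ Γ, b γ * ew γ x) * ew (-γ₀) x = ∑ γ ∈ Γ, b γ * ew (γ - γ₀) x := by
        intro x
        rw [Finset.sum_mul]
        refine Finset.sum_congr rfl fun γ _ => ?_
        rw [sub_eq_add_neg, ew_add]; ring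
      simp only [this]
      rw [intervalIntegral.integral_finsetSum]
      · rw [Finset.mul_sum]
        refine Finset.sum_congr rfl fun γ _ => ?_
        rw [intervalIntegral.integral_const_mul]; ring
      · intro γ _
        exact ((continuous_ew _).const_mul _ |>.intervalIntegrable _ _)
    simp only [h1]
    have h2 : b γ₀ = ∑ γ ∈ Γ, b γ * (if γ - γ₀ = 0 then 1 else 0) := by
      rw [Finset.sum_eq_single γ₀]
      · simp
      · intro γ _ hne
        simp [sub_eq_zero, hne]
      · intro h; exact absurd h₀ h
    rw [h2]
    exact tendsto_finsetSum _ fun γ _ => (mean_ew (γ - γ₀)).const_mul _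
  refine le_of_tendsto hlim.norm ?_
  filter_upwards [eventually_gt_atTop 0] with T hT
  rw [norm_mul, norm_inv, Complex.norm_real, Real.norm_of_nonneg hT.le]
  have h3 : ‖∫ x in (0:ℝ)..T, (∑ γ ∈ Γ, b γ * ew γ x) * ew (-γ₀) x‖ ≤ M * |T - 0| := by
    refine intervalIntegral.norm_integral_le_of_norm_le_const fun x _ => ?_
    rw [norm_mul, norm_ew, mul_one]; exact hM x
  rw [sub_zero, abs_of_pos hT] at h3
  calc T⁻¹ * _ ≤ T⁻¹ * (M * T) := by gcongr
    _ = M := by field_simp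

lemma TRep.single (b : ℂ) (w : ℝ) : TRep (fun x => b * ew w x) ‖b‖ := by
  refine ⟨Unit, inferInstance, fun _ => b, fun _ => w, Summable.of_finite, by simp, fun x => ?_⟩
  simp

lemma card_piAntidiag_le {ι : Type*} [DecidableEq ι] (S : Finset ι) (n : ℕ) :
    (S.piAntidiag n).card ≤ (S.card + n) ^ S.card := by
  have h : (S.piAntidiag n).card ≤ (Fintype.piFinset fun _ : S => Finset.range (n + 1)).card := by
    refine Finset.card_le_card_of_injOn (fun α i => α i) ?_ ?_
    · intro α hα
      simp only [Finset.mem_coe, Finset.mem_piAntidiag,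
        Fintype.mem_piFinset, Finset.mem_range] at hα ⊢
      intro i
      have := Finset.single_le_sum (f := α) (fun _ _ => Nat.zero_le _) i.2
      have h2 : ∑ x ∈ S, α x = n := hα.1
      omega
    · intro α hα β hβ hab
      simp only [Finset.mem_coe, Finset.mem_piAntidiag] at hα hβ
      funext i
      by_cases hi : i ∈ S
      · exact congrFun hab ⟨i, hi⟩
      · have h1 : α i = 0 := by by_contra h; exact hi (hα.2 i h)
        have h2 : β i = 0 := by by_contra h; exact hi (hβ.2 i h)
        rw [h1, h2]
  refine h.trans ?_
  rw [Fintype.card_piFinset]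
  simp only [Finset.card_range, Finset.prod_const, Finset.card_univ, Fintype.card_coe]
  rcases Nat.eq_zero_or_pos S.card with h | h
  · simp [h]
  · gcongr ?_ ^ S.card
    omega

lemma TRep.polyPow {ι : Type*} (S : Finset ι) (c : ι → ℂ) (w : ι → ℝ) (M : ℝ)
    (hM : ∀ x, ‖∑ i ∈ S, c i * ew (w i) x‖ ≤ M) (k : ℕ) :
    TRep (fun x => (∑ i ∈ S, c i * ew (w i) x) ^ k) (((S.card : ℝ) + k) ^ S.card * M ^ k) := by
  classical
  have hM0 : 0 ≤ M := (norm_nonneg _).trans (hM 0)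
  set lam : (ι → ℕ) → ℝ := fun α => ∑ i ∈ S, (α i : ℝ) * w i with hlam
  set Cf : (ι → ℕ) → ℂ := fun α => (Nat.multinomial S α : ℂ) * ∏ i ∈ S, c i ^ α i with hCf
  set Γ := (S.piAntidiag k).image lam with hΓ
  set b : ℝ → ℂ := fun γ => ∑ α ∈ S.piAntidiag k with lam α = γ, Cf α with hb
  have hexp : ∀ x, (∑ i ∈ S, c i * ew (w i) x) ^ k = ∑ γ ∈ Γ, b γ * ew γ x := by
    intro x
    rw [Finset.sum_pow_eq_sum_piAntidiag]
    have h1 : ∀ α ∈ S.piAntidiag k, (Nat.multinomial S α : ℂ) * ∏ i ∈ S, (c i * ew (w i) x) ^ α i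
        = Cf α * ew (lam α) x := by
      intro α _
      simp only [hCf, hlam, ew_sum, ew_nsmul, mul_pow, Finset.prod_mul_distrib]
      ring
    rw [Finset.sum_congr rfl h1,
      ← Finset.sum_fiberwise_of_maps_to (t := Γ) (g := lam)
        (fun α hα => Finset.mem_image_of_mem _ hα)]
    refine Finset.sum_congr rfl fun γ _ => ?_
    rw [hb, Finset.sum_mul]
    refine Finset.sum_congr rfl fun α hα => ?_
    rw [(Finset.mem_filter.1 hα).2]
  have hbd : ∀ γ ∈ Γ, ‖b γ‖ ≤ M ^ k := by
    intro γ hγ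
    refine coef_le Γ b (M ^ k) (fun x => ?_) γ hγ
    rw [← hexp, norm_pow]
    exact pow_le_pow_left₀ (norm_nonneg _) (hM x) k
  have h1 : TRep (fun x => ∑ γ ∈ Γ, b γ * ew γ x) (∑ γ ∈ Γ, M ^ k) :=
    TRep.sum Γ fun γ hγ => (TRep.single (b γ) γ).mono (hbd γ hγ)
  simp only [hexp]
  refine h1.mono ?_
  rw [Finset.sum_const, nsmul_eq_mul]
  gcongr
  have h2 : Γ.card ≤ (S.card + k) ^ S.card :=
    Finset.card_image_le.trans (card_piAntidiag_le S k)
  exact_mod_cast h2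

lemma poly_geom (d : ℕ) {r r' : ℝ} (hr : 0 ≤ r) (hrr : r < r') :
    ∃ C : ℝ, 0 ≤ C ∧ ∀ k : ℕ, ((d : ℝ) + k) ^ d * r ^ k ≤ C * r' ^ k := by
  have hr' : 0 < r' := hr.trans_lt hrr
  have hq : r / r' < 1 := by rw [div_lt_one hr']; exact hrr
  have hq0 : 0 ≤ r / r' := by positivity
  obtain ⟨s, hs1, hs2⟩ := exists_between (max_lt hq zero_lt_one)
  have hs0 : 0 < s := lt_of_le_of_lt (le_max_right _ _) hs1
  have hqs : r / r' ≤ s := (le_max_left _ _).trans hs1.le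
  have ht := tendsto_pow_const_mul_const_pow_of_lt_one d hs0.le hs2
  obtain ⟨B, hB⟩ := ht.bddAbove_range
  have hB' : ∀ n : ℕ, (n : ℝ) ^ d * s ^ n ≤ B := fun n => hB ⟨n, rfl⟩
  have hB0 : 0 ≤ B := le_trans (by positivity) (hB' 0)
  refine ⟨B / s ^ d, by positivity, fun k => ?_⟩
  have h1 := hB' (d + k)
  have h2 : r ^ k ≤ s ^ k * r' ^ k := by
    rw [← mul_pow]
    apply pow_le_pow_left₀ hr
    rwa [div_le_iff₀ hr'] at hqs
  calc ((d : ℝ) + k) ^ d * r ^ k ≤ ((d : ℝ) + k) ^ d * (s ^ k * r' ^ k) := by gcongr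
    _ = (((d + k : ℕ) : ℝ) ^ d * s ^ (d + k)) / s ^ d * r' ^ k := by
      push_cast; rw [pow_add]; field_simp
    _ ≤ B / s ^ d * r' ^ k := by gcongr

lemma TRep.geom {h : ℝ → ℂ} {N ρ : ℝ} (hh : TRep h N) (hρ : ∀ x, ‖h x‖ ≤ ρ) (hρ1 : ρ < 1) :
    ∃ C r : ℝ, 0 ≤ C ∧ 0 ≤ r ∧ r < 1 ∧ ∀ n : ℕ, TRep (fun x => h x ^ n) (C * r ^ n) := by
  classical
  have hρ0 : 0 ≤ ρ := (norm_nonneg _).trans (hρ 0)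
  obtain ⟨ι, i, c, w, h1, h2, h3⟩ := hh
  set ε : ℝ := (1 - ρ) / 8 with hε
  have hε0 : 0 < ε := by rw [hε]; linarith
  obtain ⟨S, hS⟩ := ((tendsto_order.1 (tendsto_tsum_compl_atTop_zero fun i => ‖c i‖)).2 ε hε0).exists
  set P : ℝ → ℂ := fun x => ∑ i ∈ S, c i * ew (w i) x with hP
  set t : ℝ → ℂ := fun x => h x - P x with ht
  have htR : TRep t ε := by
    refine ⟨{ i // i ∉ S }, inferInstance, fun i => c i, fun i => w i, h1.subtype _, hS.le,
      fun x => ?_⟩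
    have := (Finset.hasSum_compl_iff S (f := fun i => c i * ew (w i) x) (a := t x)).2
      (by simpa [ht, hP] using h3 x)
    exact this
  have hPb : ∀ x, ‖P x‖ ≤ ρ + ε := by
    intro x
    have : P x = h x - t x := by simp [ht]
    rw [this]
    exact (norm_sub_le _ _).trans (add_le_add (hρ x) (htR.bound x))
  obtain ⟨C, hC0, hC⟩ := poly_geom S.card (r := ρ + ε) (r' := ρ + 2 * ε) (by linarith) (by linarith)
  have hPk : ∀ k, TRep (fun x => P x ^ k) (C * (ρ + 2 * ε) ^ k) := fun k =>
    (TRep.polyPow S c w (ρ + ε) hPb k).mono (hC k)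
  refine ⟨C, ρ + 2 * ε + ε, hC0, by positivity, by linarith, fun n => ?_⟩
  have he : (fun x => h x ^ n) = fun x => ∑ m ∈ Finset.range (n + 1),
      P x ^ m * t x ^ (n - m) * (n.choose m : ℂ) := by
    funext x
    rw [← add_pow]
    simp [ht]
  rw [he]
  have := TRep.sum (Finset.range (n + 1)) (F := fun m x => P x ^ m * t x ^ (n - m) * (n.choose m : ℂ))
    (N := fun m => C * (ρ + 2 * ε) ^ m * ε ^ (n - m) * ‖(n.choose m : ℂ)‖)
    (fun m _ => ((hPk m).mul (htR.pow (n - m))).mul (TRep.const _))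
  refine this.mono (le_of_eq ?_)
  rw [add_pow, Finset.mul_sum]
  refine Finset.sum_congr rfl fun m _ => ?_
  simp
  ring

/-- Wiener's lemma for absolutely convergent generalized trigonometric series. -/
lemma TRep.inv {F : ℝ → ℂ} {N c : ℝ} (hF : TRep F N) (hc : 0 < c) (hFc : ∀ x, c ≤ ‖F x‖) :
    ∃ N', TRep (fun x => (F x)⁻¹) N' := by
  have hN : 0 < N := lt_of_lt_of_le hc ((hFc 0).trans (hF.bound 0))
  set h : ℝ → ℂ := fun x => 1 + (-(N ^ 2 : ℝ)⁻¹ : ℝ) * (F x * (starRingEnd ℂ) (F x)) with hh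
  have hR : TRep h _ := (TRep.const 1).add ((TRep.const _).mul (hF.mul hF.conj))
  have hval : ∀ x, h x = ((1 - ‖F x‖ ^ 2 / N ^ 2 : ℝ) : ℂ) := by
    intro x
    simp only [hh]
    rw [Complex.mul_conj, Complex.normSq_eq_norm_sq]
    push_cast
    ring
  have hb : ∀ x, ‖h x‖ ≤ 1 - c ^ 2 / N ^ 2 := by
    intro x
    have h1 : ‖F x‖ ^ 2 / N ^ 2 ≤ 1 := by
      rw [div_le_one (by positivity)]
      exact pow_le_pow_left₀ (norm_nonneg _) (hF.bound x) 2
    have h2 : c ^ 2 / N ^ 2 ≤ ‖F x‖ ^ 2 / N ^ 2 := by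
      gcongr; exact hFc x
    rw [hval, Complex.norm_real, Real.norm_of_nonneg (by linarith)]
    linarith
  have hlt : 1 - c ^ 2 / N ^ 2 < 1 := by
    have : 0 < c ^ 2 / N ^ 2 := by positivity
    linarith
  obtain ⟨C, r, hC, hr0, hr1, hg⟩ := hR.geom hb hlt
  have hs : Summable fun n : ℕ => C * r ^ n := (summable_geometric_of_lt_one hr0 hr1).mul_left C
  have hinv := TRep.tsum hg hs (G := fun x => (1 - h x)⁻¹)
    (fun x => hasSum_geometric_of_norm_lt_one ((hb x).trans_lt hlt))
  have k := (hF.conj.mul (TRep.const ((N ^ 2 : ℝ)⁻¹ : ℝ))).mul hinv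
  have he : (fun x => (F x)⁻¹) = fun x => (starRingEnd ℂ) (F x) * (((N ^ 2 : ℝ)⁻¹ : ℝ) : ℂ) * (1 - h x)⁻¹ := by
    funext x
    have hx : F x ≠ 0 := norm_pos_iff.1 (hc.trans_le (hFc x))
    have hx' : (starRingEnd ℂ) (F x) ≠ 0 := by simpa using hx
    have hN' : (N : ℂ) ≠ 0 := by exact_mod_cast hN.ne'
    have h1 : 1 - h x = ((N : ℂ) ^ 2)⁻¹ * (F x * (starRingEnd ℂ) (F x)) := by
      simp only [hh]
      push_cast
      ring
    rw [h1]
    push_cast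
    field_simp
  rw [he]
  exact ⟨_, k⟩

lemma norm_dterm (w : ℝ) (z : ℂ) :
    ‖Complex.exp (2 * Real.pi * Complex.I * z * (w : ℂ))‖ = Real.exp (-(2 * Real.pi * w * z.im)) := by
  rw [Complex.norm_exp]
  congr 1
  simp
  ring

lemma norm_dterm_le {w B K : ℝ} (hw : |w| ≤ B) {z : ℂ} (hz : |z.im| ≤ K) :
    ‖Complex.exp (2 * Real.pi * Complex.I * z * (w : ℂ))‖ ≤ Real.exp (2 * Real.pi * B * K) := by
  rw [norm_dterm]
  apply Real.exp_le_exp.2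
  have hB : 0 ≤ B := (abs_nonneg _).trans hw
  have h1 : -(w * z.im) ≤ B * K := by
    refine (neg_le_abs _).trans ?_
    rw [abs_mul]
    exact mul_le_mul hw hz (abs_nonneg _) hB
  have := Real.pi_pos
  nlinarith

section ds
variable {q : ℕ → ℂ} {ω : ℕ → ℝ} {B : ℝ}

lemma dser_summable (hq : Summable fun i => ‖q i‖) (hB : ∀ i, |ω i| ≤ B) (z : ℂ) :
    Summable fun i => ‖q i * Complex.exp (2 * Real.pi * Complex.I * z * (ω i : ℂ))‖ := by
  refine Summable.of_nonneg_of_le (fun _ => norm_nonneg _) (fun i => ?_)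
    (hq.mul_right (Real.exp (2 * Real.pi * B * |z.im|)))
  rw [norm_mul]
  gcongr
  exact norm_dterm_le (hB i) le_rfl

lemma dser_bound (hq : Summable fun i => ‖q i‖) (hB : ∀ i, |ω i| ≤ B) {K : ℝ} {z : ℂ}
    (hz : |z.im| ≤ K) :
    ‖dserC q ω z‖ ≤ (∑' i, ‖q i‖) * Real.exp (2 * Real.pi * B * K) := by
  unfold dserC
  refine (norm_tsum_le_tsum_norm (dser_summable hq hB z)).trans ?_
  rw [← tsum_mul_right]
  refine (dser_summable hq hB z).tsum_le_tsum (fun i => ?_) (hq.mul_right _)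
  rw [norm_mul]
  gcongr
  exact norm_dterm_le (hB i) hz

lemma dser_diff_aux (hq : Summable fun i => ‖q i‖) (hB : ∀ i, |ω i| ≤ B) (z : ℂ) :
    DifferentiableAt ℂ (dserC q ω) z ∧
      deriv (dserC q ω) z = dserC (fun i => q i * (2 * Real.pi * I * ω i)) ω z := by
  set U : Set ℂ := {w : ℂ | |w.im| < |z.im| + 1} with hU
  have hUo : IsOpen U := isOpen_lt (by fun_prop) continuous_const
  have hzU : z ∈ U := by simp [hU]
  set F : ℕ → ℂ → ℂ := fun i w => q i * Complex.exp (2 * Real.pi * Complex.I * w * (ω i : ℂ)) with hF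
  have hu := hq.mul_right (Real.exp (2 * Real.pi * B * (|z.im| + 1)))
  have hFd : ∀ i, DifferentiableOn ℂ (F i) U := fun i => by
    apply Differentiable.differentiableOn
    simp only [hF]; fun_prop
  have hle : ∀ i w, w ∈ U → ‖F i w‖ ≤ ‖q i‖ * Real.exp (2 * Real.pi * B * (|z.im| + 1)) := by
    intro i w hw
    simp only [hF]
    rw [norm_mul]
    gcongr
    exact norm_dterm_le (hB i) (le_of_lt hw)
  constructor
  · exact (differentiableOn_tsum_of_summable_norm hu hFd hUo hle).differentiableAt
      (hUo.mem_nhds hzU)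
  · have h := hasSum_deriv_of_summable_norm hu hFd hUo hle hzU
    have h2 : deriv (dserC q ω) z = ∑' i, deriv (F i) z := h.tsum_eq.symm
    rw [h2]
    unfold dserC
    refine tsum_congr fun i => ?_
    have h3 : HasDerivAt (F i) (q i * (Complex.exp (2 * Real.pi * Complex.I * z * (ω i : ℂ)) *
        ((2 * Real.pi * Complex.I * 1) * ω i))) z := by
      exact ((((hasDerivAt_id z).const_mul _).mul_const _).cexp).const_mul _
    rw [h3.deriv]
    ring

lemma dser_diff (hq : Summable fun i => ‖q i‖) (hB : ∀ i, |ω i| ≤ B) :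
    Differentiable ℂ (dserC q ω) := fun z => (dser_diff_aux hq hB z).1

lemma dser_summable_deriv (hq : Summable fun i => ‖q i‖) (hB : ∀ i, |ω i| ≤ B) :
    Summable fun i => ‖q i * (2 * Real.pi * I * ω i)‖ := by
  refine Summable.of_nonneg_of_le (fun _ => norm_nonneg _) (fun i => ?_)
    (hq.mul_right (2 * Real.pi * B))
  rw [norm_mul]
  gcongr
  simp [abs_of_pos Real.pi_pos]
  have := Real.pi_pos
  gcongr
  exact hB i

lemma dser_TRep (hq : Summable fun i => ‖q i‖) (hB : ∀ i, |ω i| ≤ B) (s : ℝ) :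
    ∃ N, TRep (fun x : ℝ => dserC q ω (x + s * I)) N := by
  have hE : ∀ i (x : ℝ), Complex.exp (2 * Real.pi * Complex.I * ((x : ℂ) + s * I) * (ω i : ℂ))
      = Complex.exp (2 * Real.pi * Complex.I * ((s : ℂ) * I) * (ω i : ℂ)) * ew (ω i) x := by
    intro i x
    unfold ew
    rw [← Complex.exp_add]
    congr 1
    push_cast
    ring
  refine ⟨_, ℕ, inferInstance,
    fun i => q i * Complex.exp (2 * Real.pi * Complex.I * ((s : ℂ) * I) * (ω i : ℂ)), ω,
    dser_summable hq hB _, le_rfl, fun x => ?_⟩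
  have := (dser_summable hq hB ((x : ℂ) + s * I)).of_norm.hasSum
  have h2 : dserC q ω ((x : ℂ) + s * I) =
    ∑' i, q i * Complex.exp (2 * Real.pi * Complex.I * ((x : ℂ) + s * I) * (ω i : ℂ)) := rfl
  beta_reduce
  rw [h2]
  have h3 : (fun i => q i * Complex.exp (2 * Real.pi * Complex.I * ((s : ℂ) * I) * (ω i : ℂ)) *
      ew (ω i) x) = fun i => q i * Complex.exp (2 * Real.pi * Complex.I * ((x : ℂ) + s * I) * (ω i : ℂ)) := by
    funext i
    rw [hE, mul_assoc]
  rw [h3]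
  exact this

/-- logarithmic derivative on a horizontal line where `Q` is bounded below -/
lemma logderiv_TRep (hq : Summable fun i => ‖q i‖) (hB : ∀ i, |ω i| ≤ B) (s c : ℝ) (hc : 0 < c)
    (hlow : ∀ x : ℝ, c ≤ ‖dserC q ω (x + s * I)‖) :
    ∃ N, TRep (fun x : ℝ => deriv (dserC q ω) (x + s * I) / dserC q ω (x + s * I)) N := by
  obtain ⟨N, hN⟩ := dser_TRep hq hB s
  obtain ⟨N', hN'⟩ := hN.inv hc hlow
  obtain ⟨N'', hN''⟩ := dser_TRep (dser_summable_deriv hq hB) hB s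
  have he : (fun x : ℝ => deriv (dserC q ω) (x + s * I) / dserC q ω (x + s * I)) = fun x : ℝ =>
      dserC (fun i => q i * (2 * Real.pi * I * ω i)) ω (x + s * I) * (dserC q ω (x + s * I))⁻¹ := by
    funext x
    rw [(dser_diff_aux hq hB _).2, div_eq_mul_inv]
  rw [he]
  exact ⟨_, hN''.mul hN'⟩

end ds

section mm
variable {q : ℕ → ℂ} {ω : ℕ → ℝ} {B : ℝ}

lemma dser_shift (q : ℕ → ℂ) (ω : ℕ → ℝ) (z : ℂ) (x : ℝ) :
    dserC q ω (z + x) = dserC (fun i => q i * ew (ω i) x) ω z := by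
  unfold dserC
  refine tsum_congr fun i => ?_
  unfold ew
  beta_reduce
  rw [mul_assoc (q i), ← Complex.exp_add]
  congr 2
  push_cast
  ring

lemma dser_sub {a b : ℕ → ℂ} (ha : Summable fun i => ‖a i‖) (hb : Summable fun i => ‖b i‖)
    (hB : ∀ i, |ω i| ≤ B) (z : ℂ) :
    dserC a ω z - dserC b ω z = dserC (fun i => a i - b i) ω z := by
  unfold dserC
  rw [← (dser_summable ha hB z).of_norm.tsum_sub (dser_summable hb hB z).of_norm]
  refine tsum_congr fun i => ?_
  ring

lemma minmod (hq : Summable fun i => ‖q i‖) (hB : ∀ i, |ω i| ≤ B)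
    (hne : ∃ z : ℂ, dserC q ω z ≠ 0) {K δ : ℝ} (hδ : 0 < δ) :
    ∃ c : ℝ, 0 < c ∧ ∀ z : ℂ, |z.im| ≤ K → (∀ w, dist w z < δ → dserC q ω w ≠ 0) →
      c ≤ ‖dserC q ω z‖ := by
  by_contra! H
  have hpos : ∀ n : ℕ, (0:ℝ) < 1 / ((n : ℝ) + 1) := fun n => by positivity
  choose z hzK hz0 hzs using fun n : ℕ => H _ (hpos n)
  have hcomp : IsCompact ((Set.univ.pi fun _ : ℕ => closedBall (0:ℂ) 1) ×ˢ Set.Icc (-K) K) :=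
    (isCompact_univ_pi fun _ => isCompact_closedBall 0 1).prod isCompact_Icc
  obtain ⟨⟨χ, y⟩, hχy, φ, hφ, hlim⟩ := hcomp.tendsto_subseq
    (x := fun n => ((fun i => ew (ω i) (z n).re : ℕ → ℂ), (z n).im)) (fun n => by
      simp only [Set.mem_prod, Set.mem_pi, Set.mem_univ, mem_closedBall,
        dist_zero_right, norm_ew, le_refl, implies_true, true_and]
      exact abs_le.1 (hzK n))
  have hχ : ∀ i, ‖χ i‖ ≤ 1 := by
    intro i
    have := hχy.1 i (Set.mem_univ i)
    simpa using this
  have hyK : |y| ≤ K := abs_le.2 hχy.2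
  rw [Prod.tendsto_iff] at hlim
  obtain ⟨hl1, hl2⟩ := hlim
  rw [tendsto_pi_nhds] at hl1
  simp only [Function.comp_def] at hl1 hl2
  set x : ℕ → ℝ := fun n => (z (φ n)).re with hx
  have hqχ : Summable fun i => ‖q i * χ i‖ := by
    refine Summable.of_nonneg_of_le (fun _ => norm_nonneg _) (fun i => ?_) hq
    rw [norm_mul]
    exact mul_le_of_le_one_right (norm_nonneg _) (hχ i)
  have hqx : ∀ n, Summable fun i => ‖q i * ew (ω i) (x n)‖ := by
    intro n
    simpa [norm_ew] using hq
  set E : ℝ := Real.exp (2 * Real.pi * B * (K + 1)) with hE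
  set D : ℕ → ℝ := fun n => (∑' i, ‖q i * ew (ω i) (x n) - q i * χ i‖) * E with hD
  have hD0 : Tendsto D atTop (𝓝 0) := by
    have : Tendsto (fun n => ∑' i, ‖q i * ew (ω i) (x n) - q i * χ i‖) atTop
        (𝓝 (∑' i : ℕ, (0:ℝ))) := by
      refine tendsto_tsum_of_dominated_convergence (hq.mul_right 2) (fun i => ?_)
        (Eventually.of_forall fun n i => ?_)
      · have h1 := ((hl1 i).const_mul (q i)).sub_const (q i * χ i)
        simpa using h1.norm
      · rw [norm_norm, ← mul_sub, norm_mul]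
        gcongr
        refine (norm_sub_le _ _).trans ?_
        rw [norm_ew]
        linarith [hχ i]
    simpa using this.mul_const E
  set Qc := dserC (fun i => q i * χ i) ω with hQc
  have happ : ∀ n (w : ℂ), |w.im| ≤ K + 1 → ‖dserC q ω (w + x n) - Qc w‖ ≤ D n := by
    intro n w hw
    rw [dser_shift, dser_sub (hqx n) hqχ hB]
    refine dser_bound (Summable.of_nonneg_of_le (fun _ => norm_nonneg _)
      (fun i => norm_sub_le _ _) ((hqx n).add hqχ)) hB hw
  have hQcd : Differentiable ℂ Qc := dser_diff hqχ hB
  have hQd : Differentiable ℂ (dserC q ω) := dser_diff hq hB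
  -- limit function not identically zero
  have hQcne : ∃ w, Qc w ≠ 0 := by
    by_contra! h0
    have hK0 : 0 ≤ K := (abs_nonneg _).trans hyK
    have hr0 : ∀ t : ℝ, dserC q ω t = 0 := by
      intro t
      have h1 : ∀ n, ‖dserC q ω t‖ ≤ D n := by
        intro n
        have := happ n ((t - x n : ℝ) : ℂ) (by simp; linarith)
        rw [h0, sub_zero] at this
        simpa using this
      have h2 : ‖dserC q ω t‖ ≤ 0 := ge_of_tendsto' hD0 h1
      simpa using h2
    obtain ⟨w, hw⟩ := hne
    have hA : AnalyticOnNhd ℂ (dserC q ω) Set.univ := fun z _ => hQd.analyticAt z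
    have hfreq : ∃ᶠ w in 𝓝[≠] (0:ℂ), dserC q ω w = 0 := by
      have ht : Tendsto (fun n : ℕ => (((1 / ((n:ℝ) + 1) : ℝ)) : ℂ)) atTop (𝓝[≠] (0:ℂ)) := by
        rw [tendsto_nhdsWithin_iff]
        constructor
        · have := (Complex.continuous_ofReal.tendsto 0).comp (tendsto_one_div_add_atTop_nhds_zero_nat (𝕜 := ℝ))
          simpa [Function.comp_def] using this
        · refine Eventually.of_forall fun n => ?_
          have := (hpos n).ne'
          simpa using (by exact_mod_cast this : (((1 / ((n:ℝ) + 1) : ℝ)) : ℂ) ≠ 0)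
      exact ht.frequently (Frequently.of_forall fun n => hr0 _)
    have := hA.eqOn_zero_of_preconnected_of_frequently_eq_zero isPreconnected_univ
      (Set.mem_univ 0) hfreq (Set.mem_univ w)
    exact hw this
  -- zero of the limit
  have hzero : Qc (y * I) = 0 := by
    have h1 : Tendsto (fun n => ‖Qc ((z (φ n)).im * I)‖) atTop (𝓝 ‖Qc (y * I)‖) := by
      refine (hQcd.continuous.tendsto _).norm.comp ?_
      exact ((Complex.continuous_ofReal.tendsto y).comp hl2).mul_const I
    have h2 : ∀ n, ‖Qc ((z (φ n)).im * I)‖ ≤ D n + 1 / (((φ n : ℕ) : ℝ) + 1) := by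
      intro n
      have h3 := happ n ((z (φ n)).im * I) (by simp; linarith [hzK (φ n)])
      have h4 : ((z (φ n)).im * I + x n : ℂ) = z (φ n) := by
        rw [add_comm]; exact Complex.re_add_im _
      rw [h4] at h3
      have h5 := hzs (φ n)
      have h6 := norm_sub_norm_le (Qc ((z (φ n)).im * I)) (dserC q ω (z (φ n)))
      rw [norm_sub_rev] at h6
      linarith
    have h3 : Tendsto (fun n => D n + 1 / (((φ n : ℕ) : ℝ) + 1)) atTop (𝓝 (0 + 0)) :=
      hD0.add ((tendsto_one_div_add_atTop_nhds_zero_nat (𝕜 := ℝ)).comp hφ.tendsto_atTop)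
    have h4 := le_of_tendsto_of_tendsto' h1 h3 h2
    simpa using h4
  -- isolated zero: a good circle
  have hev : ∀ᶠ w in 𝓝[≠] (y * I : ℂ), Qc w ≠ 0 := by
    rcases (hQcd.analyticAt (y * I)).eventually_eq_zero_or_eventually_ne_zero with h | h
    · exfalso
      obtain ⟨w, hw⟩ := hQcne
      have hA : AnalyticOnNhd ℂ Qc Set.univ := fun z _ => hQcd.analyticAt z
      exact hw (hA.eqOn_zero_of_preconnected_of_eventuallyEq_zero isPreconnected_univ
        (Set.mem_univ _) h (Set.mem_univ w))
    · exact h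
  rw [eventually_nhdsWithin_iff, Metric.eventually_nhds_iff] at hev
  obtain ⟨r0, hr0, hr⟩ := hev
  set r : ℝ := min (r0 / 2) (min (δ / 2) 1) with hrdef
  have hrpos : 0 < r := by positivity
  have hr1 : r ≤ 1 := (min_le_right _ _).trans (min_le_right _ _)
  have hrδ : r ≤ δ / 2 := (min_le_right _ _).trans (min_le_left _ _)
  have hrr0 : r < r0 := (min_le_left _ _).trans_lt (by linarith)
  obtain ⟨w0, hw0, hmin⟩ := (isCompact_sphere (y * I : ℂ) r).exists_isMinOn
    (NormedSpace.sphere_nonempty.2 hrpos.le) (hQcd.continuous.norm.continuousOn)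
  set m := ‖Qc w0‖ with hm
  have hm0 : 0 < m := by
    rw [hm, norm_pos_iff]
    apply hr
    · rw [mem_sphere.1 hw0]; exact hrr0
    · intro h
      rw [Set.mem_singleton_iff] at h
      rw [h, mem_sphere, dist_self] at hw0
      exact hrpos.ne hw0
  have hmle : ∀ w ∈ sphere (y * I : ℂ) r, m ≤ ‖Qc w‖ := fun w hw => hmin hw
  -- choose n large
  have e1 : ∀ᶠ n in atTop, D n < m / 3 := (tendsto_order.1 hD0).2 _ (by positivity)
  have e2 : ∀ᶠ n in atTop, dist (z (φ n)).im y < δ / 2 := Metric.tendsto_nhds.1 hl2 _ (by positivity)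
  obtain ⟨n, hn1, hn2⟩ := (e1.and e2).exists
  have him : ∀ w ∈ closedBall (y * I : ℂ) r, |w.im| ≤ K + 1 := by
    intro w hw
    have h1 : |(w - y * I).im| ≤ r := (Complex.abs_im_le_norm _).trans (by simpa [dist_eq_norm] using hw)
    simp at h1
    have h2 : |w.im| ≤ |w.im - y| + |y| := by
      simpa using abs_add_le (w.im - y) y
    linarith
  have hnz : ∀ w ∈ closedBall (y * I : ℂ) r, dserC q ω (w + x n) ≠ 0 := by
    intro w hw
    apply hz0 (φ n)
    have h1 : dist (w + x n) (z (φ n)) ≤ dist w (y * I) + dist (z (φ n)).im y := by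
      have h4 : z (φ n) = ((z (φ n)).im * I + x n : ℂ) := by
        rw [add_comm]; exact (Complex.re_add_im _).symm
      conv_lhs => rw [h4]
      rw [dist_add_right]
      refine (dist_triangle _ (y * I : ℂ) _).trans ?_
      gcongr
      rw [dist_comm, dist_eq_norm, ← sub_mul, ← Complex.ofReal_sub, norm_mul, Complex.norm_I,
        mul_one, Complex.norm_real, dist_eq_norm]
    have h2 := mem_closedBall.1 hw
    linarith
  have hmax : ‖(dserC q ω (y * I + x n))⁻¹‖ ≤ (2 * m / 3)⁻¹ := by
    refine Complex.norm_le_of_forall_mem_frontier_norm_le (U := ball (y * I : ℂ) r) isBounded_ball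
      (f := fun w => (dserC q ω (w + x n))⁻¹) ?_ ?_ ?_
    · apply DifferentiableOn.diffContOnCl
      rw [closure_ball _ hrpos.ne']
      intro w hw
      exact ((hQd.comp (differentiable_id.add_const _)) w).inv (hnz w hw) |>.differentiableWithinAt
    · rw [frontier_ball _ hrpos.ne']
      intro w hw
      rw [norm_inv]
      apply inv_anti₀ (by positivity)
      have h1 := happ n w (him w (sphere_subset_closedBall hw))
      have h2 := hmle w hw
      have h3 := norm_sub_norm_le (Qc w) (dserC q ω (w + x n))
      rw [norm_sub_rev] at h3
      linarith
    · exact subset_closure (mem_ball_self hrpos)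
  have hc1 : ‖dserC q ω (y * I + x n)‖ < m / 3 := by
    have h1 := happ n (y * I) (by simp; linarith)
    rw [hzero, sub_zero] at h1
    linarith
  have hc0 : 0 < ‖dserC q ω (y * I + x n)‖ :=
    norm_pos_iff.2 (hnz _ (mem_closedBall_self hrpos.le))
  rw [norm_inv, inv_le_inv₀ hc0 (by positivity)] at hmax
  linarith

end mm

lemma factor {Q : ℂ → ℂ} (hQ : Differentiable ℂ Q) (m : ℝ → ℕ) (g : ℝ → ℂ → ℂ)
    (hg : ∀ x z, AnalyticAt ℂ (g x) z) (hg0 : ∀ x : ℝ, g x x ≠ 0)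
    (hfac : ∀ (x : ℝ) (z : ℂ), Q z = (z - x) ^ m x * g x z) (S : Finset ℝ) :
    ∃ G : ℂ → ℂ, Differentiable ℂ G ∧ (∀ z : ℂ, Q z = (∏ a ∈ S, (z - (a : ℂ)) ^ m a) * G z) ∧
      ∀ a ∈ S, G (a : ℂ) ≠ 0 := by
  classical
  induction S using Finset.induction_on with
  | empty => exact ⟨Q, hQ, by simp, by simp⟩
  | insert b S hb ih =>
    obtain ⟨G, hG, hQG, hGS⟩ := ih
    set p : ℂ → ℂ := fun z => ∏ a ∈ S, (z - (a : ℂ)) ^ m a with hp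
    have hpd : Differentiable ℂ p := by
      simp only [hp]; fun_prop
    have hpb : p b ≠ 0 := by
      simp only [hp]
      rw [Finset.prod_ne_zero_iff]
      intro a ha
      apply pow_ne_zero
      rw [sub_ne_zero]
      intro h
      have : b = a := by exact_mod_cast h
      exact hb (this ▸ ha)
    set G' : ℂ → ℂ := fun z => if p z ≠ 0 then g b z / p z else G z / (z - b) ^ m b with hG'
    have hne : ∀ z : ℂ, p z = 0 → z ≠ b := by
      intro z hz h; rw [h] at hz; exact hpb hz
    have key : ∀ z : ℂ, z ≠ b → G' z = G z / (z - b) ^ m b := by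
      intro z hz
      by_cases h : p z = 0
      · simp [hG', h]
      · simp only [hG', ne_eq, h, not_false_eq_true, if_true]
        have hzb : (z - b) ^ m b ≠ 0 := pow_ne_zero _ (sub_ne_zero.2 hz)
        rw [div_eq_div_iff h hzb]
        have h1 := hfac b z
        have h2 := hQG z
        rw [mul_comm, ← h1, h2, mul_comm]
    have hprod : ∀ z : ℂ, G z = (z - b) ^ m b * G' z := by
      intro z
      by_cases h : p z = 0
      · rw [key z (hne z h)]
        have hzb : (z - b) ^ m b ≠ 0 := pow_ne_zero _ (sub_ne_zero.2 (hne z h))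
        field_simp
      · simp only [hG', ne_eq, h, not_false_eq_true, if_true]
        have h1 := hfac b z
        have h2 : Q z = p z * G z := hQG z
        rw [mul_div_assoc', ← h1, h2]
        field_simp
    refine ⟨G', ?_, ?_, ?_⟩
    · intro z
      by_cases h : p z = 0
      · have hev : G' =ᶠ[𝓝 z] fun z => G z / (z - b) ^ m b := by
          filter_upwards [isOpen_ne.mem_nhds (hne z h)] with w hw using key w hw
        rw [hev.differentiableAt_iff]
        have hzb : (z - b) ^ m b ≠ 0 := pow_ne_zero _ (sub_ne_zero.2 (hne z h))
        exact (hG z).div (by fun_prop) hzb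
      · have hev : G' =ᶠ[𝓝 z] fun z => g b z / p z := by
          filter_upwards [(hpd.continuous.isOpen_preimage _ isOpen_ne).mem_nhds h] with w hw
          have hw' : p w ≠ 0 := hw
          simp [hG', hw']
        rw [hev.differentiableAt_iff]
        exact (hg b z).differentiableAt.div (hpd z) h
    · intro z
      rw [Finset.prod_insert hb, hQG z, hprod z]
      ring
    · intro a ha
      rcases Finset.mem_insert.1 ha with rfl | ha
      · simp only [hG', ne_eq, hpb, not_false_eq_true, if_true]
        exact div_ne_zero (hg0 a) hpb
      · intro h
        apply hGS a ha
        rw [hprod, h, mul_zero]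

section zeros
variable {q : ℕ → ℂ} {ω : ℕ → ℝ} {B : ℝ}

lemma count_zeros (hq : Summable fun i => ‖q i‖) (hB : ∀ i, |ω i| ≤ B)
    (hne : ∃ z : ℂ, dserC q ω z ≠ 0)
    (hreal : ∀ z : ℂ, dserC q ω z = 0 → z.im = 0)
    (m : ℝ → ℕ) (g : ℝ → ℂ → ℂ)
    (hg : ∀ x z, AnalyticAt ℂ (g x) z) (hg0 : ∀ x : ℝ, g x x ≠ 0)
    (hfac : ∀ (x : ℝ) (z : ℂ), dserC q ω z = (z - x) ^ m x * g x z) :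
    ∃ N : ℝ, 0 < N ∧ ∀ (x : ℝ) (S : Finset ℝ), (∀ a ∈ S, |a - x| ≤ 1) → ∑ a ∈ S, (m a : ℝ) ≤ N := by
  obtain ⟨c, hc, hmin⟩ := minmod hq hB hne (K := 1) (δ := 1) one_pos
  set M : ℝ := (∑' i, ‖q i‖) * Real.exp (2 * Real.pi * B * 11) with hM
  have hlow : ∀ x : ℝ, c ≤ ‖dserC q ω (x + I)‖ := by
    intro x
    apply hmin
    · simp
    · intro w hw h
      have h1 := hreal w h
      have h2 := Complex.abs_im_le_norm (w - (x + I))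
      rw [dist_eq_norm] at hw
      simp [h1] at h2
      linarith
  have hup : ∀ z : ℂ, |z.im| ≤ 11 → ‖dserC q ω z‖ ≤ M := fun z hz => dser_bound hq hB hz
  have hM0 : 0 < M := hc.trans_le ((hlow 0).trans (hup _ (by simp)))
  refine ⟨M / c, by positivity, fun x S hS => ?_⟩
  obtain ⟨G, hG, hQG, -⟩ := factor (dser_diff hq hB) m g hg hg0 hfac S
  set n : ℕ := ∑ a ∈ S, m a with hn
  set z0 : ℂ := x + I with hz0
  have hza : ∀ a ∈ S, ‖z0 - a‖ ≤ 2 := by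
    intro a ha
    have h1 : z0 - a = ((x - a : ℝ) : ℂ) + I := by rw [hz0]; push_cast; ring
    rw [h1]
    refine (norm_add_le _ _).trans ?_
    rw [Complex.norm_real, Complex.norm_I, Real.norm_eq_abs, abs_sub_comm]
    linarith [hS a ha]
  have hG1 : ∀ z ∈ sphere z0 10, ‖G z‖ ≤ M / 8 ^ n := by
    intro z hz
    have hz' : ‖z - z0‖ = 10 := by simpa [dist_eq_norm] using hz
    have h1 : (8:ℝ) ^ n ≤ ‖∏ a ∈ S, (z - (a : ℂ)) ^ m a‖ := by
      rw [norm_prod, hn, ← Finset.prod_pow_eq_pow_sum]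
      refine Finset.prod_le_prod (fun _ _ => by positivity) fun a ha => ?_
      rw [norm_pow]
      gcongr
      have h2 := norm_sub_norm_le (z - z0) (a - z0)
      have h3 := hza a ha
      rw [norm_sub_rev] at h3
      rw [sub_sub_sub_cancel_right] at h2
      linarith
    rw [le_div_iff₀ (by positivity)]
    have h4 : ‖dserC q ω z‖ ≤ M := by
      apply hup
      have h5 := Complex.abs_im_le_norm (z - z0)
      rw [hz'] at h5
      simp [hz0] at h5
      rw [abs_le] at h5 ⊢
      constructor <;> linarith
    rw [hQG, norm_mul] at h4
    nlinarith [norm_nonneg (G z)]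
  have hG2 : ‖G z0‖ ≤ M / 8 ^ n := by
    refine Complex.norm_le_of_forall_mem_frontier_norm_le (U := ball z0 10) isBounded_ball
      hG.diffContOnCl ?_ (subset_closure (mem_ball_self (by norm_num)))
    rw [frontier_ball _ (by norm_num)]
    exact hG1
  have hprod : ‖∏ a ∈ S, (z0 - (a : ℂ)) ^ m a‖ ≤ 2 ^ n := by
    rw [norm_prod, hn, ← Finset.prod_pow_eq_pow_sum]
    refine Finset.prod_le_prod (fun _ _ => by positivity) fun a ha => ?_
    rw [norm_pow]
    gcongr
    exact hza a ha
  have h1 : c ≤ 2 ^ n * (M / 8 ^ n) := by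
    refine (hlow x).trans ?_
    rw [← hz0, hQG, norm_mul]
    exact mul_le_mul hprod hG2 (norm_nonneg _) (by positivity)
  have h2 : (2:ℝ) ^ n * (M / 8 ^ n) = M / 4 ^ n := by
    rw [show (8:ℝ) = 2 * 4 by norm_num, mul_pow]
    field_simp
  rw [h2, le_div_iff₀ (by positivity)] at h1
  have h3 : (n : ℝ) ≤ 4 ^ n := by
    have : n < 4 ^ n := Nat.lt_pow_self (by norm_num)
    exact_mod_cast this.le
  rw [le_div_iff₀ hc]
  have h4 : ∑ a ∈ S, (m a : ℝ) = n := by rw [hn]; push_cast; rfl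
  rw [h4]
  nlinarith

end zeros

/-- weighted summability from a uniform local count -/
lemma count_summable (m : ℝ → ℕ) {N : ℝ} (hN : 0 < N)
    (hcount : ∀ (x : ℝ) (S : Finset ℝ), (∀ a ∈ S, |a - x| ≤ 1) → ∑ a ∈ S, (m a : ℝ) ≤ N) :
    Summable fun a : ℝ => (m a : ℝ) / (1 + a ^ 2) := by
  classical
  have hs : Summable fun n : ℤ => 3 * N * (1 / (1 + (n : ℝ) ^ 2)) := by
    apply Summable.mul_left
    have h1 : Summable fun n : ℤ => 1 / (n : ℝ) ^ 2 :=
      Real.summable_one_div_int_pow.2 one_lt_two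
    refine Summable.of_norm_bounded_eventually h1 ?_
    rw [Filter.eventually_cofinite]
    refine (Set.finite_singleton (0:ℤ)).subset ?_
    intro n hn
    by_contra h0
    apply hn
    have : (n : ℝ) ≠ 0 := by exact_mod_cast h0
    rw [Real.norm_of_nonneg (by positivity)]
    have : 0 < (n:ℝ) ^ 2 := by positivity
    gcongr
    linarith
  refine summable_of_sum_le (c := ∑' n : ℤ, 3 * N * (1 / (1 + (n : ℝ) ^ 2)))
    (fun a => by positivity) fun S => ?_
  rw [← Finset.sum_fiberwise_of_maps_to (t := S.image fun a => ⌊a⌋) (g := fun a => ⌊a⌋)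
    (fun a ha => Finset.mem_image_of_mem _ ha)]
  refine le_trans (Finset.sum_le_sum fun n hn => ?_) (hs.sum_le_tsum _ fun n _ => by positivity)
  calc ∑ a ∈ S with ⌊a⌋ = n, (m a : ℝ) / (1 + a ^ 2)
      ≤ ∑ a ∈ S with ⌊a⌋ = n, (m a : ℝ) * (3 / (1 + (n:ℝ) ^ 2)) := by
        refine Finset.sum_le_sum fun a ha => ?_
        have hfl := (Finset.mem_filter.1 ha).2
        have h1 := Int.floor_le a
        have h2 := Int.lt_floor_add_one a
        rw [hfl] at h1 h2
        rw [div_eq_mul_inv]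
        gcongr
        rw [inv_eq_one_div, div_le_div_iff₀ (by positivity) (by positivity)]
        nlinarith [sq_nonneg (a + (a - n)), sq_nonneg (a - 2 * (a-n))]
    _ = (∑ a ∈ S with ⌊a⌋ = n, (m a : ℝ)) * (3 / (1 + (n:ℝ) ^ 2)) := by rw [Finset.sum_mul]
    _ ≤ N * (3 / (1 + (n:ℝ) ^ 2)) := by
        gcongr
        refine hcount n _ fun a ha => ?_
        have hfl := (Finset.mem_filter.1 ha).2
        have h1 := Int.floor_le a
        have h2 := Int.lt_floor_add_one a
        rw [hfl] at h1 h2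
        rw [abs_le]; constructor <;> linarith
    _ = 3 * N * (1 / (1 + (n:ℝ) ^ 2)) := by ring

/-- the integral along the boundary of the rectangle `[a,b] × [-s,s]` -/
def RI (F : ℂ → ℂ) (a b s : ℝ) : ℂ :=
  (∫ x in a..b, F (x + ((-s : ℝ) : ℂ) * I)) - (∫ x in a..b, F (x + (s : ℂ) * I)) +
    I * (∫ y in (-s)..s, F (b + y * I)) - I * (∫ y in (-s)..s, F (a + y * I))

/-- boundary of the rectangle -/
def RK (a b s : ℝ) : Set ℂ :=
  {z | (z.re ∈ Set.Icc a b ∧ (z.im = s ∨ z.im = -s)) ∨ ((z.re = a ∨ z.re = b) ∧ z.im ∈ Set.Icc (-s) s)}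

section rect
variable {a b s : ℝ}

lemma RK_bot {x : ℝ} (hx : x ∈ Set.Icc a b) : ((x : ℂ) + ((-s : ℝ) : ℂ) * I) ∈ RK a b s := by
  left; simpa using hx

lemma RK_top {x : ℝ} (hx : x ∈ Set.Icc a b) : ((x : ℂ) + (s : ℂ) * I) ∈ RK a b s := by
  left; simpa using hx

lemma RK_right {y : ℝ} (hy : y ∈ Set.Icc (-s) s) : ((b : ℂ) + (y : ℂ) * I) ∈ RK a b s := by
  right; simpa using hy

lemma RK_left {y : ℝ} (hy : y ∈ Set.Icc (-s) s) : ((a : ℂ) + (y : ℂ) * I) ∈ RK a b s := by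
  right; simpa using hy

lemma RI_congr (hab : a ≤ b) (hs : 0 ≤ s) {F G : ℂ → ℂ} (h : ∀ z ∈ RK a b s, F z = G z) :
    RI F a b s = RI G a b s := by
  unfold RI
  have h1 : (∫ x in a..b, F (x + ((-s : ℝ) : ℂ) * I)) = ∫ x in a..b, G (x + ((-s : ℝ) : ℂ) * I) :=
    intervalIntegral.integral_congr fun x hx => by
      rw [Set.uIcc_of_le hab] at hx; exact h _ (RK_bot hx)
  have h2 : (∫ x in a..b, F (x + (s : ℂ) * I)) = ∫ x in a..b, G (x + (s : ℂ) * I) :=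
    intervalIntegral.integral_congr fun x hx => by
      rw [Set.uIcc_of_le hab] at hx; exact h _ (RK_top hx)
  have h3 : (∫ y in (-s)..s, F (b + y * I)) = ∫ y in (-s)..s, G (b + y * I) :=
    intervalIntegral.integral_congr fun x hx => by
      rw [Set.uIcc_of_le (by linarith)] at hx; exact h _ (RK_right hx)
  have h4 : (∫ y in (-s)..s, F (a + y * I)) = ∫ y in (-s)..s, G (a + y * I) :=
    intervalIntegral.integral_congr fun x hx => by
      rw [Set.uIcc_of_le (by linarith)] at hx; exact h _ (RK_left hx)
  rw [h1, h2, h3, h4]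

lemma RK_int (hab : a ≤ b) (hs : 0 ≤ s) {F : ℂ → ℂ} (h : ContinuousOn F (RK a b s)) :
    IntervalIntegrable (fun x : ℝ => F (x + ((-s : ℝ) : ℂ) * I)) volume a b ∧
    IntervalIntegrable (fun x : ℝ => F (x + (s : ℂ) * I)) volume a b ∧
    IntervalIntegrable (fun y : ℝ => F (b + y * I)) volume (-s) s ∧
    IntervalIntegrable (fun y : ℝ => F (a + y * I)) volume (-s) s := by
  refine ⟨?_, ?_, ?_, ?_⟩ <;> apply ContinuousOn.intervalIntegrable
  · rw [Set.uIcc_of_le hab]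
    exact h.comp (by fun_prop) fun x hx => RK_bot hx
  · rw [Set.uIcc_of_le hab]
    exact h.comp (by fun_prop) fun x hx => RK_top hx
  · rw [Set.uIcc_of_le (by linarith)]
    exact h.comp (by fun_prop) fun x hx => RK_right hx
  · rw [Set.uIcc_of_le (by linarith)]
    exact h.comp (by fun_prop) fun x hx => RK_left hx

lemma RI_add (hab : a ≤ b) (hs : 0 ≤ s) {F G : ℂ → ℂ} (hF : ContinuousOn F (RK a b s))
    (hG : ContinuousOn G (RK a b s)) :
    RI (fun z => F z + G z) a b s = RI F a b s + RI G a b s := by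
  obtain ⟨f1, f2, f3, f4⟩ := RK_int hab hs hF
  obtain ⟨g1, g2, g3, g4⟩ := RK_int hab hs hG
  unfold RI
  rw [intervalIntegral.integral_add f1 g1, intervalIntegral.integral_add f2 g2,
    intervalIntegral.integral_add f3 g3, intervalIntegral.integral_add f4 g4]
  ring

lemma RI_const_mul (c : ℂ) (F : ℂ → ℂ) :
    RI (fun z => c * F z) a b s = c * RI F a b s := by
  unfold RI
  simp only [intervalIntegral.integral_const_mul]
  ring

lemma RI_zero (hab : a ≤ b) (hs : 0 ≤ s) {H : ℂ → ℂ}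
    (hH : DifferentiableOn ℂ H (Set.Icc a b ×ℂ Set.Icc (-s) s)) : RI H a b s = 0 := by
  have := Complex.integral_boundary_rect_eq_zero_of_differentiableOn H
    ((a : ℂ) + ((-s : ℝ) : ℂ) * I) ((b : ℂ) + (s : ℂ) * I) (by
      simp only [add_re, ofReal_re, mul_re, I_re, mul_zero, ofReal_im, I_im, mul_one, sub_self,
        add_zero, add_im, mul_im, zero_add]
      rw [Set.uIcc_of_le hab, Set.uIcc_of_le (by linarith)]
      exact hH)
  simp only [add_re, ofReal_re, mul_re, I_re, mul_zero, ofReal_im, I_im, mul_one, sub_self,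
        add_zero, add_im, mul_im, zero_add, smul_eq_mul] at this
  exact this

lemma int_vert {v : ℝ} (hv : v ≠ 0) (s : ℝ) :
    ∫ y in (-s)..s, ((v : ℂ) + y * I)⁻¹ = 2 * (Real.arctan (s / v) : ℂ) := by
  have hpos : ∀ y : ℝ, 0 < v ^ 2 + y ^ 2 := fun y => by positivity
  have hne : ∀ y : ℝ, (v : ℂ) + y * I ≠ 0 := by
    intro y h
    apply hv
    simpa using congrArg Complex.re h
  have hd : ∀ y : ℝ, HasDerivAt (fun y : ℝ => ((Real.arctan (y / v) : ℝ) : ℂ) -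
      I / 2 * ((Real.log (v ^ 2 + y ^ 2) : ℝ) : ℂ)) ((v : ℂ) + y * I)⁻¹ y := by
    intro y
    have h1 : HasDerivAt (fun y : ℝ => Real.arctan (y / v)) (1 / (1 + (y / v) ^ 2) * (1 / v)) y :=
      ((hasDerivAt_id y).div_const v).arctan
    have h2 : HasDerivAt (fun y : ℝ => Real.log (v ^ 2 + y ^ 2)) ((2 * y) / (v ^ 2 + y ^ 2)) y := by
      have := ((hasDerivAt_pow 2 y).const_add (v ^ 2)).log (hpos y).ne'
      simpa using this
    have h3 : HasDerivAt (fun y : ℝ => ((Real.arctan (y / v) : ℝ) : ℂ) -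
      I / 2 * ((Real.log (v ^ 2 + y ^ 2) : ℝ) : ℂ)) _ y :=
      h1.ofReal_comp.sub (h2.ofReal_comp.const_mul (I / 2))
    refine h3.congr_deriv ?_
    symm
    have hc : (v : ℂ) ^ 2 + (y : ℂ) ^ 2 ≠ 0 := by exact_mod_cast (hpos y).ne'
    have hvc : (v : ℂ) ≠ 0 := by exact_mod_cast hv
    have h4 : (1 / (1 + (y / v) ^ 2) * (1 / v) : ℝ) = v / (v ^ 2 + y ^ 2) := by
      have := (hpos y).ne'
      field_simp
    rw [h4]
    push_cast
    rw [inv_eq_iff_eq_inv, eq_comm, inv_eq_iff_eq_inv, eq_comm, ← one_div, div_eq_iff (hne y)]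
    field_simp
    ring_nf
    rw [I_sq]
    ring
  rw [intervalIntegral.integral_eq_sub_of_hasDerivAt (fun y _ => hd y)]
  · rw [neg_div, Real.arctan_neg]
    push_cast
    rw [neg_sq]
    ring
  · apply Continuous.intervalIntegrable
    exact Continuous.inv₀ (by fun_prop) hne

lemma int_horiz (p : ℝ) {s : ℝ} (hs : 0 < s) (a b : ℝ) :
    (∫ x in a..b, ((x : ℂ) + ((-s : ℝ) : ℂ) * I - p)⁻¹) - (∫ x in a..b, ((x : ℂ) + (s : ℂ) * I - p)⁻¹)
      = 2 * I * (Real.arctan ((b - p) / s) - Real.arctan ((a - p) / s) : ℝ) := by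
  have hn1 : ∀ x : ℝ, (x : ℂ) + ((-s : ℝ) : ℂ) * I - p ≠ 0 := by
    intro x h
    have := congrArg Complex.im h
    simp at this
    exact hs.ne' this
  have hn2 : ∀ x : ℝ, (x : ℂ) + (s : ℂ) * I - p ≠ 0 := by
    intro x h
    have := congrArg Complex.im h
    simp at this
    exact hs.ne' this
  rw [← intervalIntegral.integral_sub]
  · have hd : ∀ x : ℝ, HasDerivAt (fun x : ℝ => 2 * I * ((Real.arctan ((x - p) / s) : ℝ) : ℂ))
        (((x : ℂ) + ((-s : ℝ) : ℂ) * I - p)⁻¹ - ((x : ℂ) + (s : ℂ) * I - p)⁻¹) x := by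
      intro x
      have h1 : HasDerivAt (fun x : ℝ => Real.arctan ((x - p) / s))
          (1 / (1 + ((x - p) / s) ^ 2) * (1 / s)) x :=
        (((hasDerivAt_id x).sub_const p).div_const s).arctan
      have h3 := h1.ofReal_comp.const_mul (2 * I)
      refine h3.congr_deriv ?_
      symm
      have hpos : 0 < s ^ 2 + (x - p) ^ 2 := by positivity
      have h4 : (1 / (1 + ((x - p) / s) ^ 2) * (1 / s) : ℝ) = s / (s ^ 2 + (x - p) ^ 2) := by
        have := hpos.ne'
        field_simp
      rw [h4, inv_sub_inv (hn1 x) (hn2 x)]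
      have h5 : ((x : ℂ) + ((-s : ℝ) : ℂ) * I - p) * ((x : ℂ) + (s : ℂ) * I - p) =
          ((s ^ 2 + (x - p) ^ 2 : ℝ) : ℂ) := by
        push_cast
        ring_nf
        rw [I_sq]
        ring
      rw [h5]
      push_cast
      ring
    rw [intervalIntegral.integral_eq_sub_of_hasDerivAt (fun y _ => hd y)]
    · push_cast; ring
    · apply Continuous.intervalIntegrable
      exact (Continuous.inv₀ (by fun_prop) hn1).sub (Continuous.inv₀ (by fun_prop) hn2)
  · exact (Continuous.inv₀ (by fun_prop) hn1).intervalIntegrable _ _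
  · exact (Continuous.inv₀ (by fun_prop) hn2).intervalIntegrable _ _

lemma arctan_pair {v s : ℝ} (hv : 0 < v) (hs : 0 < s) :
    Real.arctan (v / s) + Real.arctan (s / v) = Real.pi / 2 := by
  have h := Real.arctan_inv_of_pos (x := v / s) (by positivity)
  rw [inv_div] at h
  linarith

lemma RI_inv {p : ℝ} (hs : 0 < s) (hap : a < p) (hpb : p < b) :
    RI (fun z => (z - p)⁻¹) a b s = 2 * Real.pi * I := by
  unfold RI
  rw [int_horiz p hs]
  have h1 : ∀ c : ℝ, (fun y : ℝ => ((c : ℂ) + y * I - p)⁻¹) = fun y : ℝ => (((c - p : ℝ) : ℂ) + y * I)⁻¹ := by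
    intro c; funext y; push_cast; congr 1; ring
  rw [h1 b, h1 a, int_vert (sub_pos.2 hpb).ne', int_vert (sub_neg.2 hap).ne]
  have e1 := arctan_pair (sub_pos.2 hpb) hs
  have e2 := arctan_pair (sub_pos.2 hap) hs
  have e3 : Real.arctan ((a - p) / s) = - Real.arctan ((p - a) / s) := by
    rw [← Real.arctan_neg, ← neg_div, neg_sub]
  have e4 : Real.arctan (s / (a - p)) = - Real.arctan (s / (p - a)) := by
    rw [← Real.arctan_neg, ← div_neg, neg_sub]
  rw [e3, e4]
  have e1c := congrArg (fun t : ℝ => (t : ℂ)) e1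
  have e2c := congrArg (fun t : ℝ => (t : ℂ)) e2
  push_cast at e1c e2c ⊢
  linear_combination 2 * I * e1c + 2 * I * e2c

end rect

lemma RK_ne {a b s : ℝ} (hs : 0 < s) {p : ℝ} (hp : p ∈ Set.Ioo a b) {z : ℂ} (hz : z ∈ RK a b s) :
    z - (p : ℂ) ≠ 0 := by
  intro h
  have h0 : z = p := sub_eq_zero.1 h
  subst h0
  obtain ⟨h1, h2⟩ := hp
  rcases hz with ⟨_, h | h⟩ | ⟨h | h, _⟩
  · simp at h; linarith
  · simp at h; linarith
  · simp at h; linarith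
  · simp at h; linarith

lemma RK_sub {a b s : ℝ} (hab : a ≤ b) (hs : 0 < s) :
    RK a b s ⊆ Set.Icc a b ×ℂ Set.Icc (-s) s := by
  rintro z (⟨h1, h | h⟩ | ⟨h | h, h2⟩)
  · exact ⟨h1, by show z.im ∈ Set.Icc (-s) s; rw [h]; constructor <;> linarith⟩
  · exact ⟨h1, by show z.im ∈ Set.Icc (-s) s; rw [h]; constructor <;> linarith⟩
  · exact ⟨by show z.re ∈ Set.Icc a b; rw [h]; constructor <;> linarith, h2⟩
  · exact ⟨by show z.re ∈ Set.Icc a b; rw [h]; constructor <;> linarith, h2⟩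

lemma RI_sum {a b s : ℝ} (hab : a ≤ b) (hs : 0 < s) {H : ℂ → ℂ}
    (hH : DifferentiableOn ℂ H (Set.Icc a b ×ℂ Set.Icc (-s) s)) (c : ℝ → ℂ) (S : Finset ℝ)
    (hS : ∀ p ∈ S, p ∈ Set.Ioo a b) :
    ContinuousOn (fun z => H z + ∑ p ∈ S, c p * (z - (p : ℂ))⁻¹) (RK a b s) ∧
    RI (fun z => H z + ∑ p ∈ S, c p * (z - (p : ℂ))⁻¹) a b s = 2 * Real.pi * I * ∑ p ∈ S, c p := by
  classical
  induction S using Finset.induction_on with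
  | empty =>
    simp only [Finset.sum_empty, add_zero, mul_zero]
    exact ⟨hH.continuousOn.mono (RK_sub hab hs), RI_zero hab hs.le hH⟩
  | insert p S hp ih =>
    obtain ⟨ih1, ih2⟩ := ih fun x hx => hS x (Finset.mem_insert_of_mem hx)
    have hpI := hS p (Finset.mem_insert_self p S)
    have h1 : ContinuousOn (fun z : ℂ => (z - (p : ℂ))⁻¹) (RK a b s) :=
      ContinuousOn.inv₀ (by fun_prop) fun z hz => RK_ne hs hpI hz
    have h2 : ContinuousOn (fun z : ℂ => c p * (z - (p : ℂ))⁻¹) (RK a b s) :=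
      continuousOn_const.mul h1
    have he : (fun z => H z + ∑ p ∈ insert p S, c p * (z - (p : ℂ))⁻¹) =
        fun z => (H z + ∑ p ∈ S, c p * (z - (p : ℂ))⁻¹) + c p * (z - (p : ℂ))⁻¹ := by
      funext z
      rw [Finset.sum_insert hp]; ring
    rw [he]
    refine ⟨ih1.add h2, ?_⟩
    rw [RI_add hab hs.le ih1 h2, ih2, RI_const_mul, RI_inv hs hpI.1 hpI.2, Finset.sum_insert hp]
    ring

lemma contour_fin {a b s : ℝ} (hab : a ≤ b) (hs : 0 < s) {Q G Φ : ℂ → ℂ} (m : ℝ → ℕ) (S : Finset ℝ)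
    (hS : ∀ p ∈ S, p ∈ Set.Ioo a b) (hG : Differentiable ℂ G) (hΦ : Differentiable ℂ Φ)
    (hfac : ∀ z : ℂ, Q z = (∏ p ∈ S, (z - (p : ℂ)) ^ m p) * G z)
    (hG0 : ∀ z ∈ Set.Icc a b ×ℂ Set.Icc (-s) s, G z ≠ 0) :
    RI (fun z => deriv Q z / Q z * Φ z) a b s = 2 * Real.pi * I * ∑ p ∈ S, (m p : ℂ) * Φ p := by
  have hd : ∀ p : ℂ, Differentiable ℂ (dslope Φ p) := by
    intro p
    have := (Complex.differentiableOn_dslope (f := Φ) (s := Set.univ) (c := p) univ_mem).2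
      hΦ.differentiableOn
    exact differentiableOn_univ.1 this
  have hH : DifferentiableOn ℂ (fun z => (∑ p ∈ S, (m p : ℂ) * dslope Φ p z) + deriv G z / G z * Φ z)
      (Set.Icc a b ×ℂ Set.Icc (-s) s) := by
    apply DifferentiableOn.add
    · apply DifferentiableOn.fun_sum
      intro p _
      exact ((hd p).const_mul _).differentiableOn
    · apply DifferentiableOn.mul _ hΦ.differentiableOn
      have hG' : Differentiable ℂ (deriv G) := by
        rw [← differentiableOn_univ]
        exact hG.differentiableOn.deriv isOpen_univ
      exact hG'.differentiableOn.div hG.differentiableOn hG0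
  rw [← (RI_sum hab hs hH (fun p => (m p : ℂ) * Φ p) S hS).2]
  apply RI_congr hab hs.le
  intro z hz
  have hne : ∀ p ∈ S, z - (p : ℂ) ≠ 0 := fun p hp => RK_ne hs (hS p hp) hz
  have hGz := hG0 z (RK_sub hab hs hz)
  have hQ : Q = fun z => (∏ p ∈ S, (z - (p : ℂ)) ^ m p) * G z := funext hfac
  have hl : deriv Q z / Q z = (∑ p ∈ S, (m p : ℂ) * (z - (p : ℂ))⁻¹) + deriv G z / G z := by
    change logDeriv Q z = _ + logDeriv G z
    rw [hQ, logDeriv_mul z _ hGz _ (hG z), logDeriv_prod]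
    · congr 1
      apply Finset.sum_congr rfl
      intro p hp
      rw [logDeriv_fun_pow (by fun_prop)]
      congr 1
      rw [logDeriv_apply]
      simp
    · intro p hp; exact pow_ne_zero _ (hne p hp)
    · intro p hp; fun_prop
    · exact Finset.prod_ne_zero_iff.2 fun p hp => pow_ne_zero _ (hne p hp)
    · fun_prop
  rw [hl, add_mul, Finset.sum_mul]
  have : ∀ p ∈ S, (m p : ℂ) * (z - (p : ℂ))⁻¹ * Φ z =
      (m p : ℂ) * dslope Φ p z + (m p : ℂ) * Φ p * (z - (p : ℂ))⁻¹ := by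
    intro p hp
    have h := sub_smul_dslope Φ (p : ℂ) z
    rw [smul_eq_mul] at h
    have hn := hne p hp
    field_simp
    linear_combination -(m p : ℂ) * h
  rw [Finset.sum_congr rfl this, Finset.sum_add_distrib]
  ring

lemma good_point (m : ℝ → ℕ) {N : ℝ}
    (hcount : ∀ (x : ℝ) (S : Finset ℝ), (∀ a ∈ S, |a - x| ≤ 1) → ∑ a ∈ S, (m a : ℝ) ≤ N) :
    ∃ δ : ℝ, 0 < δ ∧ ∀ x : ℝ, ∃ R : ℝ, x ≤ R ∧ R ≤ x + 1 ∧ ∀ a : ℝ, m a ≠ 0 → δ ≤ |a - R| := by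
  classical
  obtain ⟨n, hn⟩ := exists_nat_gt (max N 1)
  have hnN : N < n := (le_max_left _ _).trans_lt hn
  have hn1 : (1 : ℝ) < n := (le_max_right _ _).trans_lt hn
  have hn0 : (0 : ℝ) < n := by linarith
  refine ⟨1 / (2 * n), by positivity, fun x => ?_⟩
  by_contra! H
  have hδ : 1 / (2 * (n : ℝ)) ≤ 1 / 2 := by
    apply one_div_le_one_div_of_le <;> linarith
  have hj : ∀ j : Fin n, ∃ a : ℝ, m a ≠ 0 ∧ |a - (x + (j : ℝ) / n)| < 1 / (2 * n) := by
    intro j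
    have hjn : (j : ℝ) ≤ n := by exact_mod_cast j.2.le
    refine H _ ?_ ?_
    · have : 0 ≤ (j : ℝ) / n := by positivity
      linarith
    · have : (j : ℝ) / n ≤ 1 := (div_le_one hn0).2 hjn
      linarith
  choose f hf1 hf2 using hj
  have hinj : Function.Injective f := by
    intro i j hij
    by_contra hne
    have h1 := hf2 i
    have h2 := hf2 j
    rw [hij] at h1
    have h3 : |(i : ℝ) / n - (j : ℝ) / n| < 1 / n := by
      have : (i : ℝ) / n - (j : ℝ) / n = (f j - (x + (j : ℝ) / n)) - (f j - (x + (i : ℝ) / n)) := by ring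
      rw [this]
      refine (abs_sub _ _).trans_lt ?_
      have : (1 : ℝ) / n = 1 / (2 * n) + 1 / (2 * n) := by field_simp; norm_num
      rw [this]
      linarith
    rw [← sub_div, abs_div, abs_of_pos hn0, div_lt_div_iff_of_pos_right hn0] at h3
    have h4 : |((i : ℕ) : ℤ) - ((j : ℕ) : ℤ)| < 1 := by exact_mod_cast h3
    rw [Int.abs_lt_one_iff] at h4
    apply hne
    ext
    omega
  have hS := hcount (x + 1 / 2) (Finset.univ.image f) (by
    intro a ha
    obtain ⟨j, _, rfl⟩ := Finset.mem_image.1 ha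
    have h2 := abs_lt.1 (hf2 j)
    have hjn : (j : ℝ) ≤ n := by exact_mod_cast j.2.le
    have h5 : 0 ≤ (j : ℝ) / n := by positivity
    have h6 : (j : ℝ) / n ≤ 1 := (div_le_one hn0).2 hjn
    rw [abs_le]
    constructor <;> linarith)
  rw [Finset.sum_image (fun i _ j _ h => hinj h)] at hS
  have h7 : (n : ℝ) ≤ ∑ j : Fin n, (m (f j) : ℝ) := by
    calc (n : ℝ) = ∑ j : Fin n, (1 : ℝ) := by simp
      _ ≤ _ := Finset.sum_le_sum fun j _ => by
        exact_mod_cast Nat.one_le_iff_ne_zero.2 (hf1 j)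
  linarith

lemma finite_zeros (m : ℝ → ℕ) (hsum : Summable fun a : ℝ => (m a : ℝ) / (1 + a ^ 2)) (R : ℝ) :
    {a : ℝ | m a ≠ 0 ∧ |a| ≤ R}.Finite := by
  have h1 := hsum.tendsto_cofinite_zero
  have h2 : ∀ᶠ a in cofinite, (m a : ℝ) / (1 + a ^ 2) < 1 / (1 + R ^ 2) :=
    h1.eventually_lt_const (by positivity)
  refine Set.Finite.subset h2 ?_
  rintro a ⟨ha, haR⟩
  simp only [Set.mem_compl_iff, Set.mem_ofPred_eq, not_lt]
  have : a ^ 2 ≤ R ^ 2 := by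
    rw [← sq_abs a]; gcongr
  have h1 : (1 : ℝ) ≤ m a := by exact_mod_cast Nat.one_le_iff_ne_zero.2 ha
  gcongr

section lim
variable {q : ℕ → ℂ} {ω : ℕ → ℝ} {B : ℝ}

lemma logderiv_bound (hq : Summable fun i => ‖q i‖) (hB : ∀ i, |ω i| ≤ B)
    (hne : ∃ z : ℂ, dserC q ω z ≠ 0) (s : ℝ) {δ : ℝ} (hδ : 0 < δ) :
    ∃ M : ℝ, 0 ≤ M ∧ ∀ z : ℂ, |z.im| ≤ s → (∀ w, dist w z < δ → dserC q ω w ≠ 0) →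
      ‖deriv (dserC q ω) z / dserC q ω z‖ ≤ M := by
  obtain ⟨c, hc, h⟩ := minmod hq hB hne (K := s) hδ
  refine ⟨(∑' i, ‖q i * (2 * Real.pi * I * ω i)‖) * Real.exp (2 * Real.pi * B * s) / c, ?_, ?_⟩
  · have : 0 ≤ ∑' i, ‖q i * (2 * Real.pi * I * ω i)‖ := tsum_nonneg fun _ => norm_nonneg _
    positivity
  · intro z hz hw
    rw [norm_div, (dser_diff_aux hq hB z).2]
    have h1 := dser_bound (dser_summable_deriv hq hB) hB hz
    have h2 := h z hz hw
    have : 0 ≤ ∑' i, ‖q i * (2 * Real.pi * I * ω i)‖ := tsum_nonneg fun _ => norm_nonneg _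
    gcongr

lemma line_nonvanish (hreal : ∀ z : ℂ, dserC q ω z = 0 → z.im = 0) {s : ℝ} (z : ℂ)
    (hz : |z.im| = s) : ∀ w, dist w z < s → dserC q ω w ≠ 0 := by
  intro w hw h
  have h1 := hreal w h
  have h2 : |(w - z).im| ≤ ‖w - z‖ := Complex.abs_im_le_norm _
  rw [← dist_eq_norm, Complex.sub_im, h1, zero_sub, abs_neg, hz] at h2
  linarith

lemma contour_lim (hq : Summable fun i => ‖q i‖) (hB : ∀ i, |ω i| ≤ B)
    (hne : ∃ z : ℂ, dserC q ω z ≠ 0)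
    (hreal : ∀ z : ℂ, dserC q ω z = 0 → z.im = 0)
    (m : ℝ → ℕ) (g : ℝ → ℂ → ℂ)
    (hg : ∀ x z, AnalyticAt ℂ (g x) z) (hg0 : ∀ x : ℝ, g x x ≠ 0)
    (hfac : ∀ (x : ℝ) (z : ℂ), dserC q ω z = (z - x) ^ m x * g x z)
    {s : ℝ} (hs : 0 < s) {Φ : ℂ → ℂ} (hΦ : Differentiable ℂ Φ) {C : ℝ}
    (hC : ∀ z : ℂ, |z.im| ≤ s → ‖Φ z‖ ≤ C / (1 + z.re ^ 2)) :
    2 * Real.pi * I * ∑' a : ℝ, (m a : ℂ) * Φ a =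
      (∫ x : ℝ, deriv (dserC q ω) (x + ((-s : ℝ) : ℂ) * I) / dserC q ω (x + ((-s : ℝ) : ℂ) * I) *
        Φ (x + ((-s : ℝ) : ℂ) * I)) -
      ∫ x : ℝ, deriv (dserC q ω) (x + (s : ℂ) * I) / dserC q ω (x + (s : ℂ) * I) *
        Φ (x + (s : ℂ) * I) := by
  classical
  obtain ⟨N, hN, hcount⟩ := count_zeros hq hB hne hreal m g hg hg0 hfac
  have hsum := count_summable m hN hcount
  obtain ⟨δ, hδ, hgood⟩ := good_point m hcount
  have hQd := dser_diff hq hB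
  have hQd' : Differentiable ℂ (deriv (dserC q ω)) := by
    rw [← differentiableOn_univ]
    exact hQd.differentiableOn.deriv isOpen_univ
  have hC0 : 0 ≤ C := by
    have := (norm_nonneg _).trans (hC 0 (by simpa using hs.le))
    simpa using this
  have hzero : ∀ x : ℝ, dserC q ω x = 0 → m x ≠ 0 := by
    intro x hx hm
    rw [hfac x x, hm] at hx
    simp at hx
    exact hg0 x hx
  -- horizontal integrability
  have hintg : ∀ t : ℝ, |t| = s → Integrable fun x : ℝ =>
      deriv (dserC q ω) (x + (t : ℂ) * I) / dserC q ω (x + (t : ℂ) * I) * Φ (x + (t : ℂ) * I) := by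
    intro t ht
    obtain ⟨M, hM0, hM⟩ := logderiv_bound hq hB hne s hs
    have him : ∀ x : ℝ, ((x : ℂ) + (t : ℂ) * I).im = t := by intro x; simp
    have hre : ∀ x : ℝ, ((x : ℂ) + (t : ℂ) * I).re = x := by intro x; simp
    have hnv : ∀ x : ℝ, dserC q ω (x + (t : ℂ) * I) ≠ 0 := fun x =>
      line_nonvanish hreal (x + (t : ℂ) * I) (by rw [him, ht]) _ (by rw [dist_self]; exact hs)
    refine Integrable.mono' ((integrable_inv_one_add_sq.const_mul (M * C))) ?_ ?_
    · apply Continuous.aestronglyMeasurable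
      refine (Continuous.div ?_ ?_ hnv).mul ?_
      · exact hQd'.continuous.comp (by fun_prop)
      · exact hQd.continuous.comp (by fun_prop)
      · exact hΦ.continuous.comp (by fun_prop)
    · refine ae_of_all _ fun x => ?_
      rw [norm_mul, mul_assoc]
      have h1 := hM (x + (t : ℂ) * I) (by rw [him, ht]) (line_nonvanish hreal _ (by rw [him, ht]))
      have h2 := hC (x + (t : ℂ) * I) (by rw [him, ht])
      rw [hre] at h2
      rw [← div_eq_mul_inv]
      gcongr
  -- choice of the rectangles
  choose b hb1 hb2 hb3 using fun k : ℕ => hgood k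
  choose a ha1 ha2 ha3 using fun k : ℕ => hgood (-(k : ℝ) - 1)
  have hbT : Tendsto b atTop atTop := tendsto_atTop_mono hb1 tendsto_natCast_atTop_atTop
  have haT : Tendsto a atTop atBot := by
    refine tendsto_atBot_mono (g := a) (f := fun k : ℕ => -(k : ℝ)) (fun k => by have := ha2 k; linarith) ?_
    exact tendsto_neg_atTop_atBot.comp tendsto_natCast_atTop_atTop
  have hab : ∀ k, a k ≤ b k := fun k => by
    have := ha2 k; have := hb1 k; have : (0 : ℝ) ≤ k := Nat.cast_nonneg k
    linarith
  have hfin : ∀ k, {x : ℝ | m x ≠ 0 ∧ x ∈ Set.Icc (a k) (b k)}.Finite := by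
    intro k
    refine (finite_zeros m hsum (max |a k| |b k|)).subset ?_
    rintro x ⟨h1, h2⟩
    exact ⟨h1, abs_le_max_abs_abs h2.1 h2.2⟩
  have hkey : ∀ k, RI (fun z => deriv (dserC q ω) z / dserC q ω z * Φ z) (a k) (b k) s =
      2 * Real.pi * I * ∑' x : ℝ, (Set.Icc (a k) (b k)).indicator (fun x => (m x : ℂ) * Φ x) x := by
    intro k
    obtain ⟨G, hG, hQG, hGne⟩ := factor hQd m g hg hg0 hfac (hfin k).toFinset
    rw [contour_fin (hab k) hs m (hfin k).toFinset ?_ hG hΦ hQG ?_]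
    · congr 1
      rw [tsum_eq_sum (s := (hfin k).toFinset)]
      · refine Finset.sum_congr rfl fun x hx => ?_
        rw [Set.Finite.mem_toFinset] at hx
        rw [Set.indicator_of_mem hx.2]
      · intro x hx
        rw [Set.Finite.mem_toFinset] at hx
        by_cases hxI : x ∈ Set.Icc (a k) (b k)
        · have : m x = 0 := by
            by_contra h
            exact hx ⟨h, hxI⟩
          simp [this]
        · rw [Set.indicator_of_notMem hxI]
    · intro p hp
      rw [Set.Finite.mem_toFinset] at hp
      obtain ⟨h1, h2, h3⟩ := hp
      have e1 := ha3 k p h1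
      have e2 := hb3 k p h1
      constructor
      · refine lt_of_le_of_ne h2 fun h => ?_
        rw [h] at e1; simp at e1; linarith
      · refine lt_of_le_of_ne h3 fun h => ?_
        rw [h] at e2; simp at e2; linarith
    · intro z hz hz0
      have hQz : dserC q ω z = 0 := by rw [hQG, hz0, mul_zero]
      have him := hreal z hQz
      have hzr : z = ((z.re : ℝ) : ℂ) := by
        apply Complex.ext <;> simp [him]
      have hm := hzero z.re (by rw [← hzr]; exact hQz)
      apply hGne z.re (by rw [Set.Finite.mem_toFinset]; exact ⟨hm, hz.1⟩)
      rw [← hzr]; exact hz0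
  -- limits
  have hL : Tendsto (fun k => 2 * Real.pi * I *
      ∑' x : ℝ, (Set.Icc (a k) (b k)).indicator (fun x => (m x : ℂ) * Φ x) x) atTop
      (𝓝 (2 * Real.pi * I * ∑' a : ℝ, (m a : ℂ) * Φ a)) := by
    refine Tendsto.const_mul _ ?_
    refine tendsto_tsum_of_dominated_convergence (hsum.mul_left C) ?_ ?_
    · intro x
      refine tendsto_const_nhds.congr' ?_
      filter_upwards [hbT.eventually_ge_atTop x, haT.eventually_le_atBot x] with k h1 h2
      rw [Set.indicator_of_mem (show x ∈ Set.Icc (a k) (b k) from ⟨h2, h1⟩)]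
    · refine Eventually.of_forall fun k x => ?_
      refine (norm_indicator_le_norm_self _ _).trans ?_
      have := hC x (by simpa using hs.le)
      rw [norm_mul, Complex.norm_natCast]
      simp only [ofReal_re] at this
      calc (m x : ℝ) * ‖Φ x‖ ≤ m x * (C / (1 + x ^ 2)) := by gcongr
        _ = C * ((m x : ℝ) / (1 + x ^ 2)) := by ring
  obtain ⟨M, hM0, hM⟩ := logderiv_bound hq hB hne s hδ
  have hvert : ∀ c : ℕ → ℝ, (∀ k, ∀ a : ℝ, m a ≠ 0 → δ ≤ |a - c k|) → Tendsto (fun k => |c k|) atTop atTop →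
      Tendsto (fun k => ∫ y in (-s)..s, deriv (dserC q ω) (c k + y * I) / dserC q ω (c k + y * I) *
        Φ (c k + y * I)) atTop (𝓝 0) := by
    intro c hc hcT
    have hb : ∀ k, ‖∫ y in (-s)..s, deriv (dserC q ω) (c k + y * I) / dserC q ω (c k + y * I) *
        Φ (c k + y * I)‖ ≤ M * (C / (1 + |c k| ^ 2)) * |s - (-s)| := by
      intro k
      refine intervalIntegral.norm_integral_le_of_norm_le_const fun y hy => ?_
      rw [Set.uIoc_of_le (by linarith)] at hy
      have him : ((c k : ℂ) + y * I).im = y := by simp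
      have hre : ((c k : ℂ) + y * I).re = c k := by simp
      have hy' : |((c k : ℂ) + y * I).im| ≤ s := by
        rw [him, abs_le]; exact ⟨hy.1.le, hy.2⟩
      rw [norm_mul]
      have h2 := hC _ hy'
      rw [hre] at h2
      rw [sq_abs]
      gcongr
      refine hM _ hy' ?_
      intro w hw hw0
      have hwi := hreal w hw0
      have hwr : w = ((w.re : ℝ) : ℂ) := by apply Complex.ext <;> simp [hwi]
      have hm := hzero w.re (by rw [← hwr]; exact hw0)
      have h3 := hc k _ hm
      have h4 : |(w - ((c k : ℂ) + y * I)).re| ≤ ‖w - ((c k : ℂ) + y * I)‖ := Complex.abs_re_le_norm _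
      rw [← dist_eq_norm, Complex.sub_re, hre] at h4
      linarith
    refine squeeze_zero_norm hb ?_
    have h1 : Tendsto (fun k => C / (1 + |c k| ^ 2)) atTop (𝓝 0) := by
      refine Tendsto.const_div_atTop ?_ C
      exact tendsto_atTop_add_const_left _ _ ((tendsto_pow_atTop two_ne_zero).comp hcT)
    have h2 := (h1.const_mul M).mul_const |s - (-s)|
    simpa using h2
  have hR : Tendsto (fun k => RI (fun z => deriv (dserC q ω) z / dserC q ω z * Φ z) (a k) (b k) s) atTop
      (𝓝 ((∫ x : ℝ, deriv (dserC q ω) (x + ((-s : ℝ) : ℂ) * I) / dserC q ω (x + ((-s : ℝ) : ℂ) * I) *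
        Φ (x + ((-s : ℝ) : ℂ) * I)) -
      (∫ x : ℝ, deriv (dserC q ω) (x + (s : ℂ) * I) / dserC q ω (x + (s : ℂ) * I) *
        Φ (x + (s : ℂ) * I)) + I * 0 - I * 0)) := by
    unfold RI
    refine Tendsto.sub (Tendsto.add (Tendsto.sub ?_ ?_) ?_) ?_
    · exact intervalIntegral_tendsto_integral (hintg (-s) (by rw [abs_neg, abs_of_pos hs])) haT hbT
    · exact intervalIntegral_tendsto_integral (hintg s (abs_of_pos hs)) haT hbT
    · exact (hvert b hb3 (tendsto_abs_atTop_atTop.comp hbT)).const_mul I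
    · exact (hvert a ha3 (tendsto_abs_atBot_atTop.comp haT)).const_mul I
  have he : (fun k => RI (fun z => deriv (dserC q ω) z / dserC q ω z * Φ z) (a k) (b k) s) = _ :=
    funext hkey
  rw [he] at hR
  have := tendsto_nhds_unique hL hR
  rw [this]
  ring

end lim

/-- the entire extension of the Fourier transform -/
def FL (φ : ℝ → ℂ) (z : ℂ) : ℂ := ∫ t : ℝ, φ t * Complex.exp (-(2 * Real.pi * I * z * t))

section LTsec
variable {φ : ℝ → ℂ}

lemma norm_FLexp (z : ℂ) (t : ℝ) :
    ‖Complex.exp (-(2 * Real.pi * I * z * t))‖ = Real.exp (2 * Real.pi * z.im * t) := by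
  rw [Complex.norm_exp]
  congr 1
  simp

lemma norm_FLexp_le {z : ℂ} {s : ℝ} (hz : |z.im| ≤ s) (t : ℝ) :
    ‖Complex.exp (-(2 * Real.pi * I * z * t))‖ ≤ Real.exp (2 * Real.pi * s * |t|) := by
  rw [norm_FLexp]
  apply Real.exp_le_exp.2
  have h1 : z.im * t ≤ s * |t| := by
    refine (le_abs_self _).trans ?_
    rw [abs_mul]; gcongr
  nlinarith [Real.pi_pos]

lemma integrable_cc {ψ : ℝ → ℂ} (hc : Continuous φ) (hs : HasCompactSupport φ) (hψ : Continuous ψ) :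
    Integrable fun t => φ t * ψ t :=
  (hc.mul hψ).integrable_of_hasCompactSupport hs.mul_right

lemma FL_bound (hc : Continuous φ) (hs : HasCompactSupport φ) {z : ℂ} {s : ℝ} (hz : |z.im| ≤ s) :
    ‖FL φ z‖ ≤ ∫ t, ‖φ t‖ * Real.exp (2 * Real.pi * s * |t|) := by
  unfold FL
  refine (norm_integral_le_integral_norm _).trans ?_
  refine integral_mono (integrable_cc hc hs (by fun_prop)).norm ?_ ?_
  · exact Continuous.integrable_of_hasCompactSupport (by fun_prop) hs.norm.mul_right
  · intro t
    simp only [norm_mul]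
    gcongr
    exact norm_FLexp_le hz t

lemma FL_deriv (hφ : ContDiff ℝ 1 φ) (hs : HasCompactSupport φ) (z : ℂ) :
    FL (deriv φ) z = 2 * Real.pi * I * z * FL φ z := by
  have hd : ∀ t : ℝ, HasDerivAt (fun t : ℝ => Complex.exp (-(2 * Real.pi * I * z * t)))
      (-(2 * Real.pi * I * z) * Complex.exp (-(2 * Real.pi * I * z * t))) t := by
    intro t
    have h1 : HasDerivAt (fun t : ℂ => Complex.exp (-(2 * Real.pi * I * z * t)))
        (Complex.exp (-(2 * Real.pi * I * z * t)) * (-(2 * Real.pi * I * z * 1))) (t : ℂ) :=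
      (((hasDerivAt_id (t : ℂ)).const_mul (2 * Real.pi * I * z)).neg).cexp
    refine h1.comp_ofReal.congr_deriv ?_
    ring
  have hcd : Continuous (deriv φ) := hφ.continuous_deriv le_rfl
  have := integral_mul_deriv_eq_deriv_mul_of_integrable
    (u := fun t : ℝ => Complex.exp (-(2 * Real.pi * I * z * t))) (v := φ)
    (u' := fun t : ℝ => -(2 * Real.pi * I * z) * Complex.exp (-(2 * Real.pi * I * z * t)))
    (v' := deriv φ) (fun t _ => hd t)
    (fun t _ => (hφ.differentiable one_ne_zero t).hasDerivAt)
    (Continuous.integrable_of_hasCompactSupport (by fun_prop) hs.deriv.mul_left)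
    (Continuous.integrable_of_hasCompactSupport (by have := hφ.continuous; fun_prop) hs.mul_left)
    (Continuous.integrable_of_hasCompactSupport (by have := hφ.continuous; fun_prop) hs.mul_left)
  unfold FL
  simp_rw [mul_comm (deriv φ _), this]
  rw [← integral_neg, ← integral_const_mul]
  congr 1
  funext t
  ring

lemma FL_decay (hφ : ContDiff ℝ 2 φ) (hs : HasCompactSupport φ) (s : ℝ) :
    ∃ C : ℝ, ∀ z : ℂ, |z.im| ≤ s → ‖FL φ z‖ ≤ C / (1 + z.re ^ 2) := by
  have hφ1 : ContDiff ℝ 1 φ := hφ.of_le (by norm_num)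
  have hφ' : ContDiff ℝ 1 (deriv φ) := by
    have h : ContDiff ℝ (1 + 1) φ := by
      rw [one_add_one_eq_two]; exact hφ
    exact (contDiff_succ_iff_deriv.1 h).2.2
  refine ⟨(∫ t, ‖φ t‖ * Real.exp (2 * Real.pi * s * |t|)) +
    ∫ t, ‖deriv (deriv φ) t‖ * Real.exp (2 * Real.pi * s * |t|), fun z hz => ?_⟩
  have h1 := FL_bound hφ.continuous hs hz
  have h2 := FL_bound (hφ'.continuous_deriv le_rfl) hs.deriv.deriv hz
  rw [FL_deriv hφ' hs.deriv, FL_deriv hφ1 hs] at h2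
  rw [le_div_iff₀ (by positivity)]
  have h3 : z.re ^ 2 * ‖FL φ z‖ ≤ ‖2 * Real.pi * I * z * (2 * Real.pi * I * z * FL φ z)‖ := by
    simp only [norm_mul, Complex.norm_ofNat, Complex.norm_real, Complex.norm_I, mul_one,
      Real.norm_eq_abs, abs_of_pos Real.pi_pos]
    have h4 : z.re ^ 2 ≤ ‖z‖ ^ 2 := by
      rw [← sq_abs]
      gcongr
      exact Complex.abs_re_le_norm z
    have h5 : ‖z‖ ^ 2 ≤ (2 * Real.pi) ^ 2 * ‖z‖ ^ 2 := by
      have : (1 : ℝ) ≤ (2 * Real.pi) ^ 2 := by nlinarith [Real.pi_gt_three]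
      nlinarith [sq_nonneg ‖z‖]
    have h6 : z.re ^ 2 * ‖FL φ z‖ ≤ ((2 * Real.pi) ^ 2 * ‖z‖ ^ 2) * ‖FL φ z‖ := by
      gcongr
      exact h4.trans h5
    refine h6.trans (le_of_eq ?_)
    ring
  nlinarith

lemma FL_differentiable (hc : Continuous φ) (hs : HasCompactSupport φ) : Differentiable ℂ (FL φ) := by
  intro z
  have := hasDerivAt_integral_of_dominated_loc_of_deriv_le (μ := volume) (x₀ := z) (s := ball z 1)
    (F := fun (z : ℂ) (t : ℝ) => φ t * Complex.exp (-(2 * Real.pi * I * z * t)))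
    (F' := fun (z : ℂ) (t : ℝ) => φ t * (Complex.exp (-(2 * Real.pi * I * z * t)) * (-(2 * Real.pi * I * t))))
    (bound := fun t => ‖φ t‖ * (Real.exp (2 * Real.pi * (|z.im| + 1) * |t|) * (2 * Real.pi * |t|)))
    (ball_mem_nhds z one_pos)
    (Eventually.of_forall fun w => (integrable_cc hc hs (by fun_prop)).aestronglyMeasurable)
    (integrable_cc hc hs (by fun_prop))
    (integrable_cc hc hs (by fun_prop)).aestronglyMeasurable
    (ae_of_all _ fun t w hw => ?_)
    (Continuous.integrable_of_hasCompactSupport (by fun_prop) hs.norm.mul_right)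
    (ae_of_all _ fun t w _ => ?_)
  · exact this.2.differentiableAt
  · have hw' : |w.im| ≤ |z.im| + 1 := by
      have h1 : |(w - z).im| ≤ ‖w - z‖ := Complex.abs_im_le_norm _
      rw [mem_ball, dist_eq_norm] at hw
      have h2 : w.im = z.im + (w - z).im := by simp
      rw [h2]
      exact (abs_add_le _ _).trans (by linarith)
    rw [norm_mul, norm_mul]
    gcongr
    · exact norm_FLexp_le hw' t
    · simp [abs_of_pos Real.pi_pos]
  · refine HasDerivAt.const_mul _ ?_
    have h0 : HasDerivAt (fun w : ℂ => -(2 * Real.pi * I * w * t)) (-(2 * Real.pi * I * t)) w := by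
      have h := (((hasDerivAt_id w).const_mul (2 * Real.pi * I)).mul_const (t : ℂ)).neg
      refine h.congr_deriv ?_
      ring
    exact h0.cexp

lemma FL_line (σ x : ℝ) : FL φ (x + (σ : ℂ) * I) =
    FourierTransform.fourier (fun t : ℝ => φ t * (Real.exp (2 * Real.pi * σ * t) : ℂ)) x := by
  rw [Real.fourier_real_eq_integral_exp_smul]
  unfold FL
  congr 1
  funext t
  rw [smul_eq_mul, mul_left_comm, Complex.ofReal_exp, ← Complex.exp_add]
  congr 2
  push_cast
  linear_combination (-2 * Real.pi * σ * t : ℂ) * I_sq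

lemma FL_real (x : ℝ) : FL φ x = FourierTransform.fourier φ x := by
  have := FL_line (φ := φ) 0 x
  simpa using this

lemma FL_line_integrable (hφ : ContDiff ℝ 2 φ) (hs : HasCompactSupport φ) (σ : ℝ) :
    Integrable fun x : ℝ => FL φ (x + (σ : ℂ) * I) := by
  obtain ⟨C, hC⟩ := FL_decay hφ hs |σ|
  refine Integrable.mono' (integrable_inv_one_add_sq.const_mul C) ?_ ?_
  · exact ((FL_differentiable hφ.continuous hs).continuous.comp (by fun_prop)).aestronglyMeasurable
  · refine ae_of_all _ fun x => ?_
    have := hC (x + (σ : ℂ) * I) (by simp)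
    simpa [div_eq_mul_inv] using this

lemma FL_inv (hφ : ContDiff ℝ 2 φ) (hs : HasCompactSupport φ) (σ γ : ℝ) :
    ∫ x : ℝ, ew γ x * FL φ (x + (σ : ℂ) * I) = φ γ * (Real.exp (2 * Real.pi * σ * γ) : ℂ) := by
  have hcont : Continuous (fun t : ℝ => φ t * (Real.exp (2 * Real.pi * σ * t) : ℂ)) := by
    have := hφ.continuous
    fun_prop
  have hintg : Integrable (fun t : ℝ => φ t * (Real.exp (2 * Real.pi * σ * t) : ℂ)) :=
    integrable_cc hφ.continuous hs (by fun_prop)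
  have h2 : Integrable (FourierTransform.fourier
      (fun t : ℝ => φ t * (Real.exp (2 * Real.pi * σ * t) : ℂ))) := by
    have := FL_line_integrable hφ hs σ
    simp_rw [FL_line] at this
    exact this
  have h3 := congrFun (hcont.fourierInv_fourier_eq hintg h2) γ
  rw [Real.fourierInv_eq'] at h3
  rw [← h3]
  congr 1
  funext x
  rw [FL_line, smul_eq_mul]
  congr 1
  unfold ew
  congr 1
  simp only [RCLike.inner_apply, conj_trivial]
  push_cast
  ring

lemma line_sum (hφ : ContDiff ℝ 2 φ) (hs : HasCompactSupport φ) (σ : ℝ) {f : ℝ → ℂ}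
    {ι : Type} [Countable ι] {c : ι → ℂ} {w : ι → ℝ} (hc : Summable fun i => ‖c i‖)
    (hf : ∀ x, HasSum (fun i => c i * ew (w i) x) (f x)) :
    HasSum (fun i => c i * (φ (w i) * (Real.exp (2 * Real.pi * σ * w i) : ℂ)))
      (∫ x : ℝ, f x * FL φ (x + (σ : ℂ) * I)) := by
  have hI := FL_line_integrable hφ hs σ
  have hn : ∀ i (x : ℝ), ‖c i * (ew (w i) x * FL φ (x + (σ : ℂ) * I))‖ =
      ‖c i‖ * ‖FL φ (x + (σ : ℂ) * I)‖ := by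
    intro i x
    rw [norm_mul, norm_mul, norm_ew, one_mul]
  have h := hasSum_integral_of_summable_integral_norm (μ := (volume : Measure ℝ))
    (F := fun i (x : ℝ) => c i * (ew (w i) x * FL φ (x + (σ : ℂ) * I))) ?_ ?_
  · have e1 : (fun i => ∫ x : ℝ, c i * (ew (w i) x * FL φ (x + (σ : ℂ) * I))) =
        fun i => c i * (φ (w i) * (Real.exp (2 * Real.pi * σ * w i) : ℂ)) := by
      funext i
      rw [integral_const_mul, FL_inv hφ hs]
    have e2 : (∫ x : ℝ, ∑' i, c i * (ew (w i) x * FL φ (x + (σ : ℂ) * I))) =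
        ∫ x : ℝ, f x * FL φ (x + (σ : ℂ) * I) := by
      congr 1
      funext x
      rw [← (hf x).tsum_eq, ← tsum_mul_right]
      simp_rw [mul_assoc]
    rw [e1, e2] at h
    exact h
  · intro i
    refine Integrable.const_mul ?_ _
    refine hI.norm.mono' ?_ ?_
    · exact ((continuous_ew _).aestronglyMeasurable).mul hI.aestronglyMeasurable
    · exact ae_of_all _ fun x => by rw [norm_mul, norm_ew, one_mul]
  · simp_rw [hn, integral_const_mul]
    exact hc.mul_right _

end LTsec

/-- collapse an indexed family of masses to a mass function -/
def cmass {ι : Type} (c : ι → ℂ) (w : ι → ℝ) (γ : ℝ) : ℂ := ∑' i : w ⁻¹' {γ}, c i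

lemma cmass_summable {ι : Type} {c : ι → ℂ} {w : ι → ℝ} (hc : Summable fun i => ‖c i‖) :
    Summable fun γ => ‖cmass c w γ‖ := by
  have h := (hc.hasSum.tsum_fiberwise w).summable
  refine Summable.of_nonneg_of_le (fun _ => norm_nonneg _) (fun γ => ?_) h
  unfold cmass
  exact norm_tsum_le_tsum_norm (hc.subtype _)

lemma cmass_hasSum {ι : Type} {c : ι → ℂ} {w : ι → ℝ} {ψ : ℝ → ℂ} {a : ℂ}
    (h : HasSum (fun i => c i * ψ (w i)) a) : HasSum (fun γ => cmass c w γ * ψ γ) a := by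
  have h1 := h.tsum_fiberwise w
  have he : (fun γ => cmass c w γ * ψ γ) = fun γ => ∑' i : w ⁻¹' {γ}, c i * ψ (w i) := by
    funext γ
    unfold cmass
    rw [← tsum_mul_right]
    refine tsum_congr fun i => ?_
    have : w i = γ := i.2
    rw [this]
  rw [he]
  exact h1

section nu
variable {q : ℕ → ℂ} {ω : ℕ → ℝ} {B : ℝ}

lemma exists_nu (hq : Summable fun i => ‖q i‖) (hB : ∀ i, |ω i| ≤ B)
    (hne : ∃ z : ℂ, dserC q ω z ≠ 0)
    (hreal : ∀ z : ℂ, dserC q ω z = 0 → z.im = 0)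
    (m : ℝ → ℕ) (g : ℝ → ℂ → ℂ)
    (hg : ∀ x z, AnalyticAt ℂ (g x) z) (hg0 : ∀ x : ℝ, g x x ≠ 0)
    (hfac : ∀ (x : ℝ) (z : ℂ), dserC q ω z = (z - x) ^ m x * g x z)
    (μ : PPM ℝ) (hm : ∀ x, μ.mass x = m x) {s : ℝ} (hs : 0 < s) :
    ∃ ν : PPM ℝ, IsFT μ ν ∧ ∃ C : ℝ, ∀ r : ℝ, 0 < r →
      ν.var (ball (0:ℝ) r) ≤ ENNReal.ofReal (C * Real.exp (2 * Real.pi * s * r)) := by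
  obtain ⟨c0, hc0, hmin⟩ := minmod hq hB hne (K := s) hs
  have hlow : ∀ t : ℝ, |t| = s → ∀ x : ℝ, c0 ≤ ‖dserC q ω (x + (t : ℂ) * I)‖ := by
    intro t ht x
    have him : ((x : ℂ) + (t : ℂ) * I).im = t := by simp
    exact hmin _ (by rw [him, ht]) (line_nonvanish hreal _ (by rw [him, ht]))
  obtain ⟨N1, ι1, _, c1, w1, hc1, -, hs1⟩ := logderiv_TRep hq hB (-s) c0 hc0
    (hlow (-s) (by rw [abs_neg, abs_of_pos hs]))
  obtain ⟨N2, ι2, _, c2, w2, hc2, -, hs2⟩ := logderiv_TRep hq hB s c0 hc0 (hlow s (abs_of_pos hs))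
  have hC1 := cmass_summable (w := w1) hc1
  have hC2 := cmass_summable (w := w2) hc2
  have hcount1 := hC1.countable_support
  have hcount2 := hC2.countable_support
  set K : ℝ := ∑' γ, (‖cmass c1 w1 γ‖ + ‖cmass c2 w2 γ‖) with hK
  let ν : PPM ℝ :=
    { mass := fun γ => (2 * Real.pi * I)⁻¹ *
        (cmass c1 w1 γ * (Real.exp (2 * Real.pi * (-s) * γ) : ℂ) -
          cmass c2 w2 γ * (Real.exp (2 * Real.pi * s * γ) : ℂ))
      countable := by
        refine (hcount1.union hcount2).mono ?_
        intro γ hγ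
        by_contra h
        simp only [Set.mem_union, Function.mem_support, not_or, not_not, norm_eq_zero] at h
        apply hγ
        simp [h.1, h.2] }
  refine ⟨ν, ?_, K, ?_⟩
  · intro φ hφ
    have hφ2 : ContDiff ℝ 2 φ := φ.smooth 2
    have hdiff := FL_differentiable φ.continuous hφ
    obtain ⟨C, hC⟩ := FL_decay hφ2 hφ s
    have hlim := contour_lim hq hB hne hreal m g hg hg0 hfac hs hdiff hC
    have e1 := cmass_hasSum (ψ := fun t => φ t * (Real.exp (2 * Real.pi * (-s) * t) : ℂ))
      (line_sum hφ2 hφ (-s) hc1 hs1)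
    have e2 := cmass_hasSum (ψ := fun t => φ t * (Real.exp (2 * Real.pi * s * t) : ℂ))
      (line_sum hφ2 hφ s hc2 hs2)
    have e3 := (e1.sub e2).mul_left ((2 * Real.pi * I)⁻¹)
    rw [← hlim] at e3
    have hpi : (2 * Real.pi * I : ℂ) ≠ 0 := by
      simp [Real.pi_ne_zero]
    rw [inv_mul_cancel_left₀ hpi] at e3
    unfold PPM.pair
    have e4 : (∑' x, μ.mass x * (FourierTransform.fourierCLE ℂ (SchwartzMap ℝ ℂ) φ) x) =
        ∑' a : ℝ, (m a : ℂ) * FL φ a := by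
      refine tsum_congr fun x => ?_
      rw [hm, FL_real]
      rfl
    rw [e4, ← e3.tsum_eq]
    refine tsum_congr fun γ => ?_
    simp only [ν]
    ring
  · intro r hr
    have hKs : Summable fun γ => ‖cmass c1 w1 γ‖ + ‖cmass c2 w2 γ‖ := hC1.add hC2
    have hpt : ∀ γ : ball (0:ℝ) r, (‖ν.mass γ‖₊ : ℝ≥0∞) ≤
        ENNReal.ofReal ((‖cmass c1 w1 γ‖ + ‖cmass c2 w2 γ‖) * Real.exp (2 * Real.pi * s * r)) := by
      rintro ⟨γ, hγ⟩
      rw [mem_ball_zero_iff, Real.norm_eq_abs, abs_lt] at hγ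
      rw [← enorm_eq_nnnorm, ← ofReal_norm]
      apply ENNReal.ofReal_le_ofReal
      simp only [ν]
      rw [norm_mul, norm_inv]
      have h1 : ‖(2 * Real.pi * I : ℂ)‖⁻¹ ≤ 1 := by
        apply inv_le_one_of_one_le₀
        simp [abs_of_pos Real.pi_pos]
        linarith [Real.pi_gt_three]
      have h2 : Real.exp (2 * Real.pi * (-s) * γ) ≤ Real.exp (2 * Real.pi * s * r) := by
        apply Real.exp_le_exp.2
        have : 0 < 2 * Real.pi * s := by positivity
        nlinarith
      have h3 : Real.exp (2 * Real.pi * s * γ) ≤ Real.exp (2 * Real.pi * s * r) := by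
        apply Real.exp_le_exp.2
        have : 0 < 2 * Real.pi * s := by positivity
        nlinarith
      calc _ ≤ 1 * ‖cmass c1 w1 γ * (Real.exp (2 * Real.pi * (-s) * γ) : ℂ) -
          cmass c2 w2 γ * (Real.exp (2 * Real.pi * s * γ) : ℂ)‖ := by gcongr
        _ ≤ ‖cmass c1 w1 γ * (Real.exp (2 * Real.pi * (-s) * γ) : ℂ)‖ +
          ‖cmass c2 w2 γ * (Real.exp (2 * Real.pi * s * γ) : ℂ)‖ := by
            rw [one_mul]; exact norm_sub_le _ _
        _ = ‖cmass c1 w1 γ‖ * Real.exp (2 * Real.pi * (-s) * γ) +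
          ‖cmass c2 w2 γ‖ * Real.exp (2 * Real.pi * s * γ) := by
            rw [norm_mul, norm_mul, Complex.norm_real, Complex.norm_real, Real.norm_eq_abs,
              Real.norm_eq_abs, Real.abs_exp, Real.abs_exp]
        _ ≤ ‖cmass c1 w1 γ‖ * Real.exp (2 * Real.pi * s * r) +
          ‖cmass c2 w2 γ‖ * Real.exp (2 * Real.pi * s * r) := by gcongr
        _ = _ := by ring
    unfold PPM.var
    calc _ ≤ ∑' γ : ball (0:ℝ) r, ENNReal.ofReal
          ((‖cmass c1 w1 γ‖ + ‖cmass c2 w2 γ‖) * Real.exp (2 * Real.pi * s * r)) :=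
          ENNReal.tsum_le_tsum hpt
      _ ≤ ∑' γ : ℝ, ENNReal.ofReal
          ((‖cmass c1 w1 γ‖ + ‖cmass c2 w2 γ‖) * Real.exp (2 * Real.pi * s * r)) :=
          ENNReal.tsum_comp_le_tsum_of_injective Subtype.val_injective
            (fun γ : ℝ => ENNReal.ofReal
          ((‖cmass c1 w1 γ‖ + ‖cmass c2 w2 γ‖) * Real.exp (2 * Real.pi * s * r)))
      _ = _ := by
        rw [← ENNReal.ofReal_tsum_of_nonneg (fun γ => by positivity) (hKs.mul_right _), tsum_mul_right]

end nu

lemma mass_summable {ν : PPM ℝ} (hν : ν.locFinite) (R : ℝ) :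
    Summable ((ball (0:ℝ) R).indicator fun γ => ‖ν.mass γ‖) := by
  rw [← summable_subtype_iff_indicator]
  have h := hν R
  unfold PPM.var at h
  have h2 := ENNReal.summable_toReal h.ne
  simpa [Function.comp_def] using h2

/-- shrinking bump functions -/
def bmp (γ₀ : ℝ) (n : ℕ) : ContDiffBump γ₀ where
  rIn := 1 / (2 * ((n : ℝ) + 1))
  rOut := 1 / ((n : ℝ) + 1)
  rIn_pos := by positivity
  rIn_lt_rOut := by
    apply one_div_lt_one_div_of_lt
    · positivity
    · have : (0 : ℝ) ≤ n := Nat.cast_nonneg n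
      linarith

lemma bmp_cs (γ₀ : ℝ) (n : ℕ) : HasCompactSupport fun x : ℝ => ((bmp γ₀ n x : ℝ) : ℂ) :=
  (bmp γ₀ n).hasCompactSupport.comp_left (g := fun t : ℝ => (t : ℂ)) (by simp)

lemma bmp_smooth (γ₀ : ℝ) (n : ℕ) : ContDiff ℝ (↑(⊤ : ℕ∞)) fun x : ℝ => ((bmp γ₀ n x : ℝ) : ℂ) :=
  Complex.ofRealCLM.contDiff.comp (bmp γ₀ n).contDiff

lemma pair_bmp {ν : PPM ℝ} (hν : ν.locFinite) (γ₀ : ℝ) :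
    Tendsto (fun n => ν.pair fun x : ℝ => ((bmp γ₀ n x : ℝ) : ℂ)) atTop (𝓝 (ν.mass γ₀)) := by
  classical
  have h := tendsto_tsum_of_dominated_convergence (𝓕 := atTop)
    (f := fun (n : ℕ) (γ : ℝ) => ν.mass γ * ((bmp γ₀ n γ : ℝ) : ℂ))
    (g := fun γ => if γ = γ₀ then ν.mass γ₀ else 0)
    (mass_summable hν (|γ₀| + 1)) ?_ ?_
  · rw [tsum_ite_eq] at h
    exact h
  · intro γ
    by_cases hγ : γ = γ₀
    · subst hγ
      simp only [if_true]
      have : ∀ n, bmp γ n γ = 1 := fun n => (bmp γ n).one_of_mem_closedBall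
        (mem_closedBall_self (bmp γ n).rIn_pos.le)
      simp [this]
    · simp only [hγ, if_false]
      refine tendsto_const_nhds.congr' ?_
      have h1 : 0 < dist γ γ₀ := dist_pos.2 hγ
      have h2 : ∀ᶠ n : ℕ in atTop, 1 / ((n : ℝ) + 1) < dist γ γ₀ :=
        tendsto_one_div_add_atTop_nhds_zero_nat.eventually_lt_const h1
      filter_upwards [h2] with n hn
      rw [(bmp γ₀ n).zero_of_le_dist hn.le]
      simp
  · refine Eventually.of_forall fun n γ => ?_
    by_cases hγ : γ ∈ ball (0:ℝ) (|γ₀| + 1)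
    · rw [Set.indicator_of_mem hγ, norm_mul, Complex.norm_real, Real.norm_eq_abs,
        abs_of_nonneg (bmp γ₀ n).nonneg]
      exact mul_le_of_le_one_right (norm_nonneg _) (bmp γ₀ n).le_one
    · rw [Set.indicator_of_notMem hγ, (bmp γ₀ n).zero_of_le_dist]
      · simp
      · rw [mem_ball_zero_iff, not_lt, Real.norm_eq_abs] at hγ
        have h1 : |γ| - |γ₀| ≤ dist γ γ₀ := by rw [Real.dist_eq]; exact abs_sub_abs_le_abs_sub _ _
        have h2 : (bmp γ₀ n).rOut ≤ 1 := by
          show 1 / ((n : ℝ) + 1) ≤ 1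
          rw [div_le_one (by positivity)]
          have : (0 : ℝ) ≤ n := Nat.cast_nonneg n
          linarith
        linarith

lemma ft_unique {μ ν₁ ν₂ : PPM ℝ} (h1 : IsFT μ ν₁) (h2 : IsFT μ ν₂) (l1 : ν₁.locFinite)
    (l2 : ν₂.locFinite) : ν₁.mass = ν₂.mass := by
  funext γ
  refine tendsto_nhds_unique (pair_bmp l1 γ) ?_
  have he : (fun n => ν₁.pair fun x : ℝ => ((bmp γ n x : ℝ) : ℂ)) =
      fun n => ν₂.pair fun x : ℝ => ((bmp γ n x : ℝ) : ℂ) := by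
    funext n
    have e1 := h1 ((bmp_cs γ n).toSchwartzMap (bmp_smooth γ n)) (bmp_cs γ n)
    have e2 := h2 ((bmp_cs γ n).toSchwartzMap (bmp_smooth γ n)) (bmp_cs γ n)
    exact e1.symm.trans e2
  rw [he]
  exact pair_bmp l2 γ

lemma locFinite_of_bound {ν : PPM ℝ} {C s : ℝ} (h : ∀ r : ℝ, 0 < r →
    ν.var (ball (0:ℝ) r) ≤ ENNReal.ofReal (C * Real.exp (2 * Real.pi * s * r))) : ν.locFinite := by
  intro r
  by_cases hr : 0 < r
  · exact (h r hr).trans_lt ENNReal.ofReal_lt_top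
  · unfold PPM.var
    have : ball (0:ℝ) r = ∅ := ball_eq_empty.2 (not_lt.1 hr)
    rw [this]
    simp

lemma temperate_of_count (m : ℝ → ℕ) (hsum : Summable fun a : ℝ => (m a : ℝ) / (1 + a ^ 2))
    (μ : PPM ℝ) (hm : ∀ x, μ.mass x = m x) : μ.temperate := by
  intro φ
  obtain ⟨C0, hC0⟩ := φ.decay 0 0
  obtain ⟨C2, hC2⟩ := φ.decay 2 0
  refine Summable.of_norm_bounded (g := fun a => (C0 + C2) * ((m a : ℝ) / (1 + a ^ 2)))
    (hsum.mul_left _) fun a => ?_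
  have h0 := hC0.2 a
  have h2 := hC2.2 a
  simp only [pow_zero, one_mul, norm_iteratedFDeriv_zero, Real.norm_eq_abs, sq_abs] at h0 h2
  have h3 : ‖φ a‖ ≤ (C0 + C2) / (1 + a ^ 2) := by
    rw [le_div_iff₀ (by positivity)]
    linarith
  rw [norm_mul, hm, Complex.norm_natCast]
  calc (m a : ℝ) * ‖φ a‖ ≤ m a * ((C0 + C2) / (1 + a ^ 2)) := by gcongr
    _ = _ := by ring

/-- Let `Q` be a Dirichlet series with absolutely summable coefficients and
bounded countable spectrum, not identically zero and with only real zeros, and let `μ_A` be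
the counting measure of its zero multiset. Then `μ_A` is temperate, its Fourier transform is
a pure point measure `μ̂_A`, and for every `s > 0` there is `C(s)` with
`|μ̂_A|((-r,r)) ≤ C(s) e^{2πsr}` for all `r > 0`. -/
theorem statement18 (q : ℕ → ℂ) (ω : ℕ → ℝ)
    (hq : Summable fun i => ‖q i‖) (hω : IsBounded (Set.range ω))
    (hne : ∃ z : ℂ, dserC q ω z ≠ 0)
    (hreal : ∀ z : ℂ, dserC q ω z = 0 → z.im = 0)
    (μ : PPM ℝ) (hμ : IsZeroCounting (dserC q ω) μ) :
    μ.temperate ∧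
    ∃ νh : PPM ℝ, IsFT μ νh ∧ νh.locFinite ∧
      ∀ s : ℝ, 0 < s → ∃ C : ℝ, ∀ r : ℝ, 0 < r →
        νh.var (ball (0:ℝ) r) ≤ ENNReal.ofReal (C * Real.exp (2 * Real.pi * s * r)) := by
  obtain ⟨B, hB'⟩ := hω.exists_norm_le
  have hB : ∀ i, |ω i| ≤ B := fun i => by
    simpa using hB' (ω i) (Set.mem_range_self i)
  choose m g hm hg hg0 hfac using hμ
  obtain ⟨N, hN, hcount⟩ := count_zeros hq hB hne hreal m g hg hg0 hfac
  refine ⟨temperate_of_count m (count_summable m hN hcount) μ hm, ?_⟩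
  choose ν hν1 C hC using fun (s : ℝ) (hs : 0 < s) =>
    exists_nu hq hB hne hreal m g hg hg0 hfac μ hm hs
  refine ⟨ν 1 one_pos, hν1 1 one_pos, locFinite_of_bound (hC 1 one_pos), ?_⟩
  intro s hs
  refine ⟨C s hs, fun r hr => ?_⟩
  have he : (ν 1 one_pos).mass = (ν s hs).mass :=
    ft_unique (hν1 1 one_pos) (hν1 s hs) (locFinite_of_bound (hC 1 one_pos))
      (locFinite_of_bound (hC s hs))
  have h := hC s hs r hr
  unfold PPM.var at h ⊢
  rw [he]
  exact h

end
end
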